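/- For every even integer ℓ ≥ 4 there exists N₀(ℓ) such that every edge-colored graph (G,c) on n ≥ N₀(ℓ) vertices with δ^c(G) ≥ (n+5)/3 contains a rainbow ℓ-cycle. -/

import Mathlib

open Finset

variable {V : Type*}

/-- Number of distinct colors on edges incident to `v`. -/
noncomputable def colorDeg (G : SimpleGraph V) (c : Sym2 V → ℕ) (v : V) : ℕ :=
  Set.ncard {α : ℕ | ∃ u, G.Adj u v ∧ c s(u, v) = α}

/-- Number of distinct colors `c({u,v})` over `u ∈ N(v) ∩ U`. -/
noncomputable def colorDegOn (G : SimpleGraph V) (c : Sym2 V → ℕ) (v : V) (U : Set V) : ℕ :=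
  Set.ncard {α : ℕ | ∃ u ∈ U, G.Adj u v ∧ c s(u, v) = α}

/-- Minimum color-degree `δ^c(G)`. -/
noncomputable def minColorDeg (G : SimpleGraph V) (c : Sym2 V → ℕ) : ℕ :=
  ⨅ v : V, colorDeg G c v

/-- `(G,c)` is edge-minimal: no proper spanning subgraph has the same minimum color-degree. -/
def EdgeMinimal (G : SimpleGraph V) (c : Sym2 V → ℕ) : Prop :=
  ∀ H : SimpleGraph V, H ≤ G → H ≠ G → minColorDeg H c ≠ minColorDeg G c

/-- `(G,c)` contains a rainbow cycle on `ℓ` vertices. -/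
def HasRainbowCycle (G : SimpleGraph V) (c : Sym2 V → ℕ) (ℓ : ℕ) : Prop :=
  ∃ (u : V) (p : G.Walk u u), p.IsCycle ∧ p.length = ℓ ∧ (p.edges.map c).Nodup

/-- There is a rainbow path from `v` to `y` on `k` vertices whose edge colors avoid `C`. -/
def RainbowPathAvoiding (G : SimpleGraph V) (c : Sym2 V → ℕ) (v y : V) (k : ℕ)
    (C : Set ℕ) : Prop :=
  ∃ p : G.Walk v y, p.IsPath ∧ p.length + 1 = k ∧ (p.edges.map c).Nodup ∧
    ∀ e ∈ p.edges, c e ∉ C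

/-- `σ_{v,X}(y)`: the number of colors `X`-separating `y` from `v`. -/
noncomputable def sepCount (G : SimpleGraph V) (c : Sym2 V → ℕ) (v : V) (X : Set V)
    (y : V) : ℕ :=
  Set.ncard {α : ℕ | ∃ x ∈ X, G.Adj x y ∧ c s(x, y) = α ∧ c s(v, x) ≠ α}

/-- `ρ_{v,X}(y)`: the number of colors restricted for `y` by `(v,X)`. -/
noncomputable def restrCount (G : SimpleGraph V) (c : Sym2 V → ℕ) (v : V) (X : Set V)
    (y : V) : ℕ :=
  Set.ncard {α : ℕ | (∃ x ∈ X, G.Adj x y ∧ c s(x, y) = α ∧ c s(v, x) ≠ α) ∧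
    ∀ w, G.Adj w y → w ∉ X → c s(w, y) ≠ α}

/-- The replication number `R(G,c) = max_{v,α} |N_α(v)|`. -/
noncomputable def repNum (G : SimpleGraph V) (c : Sym2 V → ℕ) : ℕ :=
  ⨆ v : V, ⨆ α : ℕ, Set.ncard {u : V | G.Adj u v ∧ c s(u, v) = α}

/-- `N_!(v)`: neighbors `u` of `v` whose color `c({u,v})` appears on exactly one edge at `v`. -/
def bangNbhd (G : SimpleGraph V) (c : Sym2 V → ℕ) (v : V) : Set V :=
  {u : V | G.Adj u v ∧ Set.ncard {w : V | G.Adj w v ∧ c s(w, v) = c s(u, v)} = 1}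

set_option linter.unusedSectionVars false
set_option linter.deprecated false

namespace Rb

variable {W : Type} [Fintype W] [DecidableEq W]

/-- rainbow path from `a` to `b` of length `k` with vertex set `S` and color set `C` -/
def RP (G : SimpleGraph W) (c : Sym2 W → ℕ) (a b : W) (k : ℕ) (S : Finset W) (C : Finset ℕ) : Prop :=
  ∃ p : G.Walk a b, p.IsPath ∧ p.length = k ∧ (p.edges.map c).Nodup ∧ p.support.toFinset = S ∧
    (p.edges.map c).toFinset = C

lemma RP.nil (G : SimpleGraph W) (c : Sym2 W → ℕ) (a : W) : RP G c a a 0 {a} ∅ :=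
  ⟨SimpleGraph.Walk.nil, by simp, by simp, by simp, by simp, by simp⟩

lemma RP.cons {G : SimpleGraph W} {c : Sym2 W → ℕ} {a a' b : W} {k : ℕ} {S : Finset W}
    {C : Finset ℕ} (h : RP G c a' b k S C) (hadj : G.Adj a a') (haS : a ∉ S)
    (hC : c s(a, a') ∉ C) : RP G c a b (k + 1) (insert a S) (insert (c s(a, a')) C) := by
  obtain ⟨p, h1, h2, h3, h4, h5⟩ := h
  refine ⟨SimpleGraph.Walk.cons hadj p, ?_, ?_, ?_, ?_, ?_⟩
  · rw [SimpleGraph.Walk.cons_isPath_iff]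
    refine ⟨h1, ?_⟩
    rw [← h4] at haS; simpa using haS
  · simp [h2]
  · rw [SimpleGraph.Walk.edges_cons, List.map_cons, List.nodup_cons]
    refine ⟨?_, h3⟩
    rw [← h5] at hC; simpa using hC
  · simp [h4]
  · rw [SimpleGraph.Walk.edges_cons, List.map_cons, List.toFinset_cons, h5]

lemma RP.start_mem {G : SimpleGraph W} {c : Sym2 W → ℕ} {a b : W} {k : ℕ} {S : Finset W}
    {C : Finset ℕ} (h : RP G c a b k S C) : a ∈ S := by
  obtain ⟨p, h1, h2, h3, h4, h5⟩ := h
  rw [← h4]; simp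

lemma RP.end_mem {G : SimpleGraph W} {c : Sym2 W → ℕ} {a b : W} {k : ℕ} {S : Finset W}
    {C : Finset ℕ} (h : RP G c a b k S C) : b ∈ S := by
  obtain ⟨p, h1, h2, h3, h4, h5⟩ := h
  rw [← h4]; simp

lemma RP.card_S {G : SimpleGraph W} {c : Sym2 W → ℕ} {a b : W} {k : ℕ} {S : Finset W}
    {C : Finset ℕ} (h : RP G c a b k S C) : S.card ≤ k + 1 := by
  obtain ⟨p, h1, h2, h3, h4, h5⟩ := h
  rw [← h4]
  calc _ ≤ _ := List.toFinset_card_le _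
    _ = _ := by simp [h2]

lemma RP.card_C {G : SimpleGraph W} {c : Sym2 W → ℕ} {a b : W} {k : ℕ} {S : Finset W}
    {C : Finset ℕ} (h : RP G c a b k S C) : C.card ≤ k := by
  obtain ⟨p, h1, h2, h3, h4, h5⟩ := h
  rw [← h5]
  calc _ ≤ _ := List.toFinset_card_le _
    _ = _ := by simp [h2]

lemma RP.append {G : SimpleGraph W} {c : Sym2 W → ℕ} {a b e : W} {k k' : ℕ} {S S' : Finset W}
    {C C' : Finset ℕ} (h : RP G c a b k S C) (h' : RP G c b e k' S' C')
    (hS : ∀ x ∈ S, x ∈ S' → x = b) (hC : Disjoint C C') :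
    RP G c a e (k + k') (S ∪ S') (C ∪ C') := by
  obtain ⟨p, h1, h2, h3, h4, h5⟩ := h
  obtain ⟨p', h1', h2', h3', h4', h5'⟩ := h'
  refine ⟨p.append p', ?_, ?_, ?_, ?_, ?_⟩
  · rw [SimpleGraph.Walk.isPath_def, SimpleGraph.Walk.support_append, List.nodup_append]
    have hn' := h1'.support_nodup
    refine ⟨h1.support_nodup, hn'.tail, ?_⟩
    rintro x hx y hy rfl
    have hxb : x = b := hS x (by rw [← h4]; simpa using hx)
      (by rw [← h4']; simpa using List.mem_of_mem_tail hy)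
    subst hxb
    rw [SimpleGraph.Walk.support_eq_cons, List.nodup_cons] at hn'
    exact hn'.1 hy
  · simp [h2, h2']
  · rw [SimpleGraph.Walk.edges_append, List.map_append, List.nodup_append]
    refine ⟨h3, h3', ?_⟩
    rintro x hx y hy rfl
    rw [← h5, ← h5'] at hC
    exact Finset.disjoint_left.1 hC (List.mem_toFinset.2 hx) (List.mem_toFinset.2 hy)
  · ext x
    rw [← h4, ← h4']; simp [SimpleGraph.Walk.mem_support_append_iff]
  · rw [SimpleGraph.Walk.edges_append, List.map_append, List.toFinset_append, h5, h5']

lemma RP.cycle {G : SimpleGraph W} {c : Sym2 W → ℕ} {a b : W} {k k' : ℕ} {S S' : Finset W}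
    {C C' : Finset ℕ} (h : RP G c a b k S C) (h' : RP G c b a k' S' C')
    (hS : ∀ x ∈ S, x ∈ S' → x = a ∨ x = b) (hC : Disjoint C C') (hab : a ≠ b) :
    HasRainbowCycle G c (k + k') := by
  obtain ⟨p, h1, h2, h3, h4, h5⟩ := h
  cases p with
  | nil => exact absurd rfl hab
  | cons hadj q =>
    rename_i x
    rw [SimpleGraph.Walk.cons_isPath_iff] at h1
    rw [SimpleGraph.Walk.edges_cons, List.map_cons, List.nodup_cons] at h3
    rw [SimpleGraph.Walk.edges_cons, List.map_cons, List.toFinset_cons] at h5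
    have hq : RP G c x b q.length q.support.toFinset (q.edges.map c).toFinset :=
      ⟨q, h1.1, rfl, h3.2, rfl, rfl⟩
    have hsub : q.support.toFinset ⊆ S := by
      rw [← h4]; intro y hy; simp at hy ⊢; exact Or.inr hy
    have hsubC : (q.edges.map c).toFinset ⊆ C := by
      rw [← h5]; exact Finset.subset_insert _ _
    have happ := hq.append h' (by
      intro y hy hy'
      rcases hS y (hsub hy) hy' with rfl | rfl
      · exact absurd (by simpa using hy) h1.2
      · rfl) (Finset.disjoint_of_subset_left hsubC hC)
    obtain ⟨r, r1, r2, r3, r4, r5⟩ := happ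
    have hcol : c s(a, x) ∉ r.edges.map c := by
      intro hmem
      have : c s(a, x) ∈ (r.edges.map c).toFinset := by simpa using hmem
      rw [r5, Finset.mem_union] at this
      rcases this with h | h
      · exact h3.1 (by simpa using h)
      · exact Finset.disjoint_left.1 hC (by rw [← h5]; simp) h
    refine ⟨a, SimpleGraph.Walk.cons hadj r, ?_, ?_, ?_⟩
    · rw [SimpleGraph.Walk.cons_isCycle_iff]
      refine ⟨r1, fun hm => hcol (List.mem_map_of_mem hm)⟩
    · simp at h2 ⊢; omega
    · rw [SimpleGraph.Walk.edges_cons, List.map_cons, List.nodup_cons]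
      exact ⟨hcol, r3⟩

end Rb

set_option linter.unusedSectionVars false
namespace Rb
open Classical in
/-- out-neighbours in class `j` along properly coloured edges -/
noncomputable def OO {W : Type} (G : SimpleGraph W) (c : Sym2 W → ℕ) (V : ZMod 3 → Finset W) (m : W → ℕ)
    (j : ZMod 3) (w : W) : Finset W := (V j).filter fun u => G.Adj w u ∧ c s(w, u) = m u

open Classical in
/-- in-neighbours in class `j` -/
noncomputable def II {W : Type} (G : SimpleGraph W) (c : Sym2 W → ℕ) (V : ZMod 3 → Finset W) (m : W → ℕ)
    (j : ZMod 3) (u : W) : Finset W := (V j).filter fun x => G.Adj x u ∧ c s(x, u) = m u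

/-- the robust core -/
structure IsCore {W : Type} [Fintype W] (G : SimpleGraph W) (c : Sym2 W → ℕ) (d : ℕ)
    (V : ZMod 3 → Finset W) (m : W → ℕ) : Prop where
  disj : ∀ i j u, u ∈ V i → u ∈ V j → i = j
  inj : ∀ i u u', u ∈ V i → u' ∈ V i → m u = m u' → u = u'
  size : ∀ i, 1000 * (V i).card ≤ 1001 * d
  out : ∀ i v, v ∈ V i → 999 * d ≤ 1000 * (OO G c V m (i + 1) v).card
  inn : ∀ i v, v ∈ V i → 999 * d ≤ 1000 * (II G c V m (i - 1) v).card
  rest : ∃ R : Finset W, 1000 * R.card ≤ d ∧ ∀ w, w ∉ R → ∃ i, w ∈ V i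

variable {W : Type} [Fintype W] [DecidableEq W]
  {G : SimpleGraph W} {c : Sym2 W → ℕ} {d : ℕ} {V : ZMod 3 → Finset W} {m : W → ℕ}

lemma mem_OO {j : ZMod 3} {w u : W} : u ∈ OO G c V m j w ↔ u ∈ V j ∧ G.Adj w u ∧ c s(w, u) = m u := by
  unfold OO; simp only [Finset.mem_filter]
lemma mem_II {j : ZMod 3} {w u : W} : u ∈ II G c V m j w ↔ u ∈ V j ∧ G.Adj u w ∧ c s(u, w) = m w := by
  unfold II; simp only [Finset.mem_filter]

lemma IsCore.fresh (h : IsCore G c d V m) {i : ZMod 3} (T : Finset W) (hT : T ⊆ V i) (F : Finset W)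
    (C : Finset ℕ) (hc : F.card + C.card < T.card) : ∃ x ∈ T, x ∉ F ∧ m x ∉ C := by
  by_contra hcon
  push Not at hcon
  have hsub : T ⊆ F ∪ (T.filter fun x => m x ∈ C) := by
    intro x hx
    by_cases hxF : x ∈ F
    · exact Finset.mem_union_left _ hxF
    · exact Finset.mem_union_right _ (Finset.mem_filter.2 ⟨hx, hcon x hx hxF⟩)
  have h2 : (T.filter fun x => m x ∈ C).card ≤ C.card := by
    apply Finset.card_le_card_of_injOn m
    · intro x hx
      exact (Finset.mem_filter.1 hx).2
    · intro x hx y hy hxy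
      exact h.inj i x y (hT (Finset.mem_filter.1 hx).1) (hT (Finset.mem_filter.1 hy).1) hxy
  have := Finset.card_le_card hsub
  have := Finset.card_union_le F (T.filter fun x => m x ∈ C)
  omega

/-- `w` sends at least `d/100` proper edges to class `j` -/
def Rich (G : SimpleGraph W) (c : Sym2 W → ℕ) (d : ℕ) (V : ZMod 3 → Finset W) (m : W → ℕ)
    (j : ZMod 3) (w : W) : Prop := d ≤ 100 * (OO G c V m j w).card

lemma IsCore.rich (h : IsCore G c d V m) {i : ZMod 3} {v : W} (hv : v ∈ V i) :
    Rich G c d V m (i + 1) v := by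
  have := h.out i v hv
  unfold Rich; omega

lemma IsCore.inter_in (h : IsCore G c d V m) {j : ZMod 3} {u : W} (T : Finset W) (hT : T ⊆ V j)
    (hu : u ∈ V (j + 1)) : T.card * 1000 ≤ 2 * d + 1000 * (T ∩ II G c V m j u).card := by
  have h1 := h.inn _ u hu
  have h2 := h.size j
  rw [show j + 1 - 1 = j by ring] at h1
  have h3 : (T ∪ II G c V m j u).card ≤ (V j).card := by
    apply Finset.card_le_card
    apply Finset.union_subset hT
    intro x hx; exact (mem_II.1 hx).1
  have h4 := Finset.card_union_add_card_inter T (II G c V m j u)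
  omega

lemma IsCore.conn (h : IsCore G c d V m) {L : ℕ} (hL : 1000 * (L + 10) ≤ d) (k : ℕ) :
    ∀ (j : ZMod 3) (w u' : W) (F : Finset W) (C : Finset ℕ), Rich G c d V m j w →
      u' ∈ V (j + k) → w ≠ u' → m u' ∉ C → (k = 0 → u' ∈ OO G c V m j w) →
      F.card + C.card + 3 * k ≤ L →
      ∃ S D, RP G c w u' (k + 1) S D ∧ (∀ x ∈ S, x = w ∨ x = u' ∨ x ∉ F) ∧ Disjoint D C := by
  induction k with
  | zero =>
    intro j w u' F C hr hu' hne hm hk hc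
    have hO := mem_OO.1 (hk rfl)
    refine ⟨_, _, (RP.nil G c u').cons hO.2.1 (by simpa using hne) (by simp), ?_, ?_⟩
    · intro x hx
      simp at hx; tauto
    · simp [hO.2.2, hm]
  | succ k ih =>
    intro j w u' F C hr hu' hne hm hk hc
    have hstep : ∃ x ∈ OO G c V m j w, x ∉ insert w (insert u' F) ∧ m x ∉ insert (m u') C ∧
        (k = 0 → u' ∈ OO G c V m (j + 1) x) := by
      have hcard1 : (insert w (insert u' F)).card ≤ F.card + 2 := by
        have := Finset.card_insert_le w (insert u' F)
        have := Finset.card_insert_le u' F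
        omega
      have hcard2 : (insert (m u') C).card ≤ C.card + 1 := Finset.card_insert_le _ _
      have hsub : OO G c V m j w ⊆ V j := fun x hx => (mem_OO.1 hx).1
      unfold Rich at hr
      by_cases hk0 : k = 0
      · subst hk0
        have hu1 : u' ∈ V (j + 1) := by simpa using hu'
        have hi := h.inter_in _ hsub hu1
        obtain ⟨x, hx, hxF, hxC⟩ := h.fresh (OO G c V m j w ∩ II G c V m j u')
          (fun x hx => hsub (Finset.mem_inter.1 hx).1) (insert w (insert u' F)) (insert (m u') C)
          (by omega)
        rw [Finset.mem_inter] at hx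
        have := mem_II.1 hx.2
        exact ⟨x, hx.1, hxF, hxC, fun _ => mem_OO.2 ⟨hu1, this.2.1, this.2.2⟩⟩
      · obtain ⟨x, hx, hxF, hxC⟩ := h.fresh (OO G c V m j w)
          hsub (insert w (insert u' F)) (insert (m u') C) (by omega)
        exact ⟨x, hx, hxF, hxC, fun h0 => absurd h0 hk0⟩
    obtain ⟨x, hx, hxF, hxC, hx0⟩ := hstep
    simp only [Finset.mem_insert, not_or] at hxF hxC
    have hxO := mem_OO.1 hx
    obtain ⟨S, D, hRP, hS, hD⟩ := ih (j + 1) x u' (insert w F) (insert (m x) C) (h.rich hxO.1)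
      (by push_cast at hu'; rwa [show j + 1 + (k:ZMod 3) = j + (k + 1) by ring]) hxF.2.1
      (by simp only [Finset.mem_insert, not_or]; exact ⟨fun h => hxC.1 h.symm, hm⟩) hx0 (by
        have := Finset.card_insert_le w F
        have := Finset.card_insert_le (m x) C
        omega)
    rw [Finset.disjoint_insert_right] at hD
    refine ⟨_, _, hRP.cons hxO.2.1 ?_ ?_, ?_, ?_⟩
    · intro hw
      rcases hS w hw with h | h | h
      · exact hxF.1 h.symm
      · exact hne h
      · exact h (Finset.mem_insert_self _ _)
    · rw [hxO.2.2]; exact hD.1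
    · intro y hy
      rw [Finset.mem_insert] at hy
      rcases hy with hy | hy
      · exact Or.inl hy
      · rcases hS y hy with h | h | h
        · right; right; rw [h]; exact hxF.2.2
        · exact Or.inr (Or.inl h)
        · right; right; intro hh; exact h (Finset.mem_insert_of_mem hh)
    · rw [Finset.disjoint_insert_left, hxO.2.2]
      exact ⟨hxC.2, hD.2⟩

/-- closing a fixed rainbow path from u2 to w by a connection from w to u2 -/
lemma IsCore.cyc (h : IsCore G c d V m) {l : ℕ} (hL : 1000 * (10 * l + 10) ≤ d) {k r : ℕ}
    {j : ZMod 3} {w u' : W} {S : Finset W} {C : Finset ℕ} (hRP : RP G c u' w r S C)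
    (hr : Rich G c d V m j w) (hu' : u' ∈ V (j + k)) (hne : w ≠ u') (hm : m u' ∉ C)
    (hk : k = 0 → u' ∈ OO G c V m j w) (hl : r + (k + 1) = l) : HasRainbowCycle G c l := by
  obtain ⟨S', D, hRP', hS, hD⟩ := h.conn hL k j w u' S C hr hu' hne hm hk (by
    have := hRP.card_S
    have := hRP.card_C
    omega)
  rw [← hl]
  refine hRP.cycle hRP' ?_ hD.symm hne.symm
  intro x hx hx'
  rcases hS x hx' with h | h | h
  · exact Or.inr h
  · exact Or.inl h
  · exact absurd hx h

lemma RP.one (hadj : G.Adj a b) : RP G c a b 1 {a, b} {c s(a, b)} := by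
  have := (RP.nil G c b).cons hadj (by simpa using hadj.ne) (by simp)
  simpa using this

lemma RP.two {a b e : W} (h1 : G.Adj a b) (h2 : G.Adj b e) (hne : a ≠ e) (hc : c s(a, b) ≠ c s(b, e)) :
    RP G c a e 2 {a, b, e} {c s(a, b), c s(b, e)} := by
  have := (RP.one (c := c) h2).cons h1 (by simp [hne, h1.ne]) (by simpa using hc)
  simpa using this

lemma RP.three {a b e f : W} (h1 : G.Adj a b) (h2 : G.Adj b e) (h3 : G.Adj e f) (hne : a ≠ e)
    (hne2 : a ≠ f) (hne3 : b ≠ f) (hc : c s(a, b) ≠ c s(b, e)) (hc2 : c s(a, b) ≠ c s(e, f))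
    (hc3 : c s(b, e) ≠ c s(e, f)) :
    RP G c a f 3 {a, b, e, f} {c s(a, b), c s(b, e), c s(e, f)} := by
  have := (RP.two (c := c) h2 h3 hne3 hc3).cons h1 (by simp [hne, hne2, h1.ne]) (by simp [hc, hc2])
  simpa using this

end Rb

set_option linter.unusedSectionVars false
namespace Rb
variable {W : Type} [Fintype W] [DecidableEq W]
  {G : SimpleGraph W} {c : Sym2 W → ℕ} {d : ℕ} {V : ZMod 3 → Finset W} {m : W → ℕ}

lemma z3a (j : ZMod 3) : j + 1 + 2 = j := by revert j; decide
lemma z3b (i j : ZMod 3) : j = i ∨ j = i + 1 ∨ j = i + 2 := by revert i j; decide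
lemma z3c (j : ZMod 3) : j + 1 ≠ j := by revert j; decide
lemma z3d (j : ZMod 3) : j + 2 ≠ j := by revert j; decide
lemma z3e (j : ZMod 3) : j - 1 = j + 1 + 1 := by revert j; decide

open Classical in
/-- the set of colors at `w` -/
noncomputable def CS (G : SimpleGraph W) (c : Sym2 W → ℕ) (w : W) : Finset ℕ :=
  (univ.filter fun u => G.Adj w u).image fun u => c s(w, u)

lemma mem_CS {w : W} {α : ℕ} : α ∈ CS G c w ↔ ∃ u, G.Adj w u ∧ c s(w, u) = α := by
  simp [CS]

lemma colorDeg_eq (w : W) : colorDeg G c w = (CS G c w).card := by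
  unfold colorDeg
  rw [← Set.ncard_coe_finset]
  congr 1
  ext α
  simp only [Set.mem_ofPred_eq, Finset.mem_coe, mem_CS]
  constructor
  · rintro ⟨u, h1, h2⟩; exact ⟨u, h1.symm, by rwa [Sym2.eq_swap]⟩
  · rintro ⟨u, h1, h2⟩; exact ⟨u, h1.symm, by rwa [Sym2.eq_swap]⟩

/-- F2 -/
lemma IsCore.F2 (h : IsCore G c d V m) {l : ℕ} (hL : 1000 * (10 * l + 10) ≤ d) (hl : 4 ≤ l)
    (hno : ¬ HasRainbowCycle G c l) {j : ZMod 3} {w u : W} (hr : Rich G c d V m j w)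
    (hu : u ∈ V (j + (l - 2))) (hadj : G.Adj u w) : c s(u, w) = m u := by
  by_contra hne
  obtain ⟨k, rfl⟩ : ∃ k, l = k + 2 := ⟨l - 2, by omega⟩
  refine hno (h.cyc hL (RP.one hadj) hr (k := k) ?_ hadj.ne.symm ?_ (by omega) (by omega))
  · push_cast at hu
    rwa [show (j + ((k:ZMod 3) + 2 - 2)) = j + k by ring] at hu
  · simpa using Ne.symm hne

lemma card4 {A : Finset ℕ} (hA : 3 < A.card) : ∃ a ∈ A, ∃ B ⊆ A, a ∉ B ∧ B.card = 3 := by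
  obtain ⟨B', hB', hc⟩ := Finset.exists_subset_card_eq (s := A) (n := 4) (by omega)
  have : B'.Nonempty := by rw [← Finset.card_pos]; omega
  obtain ⟨a, ha⟩ := this
  exact ⟨a, hB' ha, B'.erase a, (Finset.erase_subset _ _).trans hB', by simp, by
    rw [Finset.card_erase_of_mem ha]; omega⟩

open Classical in
/-- improper colors at `w` from class `j` -/
noncomputable def IC (G : SimpleGraph W) (c : Sym2 W → ℕ) (V : ZMod 3 → Finset W) (m : W → ℕ)
    (j : ZMod 3) (w : W) : Finset ℕ :=
  ((V j).filter fun u => G.Adj w u ∧ c s(w, u) ≠ m u).image fun u => c s(w, u)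

lemma mem_IC {j : ZMod 3} {w : W} {α : ℕ} :
    α ∈ IC G c V m j w ↔ ∃ u ∈ V j, G.Adj w u ∧ c s(w, u) ≠ m u ∧ c s(w, u) = α := by
  simp [IC, and_assoc]

lemma IsCore.pairIC (h : IsCore G c d V m) {l : ℕ} (hL : 1000 * (10 * l + 10) ≤ d) (hl : 4 ≤ l)
    (hl3 : (l : ZMod 3) = 1 ∨ (l : ZMod 3) = 2)
    (hno : ¬ HasRainbowCycle G c l) {j : ZMod 3} {w u u' : W} (hu : u ∈ V j) (hu' : u' ∈ V j)
    (ha : G.Adj w u) (ha' : G.Adj w u') (hi : c s(w, u) ≠ m u) (hi' : c s(w, u') ≠ m u')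
    (hcc : c s(w, u) ≠ c s(w, u')) (h1 : m u ≠ c s(w, u')) (h2 : m u' ≠ c s(w, u)) : False := by
  have huu : u' ≠ u := by rintro rfl; exact hcc rfl
  have sw : c s(u', w) = c s(w, u') := by rw [Sym2.eq_swap]
  apply hno
  rcases hl3 with hl3 | hl3
  · -- l ≡ 1
    obtain ⟨k, rfl⟩ : ∃ k, l = k + 4 := ⟨l - 4, by omega⟩
    have hk0 : (k : ZMod 3) = 0 := by
      push_cast at hl3
      generalize (k : ZMod 3) = x at hl3 ⊢
      revert x; decide
    have hj : u ∈ V (j - 1 + 1) := by rwa [show j - 1 + 1 = j by ring]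
    have hj' : u' ∈ V (j - 1 + 1) := by rwa [show j - 1 + 1 = j by ring]
    have hin := h.inn j u hu
    have hinter := h.inter_in (II G c V m (j - 1) u) (fun x hx => (mem_II.1 hx).1) hj'
    obtain ⟨s, hs, hsF, -⟩ := h.fresh (II G c V m (j - 1) u ∩ II G c V m (j - 1) u')
      (fun x hx => (mem_II.1 (Finset.mem_inter.1 hx).1).1) {w, u, u'} ∅ (by
        have : ({w, u, u'} : Finset W).card ≤ 3 := Finset.card_le_three
        simp only [Finset.card_empty]; omega)
    simp only [Finset.mem_insert, Finset.mem_singleton, not_or] at hsF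
    rw [Finset.mem_inter] at hs
    have s1 := mem_II.1 hs.1
    have s2 := mem_II.1 hs.2
    have hsu : c s(u, s) = m u := by rw [Sym2.eq_swap]; exact s1.2.2
    refine h.cyc hL (RP.three (c := c) ha'.symm ha s1.2.1.symm huu (Ne.symm hsF.2.2) (Ne.symm hsF.1) ?_ ?_ ?_)
      (h.rich s1.1) (k := k) ?_ hsF.2.2 ?_ ?_ (by omega)
    · rw [sw]; exact hcc.symm
    · rw [sw, hsu]; exact h1.symm
    · rw [hsu]; exact hi
    · rw [hk0, add_zero]; exact hj'
    · simp only [Finset.mem_insert, Finset.mem_singleton, not_or, sw, hsu]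
      exact ⟨hi'.symm, h2, fun hh => huu (h.inj j _ _ hu' hu hh)⟩
    · intro _
      exact mem_OO.2 ⟨hj', s2.2.1, s2.2.2⟩
  · obtain ⟨k, rfl⟩ : ∃ k, l = k + 3 := ⟨l - 3, by omega⟩
    have hk0 : (k : ZMod 3) = 2 := by
      push_cast at hl3
      generalize (k : ZMod 3) = x at hl3 ⊢
      revert x; decide
    refine h.cyc hL (RP.two (c := c) ha'.symm ha huu ?_)
      (h.rich hu) (k := k) ?_ huu.symm ?_ (by omega) (by omega)
    · rw [sw]; exact hcc.symm
    · rw [hk0, z3a]; exact hu'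
    · simp only [Finset.mem_insert, Finset.mem_singleton, not_or, sw]
      exact ⟨hi'.symm, h2⟩

lemma IsCore.card_IC (h : IsCore G c d V m) {l : ℕ} (hL : 1000 * (10 * l + 10) ≤ d) (hl : 4 ≤ l)
    (hl3 : (l : ZMod 3) = 1 ∨ (l : ZMod 3) = 2)
    (hno : ¬ HasRainbowCycle G c l) (j : ZMod 3) (w : W) : (IC G c V m j w).card ≤ 3 := by
  by_contra hcon
  obtain ⟨a, ha, B, hB, haB, hBc⟩ := card4 (not_le.1 hcon)
  obtain ⟨u, hu, hadj, hi, rfl⟩ := mem_IC.1 ha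
  -- the representative function
  have hrep : ∀ b ∈ B, ∃ u' ∈ V j, G.Adj w u' ∧ c s(w, u') ≠ m u' ∧ c s(w, u') = b :=
    fun b hb => mem_IC.1 (hB hb)
  have : Nonempty W := ⟨w⟩
  choose! f hf using hrep
  have hall : ∀ b ∈ B, m u = b ∨ m (f b) = c s(w, u) := by
    intro b hb
    by_contra hh
    push Not at hh
    obtain ⟨f1, f2, f3, f4⟩ := hf b hb
    refine h.pairIC hL hl hl3 hno hu f1 hadj f2 hi f3 ?_ ?_ hh.2
    · rw [f4]; rintro rfl; exact haB hb
    · rw [f4]; exact hh.1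
  have hsub : B ⊆ {m u} ∪ (B.filter fun b => m (f b) = c s(w, u)) := by
    intro b hb
    rcases hall b hb with h | h
    · simp [h]
    · exact Finset.mem_union_right _ (Finset.mem_filter.2 ⟨hb, h⟩)
  have h2 : (B.filter fun b => m (f b) = c s(w, u)).card ≤ 1 := by
    rw [Finset.card_le_one]
    intro b hb b' hb'
    rw [Finset.mem_filter] at hb hb'
    have := h.inj j _ _ (hf b hb.1).1 (hf b' hb'.1).1 (hb.2.trans hb'.2.symm)
    rw [← (hf b hb.1).2.2.2, ← (hf b' hb'.1).2.2.2, this]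
  have := Finset.card_le_card hsub
  have := Finset.card_union_le {m u} (B.filter fun b => m (f b) = c s(w, u))
  rw [Finset.card_singleton] at this
  omega

lemma IsCore.sum_OO (h : IsCore G c d V m) {l : ℕ} (hL : 1000 * (10 * l + 10) ≤ d) (hl : 4 ≤ l)
    (hl3 : (l : ZMod 3) = 1 ∨ (l : ZMod 3) = 2)
    (hno : ¬ HasRainbowCycle G c l) (hdeg : ∀ w, d ≤ (CS G c w).card) (w : W) (i : ZMod 3) :
    999 * d ≤ 1000 * ((OO G c V m i w).card + (OO G c V m (i+1) w).card + (OO G c V m (i+2) w).card + 9) := by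
  obtain ⟨R, hR, hRV⟩ := h.rest
  have hsub : CS G c w ⊆ R.image (fun u => c s(w, u)) ∪
      ((((OO G c V m i w).image m ∪ IC G c V m i w) ∪
      ((OO G c V m (i+1) w).image m ∪ IC G c V m (i+1) w)) ∪
      ((OO G c V m (i+2) w).image m ∪ IC G c V m (i+2) w)) := by
    intro α hα
    obtain ⟨u, hadj, rfl⟩ := mem_CS.1 hα
    by_cases hu : u ∈ R
    · exact Finset.mem_union_left _ (Finset.mem_image_of_mem _ hu)
    · apply Finset.mem_union_right
      obtain ⟨j, hj⟩ := hRV u hu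
      have hthis : c s(w, u) ∈ (OO G c V m j w).image m ∪ IC G c V m j w := by
        by_cases hc : c s(w, u) = m u
        · apply Finset.mem_union_left
          rw [hc]
          exact Finset.mem_image_of_mem _ (mem_OO.2 ⟨hj, hadj, hc⟩)
        · apply Finset.mem_union_right
          exact mem_IC.2 ⟨u, hj, hadj, hc, rfl⟩
      have hcases : j = i ∨ j = i + 1 ∨ j = i + 2 := z3b i j
      rcases hcases with rfl | rfl | rfl
      · exact Finset.mem_union_left _ (Finset.mem_union_left _ hthis)
      · exact Finset.mem_union_left _ (Finset.mem_union_right _ hthis)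
      · exact Finset.mem_union_right _ hthis
  have hc := Finset.card_le_card hsub
  have hh : ∀ j, ((OO G c V m j w).image m ∪ IC G c V m j w).card ≤ (OO G c V m j w).card + 3 := by
    intro j
    have h1 := Finset.card_union_le ((OO G c V m j w).image m) (IC G c V m j w)
    have h2 := h.card_IC hL hl hl3 hno j w
    have h3 : ((OO G c V m j w).image m).card ≤ _ := Finset.card_image_le
    omega
  have h1 := Finset.card_union_le (R.image (fun u => c s(w, u)))
      ((((OO G c V m i w).image m ∪ IC G c V m i w) ∪
      ((OO G c V m (i+1) w).image m ∪ IC G c V m (i+1) w)) ∪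
      ((OO G c V m (i+2) w).image m ∪ IC G c V m (i+2) w))
  have h2 := Finset.card_union_le (((OO G c V m i w).image m ∪ IC G c V m i w) ∪
      ((OO G c V m (i+1) w).image m ∪ IC G c V m (i+1) w))
      ((OO G c V m (i+2) w).image m ∪ IC G c V m (i+2) w)
  have h3 := Finset.card_union_le ((OO G c V m i w).image m ∪ IC G c V m i w)
      ((OO G c V m (i+1) w).image m ∪ IC G c V m (i+1) w)
  have h4 : (R.image (fun u => c s(w, u))).card ≤ _ := Finset.card_image_le
  have := hh i
  have := hh (i+1)
  have := hh (i+2)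
  have := hdeg w
  omega

/-- `w` sends nearly all possible proper edges to class `j` -/
def Full (G : SimpleGraph W) (c : Sym2 W → ℕ) (d : ℕ) (V : ZMod 3 → Finset W) (m : W → ℕ)
    (j : ZMod 3) (w : W) : Prop := 970 * d ≤ 1000 * (OO G c V m j w).card

lemma Full.rich {j : ZMod 3} {w : W} (hf : Full G c d V m j w) : Rich G c d V m j w := by
  unfold Full at hf; unfold Rich; omega

/-- there is a class function -/
lemma IsCore.exists_kappa (h : IsCore G c d V m) {l : ℕ} (hL : 1000 * (10 * l + 10) ≤ d) (hl : 4 ≤ l)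
    (hl3 : (l : ZMod 3) = 1 ∨ (l : ZMod 3) = 2)
    (hno : ¬ HasRainbowCycle G c l) (hdeg : ∀ w, d ≤ (CS G c w).card) (q : ZMod 3)
    (hq : q = (l : ZMod 3) * (l - 1)) :
    ∃ κ : W → ZMod 3, (∀ i v, v ∈ V i → κ v = i) ∧
      ∀ i v w, v ∈ V i → G.Adj v w → c s(v, w) ≠ m v →
        κ w = i + 1 ∨ (Full G c d V m (i - q) w ∧ κ w = i - q - 1) := by
  have key : ∀ w : W, ∃ k : ZMod 3, (∀ i, w ∈ V i → k = i) ∧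
      ∀ i v, v ∈ V i → G.Adj v w → c s(v, w) ≠ m v →
        k = i + 1 ∨ (Full G c d V m (i - q) w ∧ k = i - q - 1) := by
    intro w
    set J : ZMod 3 → Prop := fun i => ∃ v ∈ V i, G.Adj v w ∧ c s(v, w) ≠ m v with hJ
    have hF2 : ∀ j, Rich G c d V m j w → ¬ J (j + (l - 2)) := by
      rintro j hr ⟨v, hv, hadj, hne⟩
      exact hne (h.F2 hL hl hno hr hv hadj)
    have hJcore : ∀ i, w ∈ V i → J (i - 1) := by
      intro i hw
      have hin := h.inn i w hw
      obtain ⟨x, hx, -, hx2⟩ := h.fresh (II G c V m (i - 1) w) (fun x hx => (mem_II.1 hx).1) ∅ {m w}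
        (by simp; omega)
      have := mem_II.1 hx
      refine ⟨x, this.1, this.2.1, ?_⟩
      rw [this.2.2]
      intro hh; exact hx2 (by simp [hh])
    have hrichc : ∀ i, w ∈ V i → Rich G c d V m (i + 1) w := fun i hw => h.rich hw
    by_cases hone : ∃ i0, ∀ i, J i → i = i0
    · by_cases hcore : ∃ i, w ∈ V i
      · obtain ⟨i1, hi1⟩ := hcore
        refine ⟨i1, fun i hi => h.disj _ _ _ hi1 hi, fun i v hv hadj hne => ?_⟩
        obtain ⟨i0, hi0⟩ := hone
        left
        have e1 := hi0 _ (hJcore i1 hi1)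
        have e2 := hi0 i ⟨v, hv, hadj, hne⟩
        rw [e2, ← e1]; ring
      · obtain ⟨i0, hi0⟩ := hone
        refine ⟨i0 + 1, fun i hi => absurd ⟨i, hi⟩ hcore, fun i v hv hadj hne => Or.inl ?_⟩
        rw [hi0 i ⟨v, hv, hadj, hne⟩]
    · push Not at hone
      have hsum := fun i => h.sum_OO hL hl hl3 hno hdeg w i
      have hex : ∃ j, Rich G c d V m j w := by
        by_contra hcon
        push Not at hcon
        have h0 := hcon 0
        have h1 := hcon (0 + 1)
        have h2 := hcon (0 + 2)
        have := hsum 0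
        unfold Rich at h0 h1 h2
        omega
      obtain ⟨j, hj⟩ := hex
      have huniq : ∀ j', Rich G c d V m j' w → j' = j := by
        intro j' hj'
        by_contra hne
        have n1 := hF2 j hj
        have n2 := hF2 j' hj'
        obtain ⟨i1, hi1, hne1⟩ := hone (-(j + (l - 2)) - (j' + (l - 2)))
        have : i1 = j + (l - 2) ∨ i1 = j' + (l - 2) := by
          clear * - hne hne1
          generalize (l : ZMod 3) = x at *
          revert j j' i1 x; decide
        rcases this with rfl | rfl
        · exact n1 hi1
        · exact n2 hi1
      have hfull : Full G c d V m j w := by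
        have h1 : ¬ Rich G c d V m (j + 1) w := by
          intro hr
          exact z3c j (huniq _ hr)
        have h2 : ¬ Rich G c d V m (j + 2) w := by
          intro hr
          exact z3d j (huniq _ hr)
        have := hsum j
        unfold Rich at h1 h2
        unfold Full
        omega
      refine ⟨j - 1, ?_, ?_⟩
      · intro i hi
        rw [← huniq _ (hrichc i hi)]; ring
      · intro i v hv hadj hne
        have hJi : J i := ⟨v, hv, hadj, hne⟩
        have hn := hF2 j hj
        have hni : i ≠ j + (l - 2) := by rintro rfl; exact hn hJi
        have : i = j + 1 ∨ i = j + q := by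
          subst hq
          clear * - hni hl3
          generalize (l : ZMod 3) = x at *
          revert i j x; decide
        rcases this with rfl | rfl
        · left; exact z3e j
        · right
          rw [show j + q - q = j by ring]
          exact ⟨hfull, rfl⟩
  choose κ hκ1 hκ2 using key
  exact ⟨κ, fun i v hv => hκ1 v i hv, fun i v w hv ha hc => hκ2 w i v hv ha hc⟩
end Rb

set_option linter.unusedSectionVars false
namespace Rb
variable {W : Type} [Fintype W] [DecidableEq W]
  {G : SimpleGraph W} {c : Sym2 W → ℕ} {d : ℕ} {V : ZMod 3 → Finset W} {m : W → ℕ}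

lemma IsCore.twoDefect (h : IsCore G c d V m) {l : ℕ} (hL : 1000 * (10 * l + 10) ≤ d) {k1 k2 : ℕ}
    {j j' : ZMod 3} {v w v' w' : W} (hr : Rich G c d V m j w) (hr' : Rich G c d V m j' w')
    (hv : v ∈ V (j' + k2)) (hv' : v' ∈ V (j + k1)) (hk1 : 1 ≤ k1) (hk2 : 1 ≤ k2)
    (hl : k1 + k2 + 4 = l) (hvw : G.Adj v w) (hvw' : G.Adj v' w') (n1 : v ≠ v') (n2 : v ≠ w')
    (n3 : w ≠ v') (n4 : w ≠ w') (hm : m v ≠ m v') (c1 : c s(v, w) ≠ c s(v', w'))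
    (c2 : c s(v, w) ≠ m v) (c3 : c s(v, w) ≠ m v') (c4 : c s(v', w') ≠ m v)
    (c5 : c s(v', w') ≠ m v') : HasRainbowCycle G c l := by
  obtain ⟨S, D, hRP, hS, hD⟩ := h.conn hL k1 j w v' {v, w'} {c s(v, w), c s(v', w'), m v} hr hv' n3
    (by simp only [Finset.mem_insert, Finset.mem_singleton, not_or]; exact ⟨c3.symm, c5.symm, hm.symm⟩)
    (by omega) (by
      have : ({v, w'} : Finset W).card ≤ 2 := Finset.card_le_two
      have : ({c s(v, w), c s(v', w'), m v} : Finset ℕ).card ≤ 3 := Finset.card_le_three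
      omega)
  simp only [Finset.disjoint_insert_right, Finset.disjoint_singleton_right] at hD
  have hvS : v ∉ S := by
    intro hh
    rcases hS v hh with h | h | h
    · exact hvw.ne h
    · exact n1 h
    · simp at h
  have hwS : w' ∉ S := by
    intro hh
    rcases hS w' hh with h | h | h
    · exact n4 h.symm
    · exact hvw'.ne h.symm
    · simp at h
  have hfix := (hRP.cons hvw hvS hD.1).append (RP.one (c := c) hvw') (by
    intro x hx hx'
    simp only [Finset.mem_insert, Finset.mem_singleton] at hx hx'
    rcases hx' with h | h
    · exact h
    · subst h
      rcases hx with h | h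
      · exact absurd h.symm n2
      · exact absurd h hwS) (by
    rw [Finset.disjoint_singleton_right, Finset.mem_insert, not_or]
    exact ⟨c1.symm, hD.2.1⟩)
  refine h.cyc hL hfix hr' hv n2.symm ?_ (by omega) (by omega)
  simp only [Finset.mem_union, Finset.mem_insert, Finset.mem_singleton, not_or]
  exact ⟨⟨c2.symm, hD.2.2⟩, c4.symm⟩

/-- defect edge -/
structure Dft (G : SimpleGraph W) (c : Sym2 W → ℕ) (d : ℕ) (V : ZMod 3 → Finset W) (m : W → ℕ)
    (κ : W → ZMod 3) (q i : ZMod 3) (v : W) (β : ℕ) (w : W) : Prop where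
  mem : v ∈ V i
  adj : G.Adj v w
  col : c s(v, w) = β
  ne : β ≠ m v
  full : Full G c d V m (i - q) w
  kap : κ w = i - q - 1

open Classical in
/-- defect colors -/
noncomputable def DC (G : SimpleGraph W) (c : Sym2 W → ℕ) (m : W → ℕ)
    (κ : W → ZMod 3) (i : ZMod 3) (v : W) : Finset ℕ :=
  (CS G c v).filter fun α => α ≠ m v ∧ ∀ w, G.Adj v w → c s(v, w) = α → κ w ≠ i + 1

lemma mem_DC {κ : W → ZMod 3} {i : ZMod 3} {v : W} {α : ℕ} : α ∈ DC G c m κ i v ↔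
    α ∈ CS G c v ∧ α ≠ m v ∧ ∀ w, G.Adj v w → c s(v, w) = α → κ w ≠ i + 1 := by
  simp only [DC, Finset.mem_filter]

open Classical in
/-- the class of `κ` -/
noncomputable def KK (κ : W → ZMod 3) (i : ZMod 3) : Finset W := univ.filter fun w => κ w = i

lemma mem_KK {κ : W → ZMod 3} {i : ZMod 3} {w : W} : w ∈ KK κ i ↔ κ w = i := by simp [KK]

/-- `z ∈ V i` is tight -/
def Tight (G : SimpleGraph W) (c : Sym2 W → ℕ) (m : W → ℕ)
    (κ : W → ZMod 3) (i : ZMod 3) (z : W) : Prop :=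
  (∀ w, κ w = i + 1 → G.Adj z w ∧ c s(z, w) ≠ m z) ∧
  ∀ w w', κ w = i + 1 → κ w' = i + 1 → c s(z, w) = c s(z, w') → w = w'

lemma tight_or {κ : W → ZMod 3} {i : ZMod 3} {z : W} :
    (CS G c z).card ≤ (KK κ (i + 1)).card + (DC G c m κ i z).card + 1 ∧
    ((KK κ (i + 1)).card + (DC G c m κ i z).card + 1 ≤ (CS G c z).card → Tight G c m κ i z) := by
  classical
  set T := (KK κ (i + 1)).filter fun w => G.Adj z w ∧ c s(z, w) ≠ m z with hT
  have hsub : CS G c z ⊆ (T.image (fun w => c s(z, w)) ∪ DC G c m κ i z) ∪ {m z} := by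
    intro α hα
    by_cases h1 : α = m z
    · simp [h1]
    by_cases h2 : α ∈ DC G c m κ i z
    · simp [h2]
    · rw [mem_DC] at h2
      push Not at h2
      obtain ⟨w, w1, w2, w3⟩ := h2 hα h1
      apply Finset.mem_union_left
      apply Finset.mem_union_left
      rw [Finset.mem_image]
      refine ⟨w, ?_, w2⟩
      rw [hT, Finset.mem_filter, mem_KK]
      exact ⟨w3, w1, by rw [w2]; exact h1⟩
  have hc := Finset.card_le_card hsub
  have h1 := Finset.card_union_le (T.image (fun w => c s(z, w)) ∪ DC G c m κ i z) {m z}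
  have h2 := Finset.card_union_le (T.image (fun w => c s(z, w))) (DC G c m κ i z)
  rw [Finset.card_singleton] at h1
  have h3 : (T.image (fun w => c s(z, w))).card ≤ T.card := Finset.card_image_le
  have h4 : T.card ≤ (KK κ (i + 1)).card := Finset.card_filter_le _ _
  refine ⟨by omega, fun hle => ?_⟩
  have e1 : T = KK κ (i + 1) := Finset.eq_of_subset_of_card_le (Finset.filter_subset _ _) (by omega)
  have e2 : (T.image (fun w => c s(z, w))).card = T.card := by omega
  rw [Finset.card_image_iff] at e2
  refine ⟨fun w hw => ?_, fun w w' hw hw' hcc => ?_⟩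
  · have : w ∈ T := by rw [e1, mem_KK]; exact hw
    exact (Finset.mem_filter.1 this).2
  · apply e2
    · rw [e1, Finset.mem_coe, mem_KK]; exact hw
    · rw [e1, Finset.mem_coe, mem_KK]; exact hw'
    · exact hcc

/-- same-class lemma -/
lemma IsCore.same (h : IsCore G c d V m) {l : ℕ} (hL : 1000 * (10 * l + 10) ≤ d) (hl : 4 ≤ l)
    (hl2 : Even l) (hl3 : (l : ZMod 3) = 1 ∨ (l : ZMod 3) = 2)
    (hno : ¬ HasRainbowCycle G c l) {q : ZMod 3}
    (hq : q = (l : ZMod 3) * (l - 1)) {κ : W → ZMod 3} {i : ZMod 3} {v v' w w' : W} {β β' : ℕ}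
    (D : Dft G c d V m κ q i v β w) (D' : Dft G c d V m κ q i v' β' w')
    (n1 : v ≠ v') (n2 : v ≠ w') (n3 : v' ≠ w) (c1 : β ≠ m v') (c2 : β' ≠ m v)
    (e1 : (l : ZMod 3) = 1 → v' ∈ OO G c V m i w) (e2 : (l : ZMod 3) = 1 → v ∈ OO G c V m i w') :
    β = β' := by
  by_contra hb
  have hmm : m v ≠ m v' := fun hh => n1 (h.inj i _ _ D.mem D'.mem hh)
  have hcc : c s(v, w) ≠ c s(v', w') := by rw [D.col, D'.col]; exact hb
  rcases hl3 with h1 | h2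
  · obtain ⟨k, rfl⟩ : ∃ k, l = k + 4 := ⟨l - 4, by omega⟩
    have hk0 : (k : ZMod 3) = 0 := by
      push_cast at h1
      generalize (k : ZMod 3) = x at h1 ⊢
      revert x; decide
    have hq0 : q = 0 := by rw [hq, h1]; decide
    have e1 := mem_OO.1 (e1 h1)
    have e2 := e2 h1
    have hww : w ≠ w' := by
      rintro rfl
      apply D'.ne
      rw [← D'.col, Sym2.eq_swap]; exact e1.2.2
    have hr := D'.full.rich
    rw [hq0, sub_zero] at hr
    refine hno (h.cyc hL (RP.three (c := c) D.adj e1.2.1 D'.adj n1 n2 hww ?_ ?_ ?_) hr (k := k) ?_ n2.symm ?_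
      (fun _ => e2) (by omega))
    · rw [D.col, e1.2.2]; exact c1
    · exact hcc
    · rw [e1.2.2, D'.col]; exact D'.ne.symm
    · rw [hk0, add_zero]; exact D.mem
    · simp only [Finset.mem_insert, Finset.mem_singleton, not_or, D.col, D'.col, e1.2.2]
      exact ⟨D.ne.symm, hmm, c2.symm⟩
  · have h8 : 8 ≤ l := by
      by_contra hlt
      obtain ⟨r, hr⟩ := hl2
      have : l = 4 ∨ l = 6 := by omega
      rcases this with rfl | rfl
      · revert h2; decide
      · revert h2; decide
    have hq0 : q = 2 := by rw [hq, h2]; decide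
    have hiq : i - q = i + 1 := by rw [hq0]; clear * -; revert i; decide
    by_cases hww : w = w'
    · subst hww
      obtain ⟨k, rfl⟩ : ∃ k, l = k + 3 := ⟨l - 3, by omega⟩
      have hk0 : (k : ZMod 3) = 2 := by
        push_cast at h2
        generalize (k : ZMod 3) = x at h2 ⊢
        revert x; decide
      have hsw : c s(w, v) = β := by rw [Sym2.eq_swap]; exact D.col
      refine hno (h.cyc hL (RP.two (c := c) D'.adj D.adj.symm n1.symm ?_) (h.rich D.mem) (k := k) ?_ n1 ?_
        (by omega) (by omega))
      · rw [hsw, D'.col]; exact Ne.symm hb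
      · rw [hk0, z3a]; exact D'.mem
      · simp only [Finset.mem_insert, Finset.mem_singleton, not_or, hsw, D'.col]
        exact ⟨D'.ne.symm, c1.symm⟩
    · obtain ⟨k, rfl⟩ : ∃ k, l = k + 6 := ⟨l - 6, by omega⟩
      have hk0 : (k : ZMod 3) = 2 := by
        push_cast at h2
        generalize (k : ZMod 3) = x at h2 ⊢
        revert x; decide
      refine hno (h.twoDefect hL (k1 := 2) (k2 := k) D.full.rich D'.full.rich ?_ ?_ (by omega) (by omega)
        (by omega) D.adj D'.adj n1 n2 n3.symm hww hmm hcc ?_ ?_ ?_ ?_)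
      · rw [hiq, hk0, z3a]; exact D.mem
      · rw [hiq]; push_cast; rw [z3a]; exact D'.mem
      · rw [D.col]; exact D.ne
      · rw [D.col]; exact c1
      · rw [D'.col]; exact c2
      · rw [D'.col]; exact D'.ne

lemma maj {X : Finset W} (DD : W → Finset ℕ) (B : W → ℕ → Finset W) (t : ℕ)
    (hB : ∀ v ∈ X, ∀ β ∈ DD v, (B v β).card ≤ t) (hne : ∀ v ∈ X, (DD v).Nonempty)
    (h : ∀ v ∈ X, ∀ v' ∈ X, v ≠ v' → ∀ β ∈ DD v, ∀ β' ∈ DD v', v' ∉ B v β → v ∉ B v' β' → β = β')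
    (hX : 5 * t + 5 ≤ X.card) : ∃ b, (X.filter fun v => DD v ≠ {b}).card ≤ 2 * t := by
  choose! f hf using hne
  have hsum : ∑ v ∈ X, (X.filter fun u => v ∈ B u (f u)).card ≤ t * X.card := by
    have : ∑ v ∈ X, (X.filter fun u => v ∈ B u (f u)).card
        = ∑ u ∈ X, (X.filter fun v => v ∈ B u (f u)).card :=
      Finset.sum_card_bipartiteAbove_eq_sum_card_bipartiteBelow (fun v u => v ∈ B u (f u))
    rw [this, mul_comm, ← smul_eq_mul]
    apply Finset.sum_le_card_nsmul
    intro u hu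
    refine le_trans (Finset.card_le_card ?_) (hB u hu _ (hf u hu))
    intro v hv; exact (Finset.mem_filter.1 hv).2
  obtain ⟨v0, hv0, hv0t⟩ : ∃ v ∈ X, (X.filter fun u => v ∈ B u (f u)).card ≤ t := by
    by_contra hcon
    push Not at hcon
    have h1 : X.card * (t + 1) ≤ ∑ v ∈ X, (X.filter fun u => v ∈ B u (f u)).card := by
      rw [← smul_eq_mul]
      exact Finset.card_nsmul_le_sum _ _ _ (fun v hv => hcon v hv)
    nlinarith
  set b := f v0 with hb
  set U := X.filter fun v => f v = b with hU
  have hXU : X ⊆ U ∪ (((X.filter fun u => v0 ∈ B u (f u)) ∪ B v0 b) ∪ {v0}) := by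
    intro u hu
    by_cases h1 : v0 ∈ B u (f u)
    · simp [hu, h1]
    by_cases h2 : u ∈ B v0 b
    · simp [h2]
    by_cases h3 : u = v0
    · simp [h3]
    · apply Finset.mem_union_left
      rw [hU, Finset.mem_filter]
      exact ⟨hu, h u hu v0 hv0 h3 _ (hf u hu) _ (hf v0 hv0) h1 h2⟩
  have hUc : X.card ≤ U.card + 2 * t + 1 := by
    have h0 := Finset.card_le_card hXU
    have h1 := Finset.card_union_le U (((X.filter fun u => v0 ∈ B u (f u)) ∪ B v0 b) ∪ {v0})
    have h2 := Finset.card_union_le ((X.filter fun u => v0 ∈ B u (f u)) ∪ B v0 b) {v0}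
    have h3 := Finset.card_union_le (X.filter fun u => v0 ∈ B u (f u)) (B v0 b)
    have h4 := hB v0 hv0 _ (hf v0 hv0)
    rw [← hb] at h4
    rw [Finset.card_singleton] at h2
    omega
  refine ⟨b, ?_⟩
  set Y := X.filter fun v => DD v ≠ {b} with hY
  have hg : ∀ v ∈ Y, ∃ β ∈ DD v, β ≠ b := by
    intro v hv
    rw [hY, Finset.mem_filter] at hv
    by_contra hcon
    push Not at hcon
    apply hv.2
    ext x
    rw [Finset.mem_singleton]
    constructor
    · exact hcon x
    · rintro rfl
      have := hf v hv.1
      rwa [hcon _ this] at this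
  choose! g hg1 hg2 using hg
  have hYX : ∀ v ∈ Y, v ∈ X := fun v hv => (Finset.mem_filter.1 hv).1
  have hUX : ∀ v ∈ U, v ∈ X := fun v hv => (Finset.mem_filter.1 hv).1
  have hpairs : Y ×ˢ U ⊆ (Y.biUnion fun v => (B v (g v) ∪ {v}).image fun u => (v, u)) ∪
      (U.biUnion fun u => (B u b).image fun v => (v, u)) := by
    rintro ⟨v, u⟩ hvu
    rw [Finset.mem_product] at hvu
    obtain ⟨hv, hu⟩ := hvu
    simp only at hv hu
    rw [Finset.mem_union, Finset.mem_biUnion, Finset.mem_biUnion]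
    by_contra hcon
    rw [not_or] at hcon
    have h1 : u ∉ B v (g v) ∪ {v} := fun hh => hcon.1 ⟨v, hv, Finset.mem_image_of_mem _ hh⟩
    have h2 : v ∉ B u b := fun hh => hcon.2 ⟨u, hu, Finset.mem_image.2 ⟨v, hh, rfl⟩⟩
    rw [Finset.mem_union, Finset.mem_singleton, not_or] at h1
    have hfu : f u = b := (Finset.mem_filter.1 hu).2
    refine hg2 v hv (h v (hYX v hv) u (hUX u hu) (Ne.symm h1.2) _ (hg1 v hv) b ?_ h1.1 h2)
    rw [← hfu]; exact hf u (hUX u hu)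
  have hcard := Finset.card_le_card hpairs
  rw [Finset.card_product] at hcard
  have h1 := Finset.card_union_le (Y.biUnion fun v => (B v (g v) ∪ {v}).image fun u => (v, u))
      (U.biUnion fun u => (B u b).image fun v => (v, u))
  have h2 : (Y.biUnion fun v => (B v (g v) ∪ {v}).image fun u => (v, u)).card ≤ Y.card * (t + 1) := by
    apply Finset.card_biUnion_le_card_mul
    intro v hv
    refine le_trans Finset.card_image_le ((Finset.card_union_le _ _).trans ?_)
    have := hB v (hYX v hv) _ (hg1 v hv)
    rw [Finset.card_singleton]; omega
  have h3 : (U.biUnion fun u => (B u b).image fun v => (v, u)).card ≤ U.card * t := by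
    apply Finset.card_biUnion_le_card_mul
    intro u hu
    refine le_trans Finset.card_image_le ?_
    apply hB u (hUX u hu)
    rw [← (Finset.mem_filter.1 hu).2]; exact hf u (hUX u hu)
  by_contra hcon
  have h5 : 3 * t + 4 ≤ U.card := by omega
  have h6 : 2 * t + 1 ≤ Y.card := by omega
  obtain ⟨x, hx⟩ := Nat.exists_eq_add_of_le h5
  obtain ⟨y, hy⟩ := Nat.exists_eq_add_of_le h6
  rw [hx, hy] at *
  nlinarith [Nat.zero_le (x * y), Nat.zero_le (t * y), Nat.zero_le (t*x), Nat.zero_le (t*t)]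
end Rb

set_option linter.unusedSectionVars false
namespace Rb
variable {W : Type} [Fintype W] [DecidableEq W]
  {G : SimpleGraph W} {c : Sym2 W → ℕ} {d : ℕ} {V : ZMod 3 → Finset W} {m : W → ℕ}

lemma cnt (act : ZMod 3 → Prop) (x : ZMod 3 → ℕ) (d : ℕ) (h : x 0 + x 1 + x 2 + 5 ≤ 3 * d)
    (h1 : ∀ i, act i → d ≤ x i + 2) (h2 : ∀ i, ¬ act i → d ≤ x i + 1) :
    (∃ a, act a ∧ act (a + 1) ∧ x a + 2 ≤ d) ∧
    (∃ a, act a ∧ act (a + 1) ∧ ((act (a + 2) ∧ x (a + 2) + 2 ≤ d) ∨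
      (¬ act (a + 2) ∧ x (a + 2) + 1 ≤ d))) := by
  have e1 : (0 : ZMod 3) + 1 = 1 := by decide
  have e2 : (1 : ZMod 3) + 1 = 2 := by decide
  have e3 : (2 : ZMod 3) + 1 = 0 := by decide
  have e4 : (0 : ZMod 3) + 2 = 2 := by decide
  have e5 : (1 : ZMod 3) + 2 = 0 := by decide
  have e6 : (2 : ZMod 3) + 2 = 1 := by decide
  have a0 := h1 0
  have a1 := h1 1
  have a2 := h1 2
  have b0 := h2 0
  have b1 := h2 1
  have b2 := h2 2
  constructor
  · by_contra hcon
    push Not at hcon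
    have c0 := hcon 0
    have c1 := hcon 1
    have c2 := hcon 2
    rw [e1] at c0; rw [e2] at c1; rw [e3] at c2
    by_cases p0 : act 0 <;> by_cases p1 : act 1 <;> by_cases p2 : act 2 <;>
      simp only [p0, p1, p2, forall_true_left, not_true, not_false_iff, false_imp_iff] at * <;> omega
  · by_contra hcon
    push Not at hcon
    have c0 := hcon 0
    have c1 := hcon 1
    have c2 := hcon 2
    rw [e1, e4] at c0; rw [e2, e5] at c1; rw [e3, e6] at c2
    by_cases p0 : act 0 <;> by_cases p1 : act 1 <;> by_cases p2 : act 2 <;>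
      simp only [p0, p1, p2, forall_true_left, not_true, not_false_iff, false_imp_iff, true_and, and_true] at * <;> omega

lemma IsCore.size_lb (h : IsCore G c d V m) [Nonempty W] (hd : 1000 ≤ d) (hdeg : ∀ w, d ≤ (CS G c w).card)
    (i : ZMod 3) : 999 * d ≤ 1000 * (V i).card := by
  obtain ⟨R, hR, hRV⟩ := h.rest
  have hex : ∃ i v, v ∈ V i := by
    by_contra hcon
    push Not at hcon
    obtain ⟨w⟩ := ‹Nonempty W›
    have h1 : (univ : Finset W) ⊆ R := by
      intro x _
      by_contra hx
      obtain ⟨i, hi⟩ := hRV x hx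
      exact hcon i x hi
    have h2 := Finset.card_le_card h1
    have h3 : (CS G c w).card ≤ (univ : Finset W).card := by
      unfold CS
      exact Finset.card_image_le.trans (Finset.card_le_card (Finset.subset_univ _))
    have := hdeg w
    omega
  obtain ⟨i0, v, hv⟩ := hex
  have step : ∀ j, (∃ v, v ∈ V j) → 999 * d ≤ 1000 * (V (j + 1)).card := by
    rintro j ⟨v, hv⟩
    have h1 := h.out j v hv
    have h2 : (OO G c V m (j + 1) v).card ≤ (V (j + 1)).card :=
      Finset.card_le_card (fun x hx => (mem_OO.1 hx).1)
    omega
  have step2 : ∀ j, 999 * d ≤ 1000 * (V j).card → ∃ v, v ∈ V j := by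
    intro j hj
    have : 0 < (V j).card := by omega
    exact Finset.card_pos.1 this
  have s1 := step i0 ⟨v, hv⟩
  have s2 := step _ (step2 _ s1)
  have s3 := step _ (step2 _ s2)
  have : i = i0 + 1 ∨ i = i0 + 1 + 1 ∨ i = i0 + 1 + 1 + 1 := by
    clear * -
    revert i i0; decide
  rcases this with rfl | rfl | rfl <;> assumption

/-- the properties of the class function -/
def IsKap (G : SimpleGraph W) (c : Sym2 W → ℕ) (d : ℕ) (V : ZMod 3 → Finset W) (m : W → ℕ)
    (q : ZMod 3) (κ : W → ZMod 3) : Prop :=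
  (∀ i v, v ∈ V i → κ v = i) ∧
      ∀ i v w, v ∈ V i → G.Adj v w → c s(v, w) ≠ m v →
        κ w = i + 1 ∨ (Full G c d V m (i - q) w ∧ κ w = i - q - 1)

lemma IsKap.dft {q : ZMod 3} {κ : W → ZMod 3} (hκ : IsKap G c d V m q κ) {i : ZMod 3} {v : W}
    (hv : v ∈ V i) {α : ℕ} (hα : α ∈ DC G c m κ i v) : ∃ w, Dft G c d V m κ q i v α w := by
  rw [mem_DC] at hα
  obtain ⟨h1, h2, h3⟩ := hα
  obtain ⟨w, hw, rfl⟩ := mem_CS.1 h1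
  rcases hκ.2 i v w hv hw h2 with h | h
  · exact absurd h (h3 w hw rfl)
  · exact ⟨w, hv, hw, rfl, h2, h.1, h.2⟩

lemma IsCore.full_compl (h : IsCore G c d V m) {j : ZMod 3} {w : W} (hf : Full G c d V m j w) :
    1000 * (V j \ OO G c V m j w).card ≤ 31 * d := by
  have h1 := h.size j
  unfold Full at hf
  have h2 := Finset.card_sdiff_add_card_eq_card (s := OO G c V m j w) (t := V j)
    (fun x hx => (mem_OO.1 hx).1)
  omega

lemma IsCore.majority (h : IsCore G c d V m) [Nonempty W] {l : ℕ} (hL : 1000 * (10 * l + 10) ≤ d) (hl : 4 ≤ l)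
    (hl2 : Even l) (hl3 : (l : ZMod 3) = 1 ∨ (l : ZMod 3) = 2)
    (hno : ¬ HasRainbowCycle G c l) (hdeg : ∀ w, d ≤ (CS G c w).card) {q : ZMod 3}
    (hq : q = (l : ZMod 3) * (l - 1)) {κ : W → ZMod 3} (hκ : IsKap G c d V m q κ) (i : ZMod 3)
    (hact : ∀ v ∈ V i, (DC G c m κ i v).Nonempty) :
    ∃ b, 1000 * ((V i).filter fun v => DC G c m κ i v ≠ {b}).card ≤ 64 * d := by
  classical
  have hd := fun v (hv : v ∈ V i) α (hα : α ∈ DC G c m κ i v) => hκ.dft hv hα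
  choose! f hf using hd
  set B : W → ℕ → Finset W := fun v β => ((V i).filter fun u => m u = β) ∪ {f v β} ∪
    (if (l : ZMod 3) = 1 then (V i \ OO G c V m i (f v β)) else ∅) with hB
  have hmj := maj (X := V i) (DC G c m κ i) B (32 * d / 1000) ?_ hact ?_ ?_
  · obtain ⟨b, hb⟩ := hmj
    exact ⟨b, by omega⟩
  · intro v hv β hβ
    have h1 := Finset.card_union_le (((V i).filter fun u => m u = β) ∪ {f v β})
      (if (l : ZMod 3) = 1 then (V i \ OO G c V m i (f v β)) else ∅)
    have h2 := Finset.card_union_le ((V i).filter fun u => m u = β) {f v β}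
    have h3 : ((V i).filter fun u => m u = β).card ≤ 1 := by
      rw [Finset.card_le_one]
      intro a ha a' ha'
      rw [Finset.mem_filter] at ha ha'
      exact h.inj i _ _ ha.1 ha'.1 (ha.2.trans ha'.2.symm)
    have h4 : 1000 * (if (l : ZMod 3) = 1 then (V i \ OO G c V m i (f v β)) else ∅).card ≤ 31 * d := by
      split_ifs with hl1
      · have hq0 : q = 0 := by rw [hq, hl1]; decide
        have := (hf v hv β hβ).full
        rw [hq0, sub_zero] at this
        exact h.full_compl this
      · simp
    rw [Finset.card_singleton] at h2
    show (_ ∪ _ ∪ _ : Finset W).card ≤ _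
    omega
  · intro v hv v' hv' hne β hβ β' hβ' n1 n2
    simp only [hB, Finset.mem_union, Finset.mem_filter, Finset.mem_singleton, not_or] at n1 n2
    refine h.same hL hl hl2 hl3 hno hq (hf v hv β hβ) (hf v' hv' β' hβ') hne n2.1.2 n1.1.2
      (fun hh => n1.1.1 ⟨hv', hh.symm⟩) (fun hh => n2.1.1 ⟨hv, hh.symm⟩) ?_ ?_
    · intro hl1
      have := n1.2
      rw [if_pos hl1] at this
      by_contra hcon
      exact this (Finset.mem_sdiff.2 ⟨hv', hcon⟩)
    · intro hl1
      have := n2.2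
      rw [if_pos hl1] at this
      by_contra hcon
      exact this (Finset.mem_sdiff.2 ⟨hv, hcon⟩)
  · have := h.size_lb (by omega) hdeg i
    omega

lemma IsCore.final2 (h : IsCore G c d V m) [Nonempty W] {l : ℕ} (hL : 1000 * (10 * l + 10) ≤ d) (hl : 8 ≤ l)
    (hl3 : (l : ZMod 3) = 2) (hno : ¬ HasRainbowCycle G c l) (hdeg : ∀ w, d ≤ (CS G c w).card)
    {κ : W → ZMod 3} (hκ : IsKap G c d V m 2 κ) (a : ZMod 3) (b b' : ℕ)
    (hb : 1000 * ((V a).filter fun v => DC G c m κ a v ≠ {b}).card ≤ 64 * d)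
    (hb' : 1000 * ((V (a + 1)).filter fun v => DC G c m κ (a + 1) v ≠ {b'}).card ≤ 64 * d)
    (ht : ∀ z ∈ V a, DC G c m κ a z = {b} → Tight G c m κ a z) : False := by
  have hs := h.size_lb (by omega) hdeg
  -- generic vertices
  have gen : ∀ (i : ZMod 3) (T : Finset W), T ⊆ V i → ∀ b, 
      1000 * ((V i).filter fun v => DC G c m κ i v ≠ {b}).card ≤ 64 * d → 500 * d ≤ 1000 * T.card →
      ∀ C : Finset ℕ, C.card ≤ 3 → ∃ v ∈ T, DC G c m κ i v = {b} ∧ m v ∉ C := by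
    intro i T hT b hb hTc C hC
    obtain ⟨x, hx, hxF, hxC⟩ := h.fresh T hT ((V i).filter fun v => DC G c m κ i v ≠ {b}) C (by omega)
    rw [Finset.mem_filter] at hxF
    push Not at hxF
    exact ⟨x, hx, hxF (hT hx), hxC⟩
  have hbb : b = b' := by
    by_contra hne
    obtain ⟨v, hv, hvD, hvm⟩ := gen a (V a) (fun _ hx => hx) b hb (by have := hs a; omega) {b'} (by simp)
    obtain ⟨v', hv', hvD', hvm'⟩ := gen (a + 1) (V (a + 1)) (fun _ hx => hx) b' hb'
      (by have := hs (a + 1); omega) {b, m v} ((Finset.card_le_two).trans (by omega))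
    obtain ⟨w, D⟩ := hκ.dft hv (α := b) (by rw [hvD]; simp)
    obtain ⟨w', D'⟩ := hκ.dft hv' (α := b') (by rw [hvD']; simp)
    simp only [Finset.mem_insert, Finset.mem_singleton, not_or] at hvm hvm'
    have kv := hκ.1 a v hv
    have kv' := hκ.1 _ v' hv'
    have kw := D.kap
    have kw' := D'.kap
    have z1 : a - 2 - 1 = a := by clear * -; revert a; decide
    have z2 : a + 1 - 2 - 1 = a + 1 := by clear * -; revert a; decide
    have z3 : a - 2 = a + 1 := by clear * -; revert a; decide
    have z4 : a + 1 - 2 = a + 2 := by clear * -; revert a; decide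
    rw [z1] at kw
    rw [z2] at kw'
    obtain ⟨k, rfl⟩ : ∃ k, l = k + 7 := ⟨l - 7, by omega⟩
    have hk0 : (k : ZMod 3) = 1 := by
      push_cast at hl3
      generalize (k : ZMod 3) = x at hl3 ⊢
      revert x; decide
    refine hno (h.twoDefect hL (k1 := 3) (k2 := k) D.full.rich D'.full.rich ?_ ?_ (by omega) (by omega)
        (by omega) D.adj D'.adj ?_ ?_ ?_ ?_ (Ne.symm hvm'.2) ?_ ?_ ?_ ?_ ?_)
    · rw [z4, hk0, show a + 2 + 1 = a by clear * -; revert a; decide]; exact hv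
    · rw [z3]; push_cast; rw [show a + 1 + 3 = a + 1 by clear * -; revert a; decide]; exact hv'
    · rintro rfl; rw [kv] at kv'; exact z3c a kv'.symm
    · rintro rfl; rw [kv] at kw'; exact z3c a kw'.symm
    · rintro rfl; rw [kw] at kv'; exact z3c a kv'.symm
    · rintro rfl; rw [kw] at kw'; exact z3c a kw'.symm
    · rw [D.col, D'.col]; exact hne
    · rw [D.col]; exact D.ne
    · rw [D.col]; exact Ne.symm hvm'.1
    · rw [D'.col]; exact Ne.symm hvm
    · rw [D'.col]; exact D'.ne
  subst hbb
  obtain ⟨z, hz, hzD, -⟩ := gen a (V a) (fun _ hx => hx) b hb (by have := hs a; omega) ∅ (by simp)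
  have htz := ht z hz hzD
  obtain ⟨y, hy, hyD, hym⟩ := gen (a + 1) (OO G c V m (a + 1) z) (fun _ hx => (mem_OO.1 hx).1) b hb'
    (by have := h.out a z hz; omega) {m z} (by simp)
  have hyO := mem_OO.1 hy
  rw [Finset.mem_singleton] at hym
  obtain ⟨w, D⟩ := hκ.dft hyO.1 (α := b) (by rw [hyD]; simp)
  have kw := D.kap
  rw [show a + 1 - 2 - 1 = a + 1 by clear * -; revert a; decide] at kw
  have ky := hκ.1 _ y hyO.1
  have kz := hκ.1 _ z hz
  have hzw := htz.1 w kw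
  have hα1 : c s(z, w) ≠ m y := by
    intro hh
    rw [← hyO.2.2] at hh
    have := htz.2 w y kw ky hh
    exact D.adj.ne this.symm
  have hbz : b ∈ DC G c m κ a z := by rw [hzD]; simp
  rw [mem_DC] at hbz
  have hα2 : c s(z, w) ≠ b := fun hh => hbz.2.2 w hzw.1 hh kw
  obtain ⟨s, hs1, hsF, -⟩ := h.fresh (II G c V m (a - 1) z) (fun x hx => (mem_II.1 hx).1) {y, w} ∅ (by
    have := h.inn a z hz
    have : ({y, w} : Finset W).card ≤ 2 := Finset.card_le_two
    simp only [Finset.card_empty]; omega)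
  simp only [Finset.mem_insert, Finset.mem_singleton, not_or] at hsF
  have hsI := mem_II.1 hs1
  have hcs : c s(z, s) = m z := by rw [Sym2.eq_swap]; exact hsI.2.2
  have hcw : c s(w, z) = c s(z, w) := by rw [Sym2.eq_swap]
  obtain ⟨k, rfl⟩ : ∃ k, l = k + 4 := ⟨l - 4, by omega⟩
  have hk0 : (k : ZMod 3) = 1 := by
    push_cast at hl3
    generalize (k : ZMod 3) = x at hl3 ⊢
    revert x; decide
  refine hno (h.cyc hL (RP.three (c := c) D.adj hzw.1.symm hsI.2.1.symm hyO.2.1.ne.symm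
    (Ne.symm hsF.1) (Ne.symm hsF.2) ?_ ?_ ?_) (h.rich hsI.1) (k := k) ?_ hsF.1 ?_ (by omega) (by omega))
  · rw [D.col, hcw]; exact Ne.symm hα2
  · rw [D.col, hcs]; exact hbz.2.1
  · rw [hcw, hcs]; exact hzw.2
  · rw [hk0, show a - 1 + 1 + 1 = a + 1 by ring]; exact hyO.1
  · simp only [Finset.mem_insert, Finset.mem_singleton, not_or, D.col, hcw, hcs]
    exact ⟨D.ne.symm, Ne.symm hα1, hym⟩

lemma IsCore.final1 (h : IsCore G c d V m) [Nonempty W] {l : ℕ} (hL : 1000 * (10 * l + 10) ≤ d) (hl : 4 ≤ l)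
    (hl3 : (l : ZMod 3) = 1) (hno : ¬ HasRainbowCycle G c l) (hdeg : ∀ w, d ≤ (CS G c w).card)
    {κ : W → ZMod 3} (hκ : IsKap G c d V m 0 κ) (a : ZMod 3) (b b' : ℕ)
    (hb : 1000 * ((V a).filter fun v => DC G c m κ a v ≠ {b}).card ≤ 64 * d)
    (hb' : 1000 * ((V (a + 1)).filter fun v => DC G c m κ (a + 1) v ≠ {b'}).card ≤ 64 * d)
    (z : W) (hz : z ∈ V (a + 2)) (ht : Tight G c m κ (a + 2) z) : False := by
  have hs := h.size_lb (by omega) hdeg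
  have z23 : a + 2 + 1 = a := by clear * -; revert a; decide
  obtain ⟨k, rfl⟩ : ∃ k, l = k + 3 := ⟨l - 3, by omega⟩
  have hk0 : (k : ZMod 3) = 1 := by
    push_cast at hl3
    generalize (k : ZMod 3) = x at hl3 ⊢
    revert x; decide
  unfold Tight at ht
  rw [z23] at ht
  set Y0 := (V (a + 1)).filter fun v => DC G c m κ (a + 1) v = {b'} with hY0
  have hY0c : 1000 * Y0.card + 64 * d ≥ 999 * d := by
    have h1 := hs (a + 1)
    have h2 : Y0.card + ((V (a + 1)).filter fun v => DC G c m κ (a + 1) v ≠ {b'}).card = (V (a + 1)).card :=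
      Finset.card_filter_add_card_filter_not (s := V (a + 1)) (fun v => DC G c m κ (a + 1) v = {b'})
    omega
  have hw : ∀ y ∈ Y0, ∃ w, Dft G c d V m κ 0 (a + 1) y b' w := by
    intro y hy
    rw [hY0, Finset.mem_filter] at hy
    exact hκ.dft hy.1 (by rw [hy.2]; simp)
  choose! f hf using hw
  have hfk : ∀ y ∈ Y0, κ (f y) = a := by
    intro y hy
    rw [(hf y hy).kap]; ring
  have hfull : ∀ y ∈ Y0, Full G c d V m (a + 1) (f y) := by
    intro y hy
    have := (hf y hy).full
    rwa [sub_zero] at this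
  have L2 : ∀ y ∈ Y0, c s(z, f y) = b' ∨ c s(z, f y) = m y := by
    intro y hy
    by_contra hcon
    rw [not_or] at hcon
    have D := hf y hy
    have hsw : c s(f y, z) = c s(z, f y) := by rw [Sym2.eq_swap]
    have hyz : y ≠ z := by
      rintro rfl
      have e1 := hκ.1 _ _ hz
      have e2 := hκ.1 _ _ D.mem
      rw [e1] at e2
      clear * - e2
      revert a; decide
    refine hno (h.cyc hL (RP.two (c := c) D.adj (ht.1 _ (hfk y hy)).1.symm hyz ?_) (h.rich hz) (k := k)
      ?_ hyz.symm ?_ (by omega) (by omega))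
    · rw [D.col, hsw]; exact Ne.symm hcon.1
    · rw [z23, hk0]; exact D.mem
    · simp only [Finset.mem_insert, Finset.mem_singleton, not_or, D.col, hsw]
      exact ⟨D.ne.symm, Ne.symm hcon.2⟩
  -- those with the other color
  set Yb := Y0.filter fun y => c s(z, f y) = b' with hYb
  have hYbc : 1000 * Yb.card ≤ 31 * d := by
    rcases Finset.eq_empty_or_nonempty Yb with he | ⟨y0, hy0⟩
    · rw [he]; simp
    · rw [hYb, Finset.mem_filter] at hy0
      refine le_trans ?_ (h.full_compl (hfull y0 hy0.1))
      apply Nat.mul_le_mul_left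
      apply Finset.card_le_card
      intro y hy
      rw [hYb, Finset.mem_filter] at hy
      have hfe : f y = f y0 := ht.2 _ _ (hfk y hy.1) (hfk y0 hy0.1) (hy.2.trans hy0.2.symm)
      have D := hf y hy.1
      rw [Finset.mem_sdiff]
      refine ⟨D.mem, fun hO => ?_⟩
      have := mem_OO.1 hO
      rw [← hfe] at this
      apply D.ne
      rw [← D.col, Sym2.eq_swap]; exact this.2.2
  set Y := Y0.filter fun y => ¬ c s(z, f y) = b' with hY
  have hYc : Yb.card + Y.card = Y0.card := Finset.card_filter_add_card_filter_not (s := Y0) (fun y => c s(z, f y) = b')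
  have hinj : Set.InjOn f Y := by
    intro y hy y' hy' hff
    rw [Finset.mem_coe, hY, Finset.mem_filter] at hy hy'
    have e1 := (L2 y hy.1).resolve_left hy.2
    have e2 := (L2 y' hy'.1).resolve_left hy'.2
    rw [hff] at e1
    exact h.inj _ _ _ (hf y hy.1).mem (hf y' hy'.1).mem (e1.symm.trans e2)
  obtain ⟨R, hR, hRV⟩ := h.rest
  set Bad := R ∪ ((V a).filter fun v => DC G c m κ a v ≠ {b}) with hBad
  have hBadc := Finset.card_union_le R ((V a).filter fun v => DC G c m κ a v ≠ {b})
  rw [← hBad] at hBadc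
  have hYB : (Y.filter fun y => f y ∈ Bad).card ≤ Bad.card := by
    apply Finset.card_le_card_of_injOn f
    · intro y hy; exact (Finset.mem_filter.1 hy).2
    · intro y hy y' hy' hff
      exact hinj (Finset.mem_filter.1 hy).1 (Finset.mem_filter.1 hy').1 hff
  have hYV : Y ⊆ V (a + 1) := fun y hy =>
    (hf y (Finset.mem_filter.1 hy).1).mem
  obtain ⟨y, hy, hyF, hym⟩ := h.fresh Y hYV (Y.filter fun y => f y ∈ Bad) {b} (by
    rw [Finset.card_singleton]; omega)
  have hy0 : y ∈ Y0 := (Finset.mem_filter.1 hy).1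
  have hfy : f y ∉ Bad := fun hh => hyF (Finset.mem_filter.2 ⟨hy, hh⟩)
  rw [hBad, Finset.mem_union, not_or] at hfy
  have D := hf y hy0
  obtain ⟨i, hi⟩ := hRV _ hfy.1
  have hia : i = a := by rw [← hκ.1 _ _ hi, hfk y hy0]
  subst hia
  have hDC : DC G c m κ i (f y) = {b} := by
    by_contra hcon
    exact hfy.2 (Finset.mem_filter.2 ⟨hi, hcon⟩)
  have hbm : b ∈ DC G c m κ i (f y) := by rw [hDC]; simp
  rw [Finset.mem_singleton] at hym
  have ky := hκ.1 _ _ D.mem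
  by_cases hbb : b = b'
  · rw [mem_DC] at hbm
    refine hbm.2.2 y D.adj.symm ?_ ky
    rw [Sym2.eq_swap, D.col, hbb]
  · obtain ⟨w, D2⟩ := hκ.dft hi hbm
    have kw := D2.kap
    have hyw : y ≠ w := by
      rintro rfl
      rw [ky] at kw
      clear * - kw
      revert i; decide
    have hr := D2.full.rich
    rw [sub_zero] at hr
    refine hno (h.cyc hL (RP.two (c := c) D.adj D2.adj hyw ?_) hr (k := k)
      ?_ hyw.symm ?_ (by omega) (by omega))
    · rw [D.col, D2.col]; exact Ne.symm hbb
    · rw [hk0]; exact D.mem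
    · simp only [Finset.mem_insert, Finset.mem_singleton, not_or, D.col, D2.col]
      exact ⟨D.ne.symm, hym⟩

theorem IsCore.exact (h : IsCore G c d V m) [Nonempty W] {l : ℕ} (hL : 1000 * (10 * l + 10) ≤ d) (hl : 4 ≤ l)
    (hl2 : Even l) (hl3 : (l : ZMod 3) ≠ 0)
    (hdeg : ∀ w, d ≤ colorDeg G c w) (hn : Fintype.card W + 5 ≤ 3 * d) : HasRainbowCycle G c l := by
  classical
  by_contra hno
  have hl3' : (l : ZMod 3) = 1 ∨ (l : ZMod 3) = 2 := by
    generalize (l : ZMod 3) = x at hl3 ⊢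
    revert x; decide
  have hdeg' : ∀ w, d ≤ (CS G c w).card := fun w => by rw [← colorDeg_eq]; exact hdeg w
  obtain ⟨κ, hκ'⟩ := h.exists_kappa hL hl hl3' hno hdeg' _ rfl
  have hκ : IsKap G c d V m _ κ := hκ'
  set act : ZMod 3 → Prop := fun i => ∀ v ∈ V i, (DC G c m κ i v).Nonempty with hact
  have hmaj := fun i (hi : act i) => h.majority hL hl hl2 hl3' hno hdeg' rfl hκ i hi
  have hs := h.size_lb (by omega) hdeg'
  have hgen : ∀ i b, 1000 * ((V i).filter fun v => DC G c m κ i v ≠ {b}).card ≤ 64 * d →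
      ∃ v ∈ V i, DC G c m κ i v = {b} := by
    intro i b hb
    obtain ⟨x, hx, hxF, -⟩ := h.fresh (V i) (fun _ hx => hx) ((V i).filter fun v => DC G c m κ i v ≠ {b}) ∅
      (by have := hs i; rw [Finset.card_empty]; omega)
    rw [Finset.mem_filter] at hxF
    push Not at hxF
    exact ⟨x, hx, hxF hx⟩
  have hcount : (KK κ (0 + 1)).card + (KK κ (1 + 1)).card + (KK κ (2 + 1)).card + 5 ≤ 3 * d := by
    refine le_trans ?_ hn
    have : (Fintype.card W) = ∑ i : ZMod 3, (KK κ i).card := by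
      rw [← Finset.card_univ]
      unfold KK
      exact Finset.card_eq_sum_card_fiberwise (fun x _ => Finset.mem_coe.2 (Finset.mem_univ (κ x)))
    rw [this]
    have e : ∑ i : ZMod 3, (KK κ i).card = (KK κ 0).card + (KK κ 1).card + (KK κ 2).card :=
      Fin.sum_univ_three _
    rw [e, show (0 : ZMod 3) + 1 = 1 by decide, show (1 : ZMod 3) + 1 = 2 by decide,
      show (2 : ZMod 3) + 1 = 0 by decide]
    omega
  have hc := cnt act (fun i => (KK κ (i + 1)).card) d hcount ?_ ?_
  · obtain ⟨⟨a, ha1, ha2, ha3⟩, ⟨a', ha1', ha2', ha3'⟩⟩ := hc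
    rcases hl3' with hl1 | hl1
    · obtain ⟨b, hb⟩ := hmaj a' ha1'
      obtain ⟨b', hb'⟩ := hmaj _ ha2'
      have hq : (l : ZMod 3) * (l - 1) = 0 := by rw [hl1]; decide
      rw [hq] at hκ
      have htz : ∃ z ∈ V (a' + 2), Tight G c m κ (a' + 2) z := by
        rcases ha3' with ⟨h1, h2⟩ | ⟨h1, h2⟩
        · obtain ⟨b2, hb2⟩ := hmaj _ h1
          obtain ⟨z, hz, hzD⟩ := hgen _ _ hb2
          refine ⟨z, hz, (tight_or (i := a' + 2)).2 ?_⟩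
          rw [hzD, Finset.card_singleton]
          have := hdeg' z
          omega
        · simp only [hact] at h1
          push Not at h1
          obtain ⟨z, hz, hzD⟩ := h1
          refine ⟨z, hz, (tight_or (i := a' + 2)).2 ?_⟩
          rw [hzD, Finset.card_empty]
          have := hdeg' z
          omega
      obtain ⟨z, hz, hzt⟩ := htz
      exact h.final1 hL hl hl1 hno hdeg' hκ a' b b' hb hb' z hz hzt
    · obtain ⟨b, hb⟩ := hmaj a ha1
      obtain ⟨b', hb'⟩ := hmaj _ ha2
      have hq : (l : ZMod 3) * (l - 1) = 2 := by rw [hl1]; decide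
      rw [hq] at hκ
      have h8 : 8 ≤ l := by
        by_contra hlt
        obtain ⟨r, hr⟩ := hl2
        have : l = 4 ∨ l = 6 := by omega
        rcases this with rfl | rfl
        · revert hl1; decide
        · revert hl1; decide
      refine h.final2 hL h8 hl1 hno hdeg' hκ a b b' hb hb' ?_
      intro z hz hzD
      refine (tight_or (i := a)).2 ?_
      rw [hzD, Finset.card_singleton]
      have := hdeg' z
      omega
  · intro i hi
    obtain ⟨b, hb⟩ := hmaj i hi
    obtain ⟨z, hz, hzD⟩ := hgen _ _ hb
    have h1 := (tight_or (G := G) (c := c) (m := m) (κ := κ) (i := i) (z := z)).1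
    rw [hzD, Finset.card_singleton] at h1
    have := hdeg' z
    omega
  · intro i hi
    simp only [hact] at hi
    push Not at hi
    obtain ⟨z, hz, hzD⟩ := hi
    have h1 := (tight_or (G := G) (c := c) (m := m) (κ := κ) (i := i) (z := z)).1
    rw [hzD, Finset.card_empty] at h1
    have := hdeg' z
    omega
end Rb

set_option linter.unusedSectionVars false
namespace Rb
variable {W : Type} [Fintype W] [DecidableEq W]
  {G : SimpleGraph W} {c : Sym2 W → ℕ}

lemma rc_nat (y : ℕ → W) (k : ℕ) (hk : 2 ≤ k) (hinj : ∀ i ≤ k, ∀ j ≤ k, y i = y j → i = j)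
    (hadj : ∀ i < k, G.Adj (y i) (y (i + 1))) (hadjk : G.Adj (y k) (y 0))
    (hc : ∀ i < k, ∀ j < k, c s(y i, y (i + 1)) = c s(y j, y (j + 1)) → i = j)
    (hck : ∀ i < k, c s(y i, y (i + 1)) ≠ c s(y k, y 0)) : HasRainbowCycle G c (k + 1) := by
  have main : ∀ r ≤ k, RP G c (y r) (y 0) r ((range (r + 1)).image y)
      ((range r).image fun j => c s(y j, y (j + 1))) := by
    intro r
    induction r with
    | zero => intro _; simpa using RP.nil G c (y 0)
    | succ r ih =>
      intro hr
      have h1 := (ih (by omega)).cons (hadj r (by omega)).symm ?_ ?_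
      · convert h1 using 1
        · rw [Finset.range_add_one (n := r + 1), Finset.image_insert]
        · rw [Finset.range_add_one, Finset.image_insert, Sym2.eq_swap (a := y r)]
      · simp only [Finset.mem_image, Finset.mem_range, not_exists, not_and]
        intro j hj he
        have := hinj j (by omega) (r + 1) (by omega) he
        omega
      · simp only [Finset.mem_image, Finset.mem_range, not_exists, not_and]
        intro j hj he
        rw [Sym2.eq_swap (a := y (r + 1))] at he
        have := hc j (by omega) r (by omega) he
        omega
  have h1 := main k le_rfl
  refine h1.cycle (RP.one (c := c) hadjk.symm) ?_ ?_ hadjk.ne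
  · intro x _ hx
    simp at hx; tauto
  · rw [Finset.disjoint_singleton_right]
    simp only [Finset.mem_image, Finset.mem_range, not_exists, not_and]
    intro j hj he
    rw [Sym2.eq_swap (a := y 0)] at he
    exact hck j hj he

lemma rc_fin {k : ℕ} (x : Fin (k + 1) → W) (hk : 2 ≤ k) (hinj : Function.Injective x)
    (hadj : ∀ j, G.Adj (x j) (x (j + 1)))
    (hc : ∀ i j, c s(x i, x (i + 1)) = c s(x j, x (j + 1)) → i = j) : HasRainbowCycle G c (k + 1) := by
  have e1 : ∀ i : ℕ, Fin.ofNat (k + 1) (i + 1) = Fin.ofNat (k + 1) i + 1 := by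
    intro i; apply Fin.ext
    rw [Fin.val_add, Fin.val_one']; simp [Fin.ofNat]
  have e2 : Fin.ofNat (k + 1) k + 1 = Fin.ofNat (k + 1) 0 := by
    rw [← e1]; apply Fin.ext; simp [Fin.ofNat]
  have e3 : ∀ i ≤ k, ∀ j ≤ k, Fin.ofNat (k + 1) i = Fin.ofNat (k + 1) j → i = j := by
    intro i hi j hj h
    have := congrArg Fin.val h
    simp only [Fin.ofNat] at this
    rwa [Nat.mod_eq_of_lt (by omega), Nat.mod_eq_of_lt (by omega)] at this
  refine rc_nat (fun i => x (Fin.ofNat (k + 1) i)) k hk ?_ ?_ ?_ ?_ ?_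
  · intro i hi j hj h
    exact e3 i hi j hj (hinj h)
  · intro i hi
    simp only [e1]; exact hadj _
  · rw [← e2]; exact hadj _
  · intro i hi j hj h
    simp only [e1] at h
    exact e3 i (by omega) j (by omega) (hc _ _ h)
  · intro i hi h
    simp only [e1] at h
    rw [← e2] at h
    have := e3 i (by omega) k (by omega) (hc _ _ h)
    omega

lemma card_det {ι : Type} [Fintype ι] [DecidableEq ι] (T : Finset (ι → W)) (a : ι)
    (h : ∀ x ∈ T, ∀ y ∈ T, (∀ i, i ≠ a → x i = y i) → x = y) :
    T.card ≤ Fintype.card W ^ (Fintype.card ι - 1) := by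
  have h1 : T.card ≤ (univ : Finset ({i // i ≠ a} → W)).card := by
    apply Finset.card_le_card_of_injOn (fun x i => x i.1)
    · intro x _; exact Finset.mem_coe.2 (Finset.mem_univ _)
    · intro x hx y hy hxy
      exact h x hx y hy (fun i hi => congrFun hxy ⟨i, hi⟩)
  refine h1.trans (le_of_eq ?_)
  rw [Finset.card_univ, Fintype.card_fun, Fintype.card_subtype_compl, Fintype.card_subtype_eq]

lemma card_pair {ι : Type} [Fintype ι] [DecidableEq ι] (M : Finset (W × W)) (a b : ι) (hab : a ≠ b) :
    (univ.filter fun x : ι → W => (x a, x b) ∈ M).card ≤ M.card * Fintype.card W ^ (Fintype.card ι - 2) := by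
  have h1 : (univ.filter fun x : ι → W => (x a, x b) ∈ M).card ≤
      (M ×ˢ (univ : Finset ({i // ¬ (i = a ∨ i = b)} → W))).card := by
    apply Finset.card_le_card_of_injOn (fun x => ((x a, x b), fun i => x i.1))
    · intro x hx
      have := (Finset.mem_filter.1 (Finset.mem_coe.1 hx)).2
      simp [this]
    · intro x hx y hy hxy
      simp only [Prod.mk.injEq] at hxy
      funext i
      by_cases hi : i = a
      · rw [hi]; exact hxy.1.1
      by_cases hi' : i = b
      · rw [hi']; exact hxy.1.2
      · exact congrFun hxy.2 ⟨i, by tauto⟩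
  refine h1.trans (le_of_eq ?_)
  rw [Finset.card_product, Finset.card_univ, Fintype.card_fun, Fintype.card_subtype_compl,
    Fintype.card_subtype]
  congr 3
  have : (univ.filter fun x => x = a ∨ x = b) = {a, b} := by ext; simp
  rw [this, Finset.card_pair hab]

/-- tail of the `j`-th cyclic edge with flips `σ` -/
def tl {k : ℕ} (σ : Fin (k + 1) → Bool) (j : Fin (k + 1)) : Fin (k + 1) := if σ j then j + 1 else j
/-- head of the `j`-th cyclic edge with flips `σ` -/
def hd {k : ℕ} (σ : Fin (k + 1) → Bool) (j : Fin (k + 1)) : Fin (k + 1) := if σ j then j else j + 1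

lemma fin_succ_ne {k : ℕ} (hk : 2 ≤ k) (j : Fin (k + 1)) : j ≠ j + 1 := by
  intro h
  have : (1 : Fin (k + 1)) = 0 := by simpa using h
  rw [Fin.ext_iff] at this
  simp at this
  omega

lemma fin_two_ne {k : ℕ} (hk : 2 ≤ k) (j : Fin (k + 1)) : j ≠ j + 1 + 1 := by
  intro h
  have h2 : (1 : Fin (k + 1)) + 1 = 0 := by rw [add_assoc] at h; simpa using h
  rw [Fin.ext_iff, Fin.val_add] at h2
  simp only [Fin.val_one', Fin.val_zero] at h2
  rw [Nat.mod_eq_of_lt (show 1 < k + 1 by omega), Nat.mod_eq_of_lt (show 1 + 1 < k + 1 by omega)] at h2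
  omega

/-- The selection -/
structure IsSel (G : SimpleGraph W) (c : Sym2 W → ℕ) (S : W → Finset W) : Prop where
  adj : ∀ v u, u ∈ S v → G.Adj v u
  inj : ∀ v u u', u ∈ S v → u' ∈ S v → c s(v, u) = c s(v, u') → u = u'

lemma count {S : W → Finset W} (hS : IsSel G c S) {k : ℕ} (hk : 2 ≤ k)
    (hno : ¬ HasRainbowCycle G c (k + 1)) (σ : Fin (k + 1) → Bool) (T : Finset (Fin (k + 1) → W))
    (hT : ∀ x ∈ T, ∀ j, x (hd σ j) ∈ S (x (tl σ j)))
    (hT2 : ∀ x ∈ T, ∀ j j', j ≠ j' → hd σ j = hd σ j' →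
      c s(x (tl σ j), x (hd σ j)) ≠ c s(x (tl σ j'), x (hd σ j'))) :
    T.card ≤ 2 * (k + 1) ^ 2 * Fintype.card W ^ k := by
  set P := (univ : Finset (Fin (k + 1) × Fin (k + 1))).filter fun p => p.1 ≠ p.2 with hP
  have hPc : P.card ≤ (k + 1) ^ 2 := by
    refine (Finset.card_filter_le _ _).trans ?_
    rw [Finset.card_univ, Fintype.card_prod, Fintype.card_fin]
    exact le_of_eq (by ring)
  set A : Fin (k + 1) × Fin (k + 1) → Finset (Fin (k + 1) → W) := fun p => T.filter fun x => x p.1 = x p.2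
  set B : Fin (k + 1) × Fin (k + 1) → Finset (Fin (k + 1) → W) := fun p => T.filter fun x =>
    c s(x (tl σ p.1), x (hd σ p.1)) = c s(x (tl σ p.2), x (hd σ p.2)) with hB
  have hht : ∀ j, hd σ j ≠ tl σ j := by
    intro j; unfold hd tl
    split_ifs
    · exact fin_succ_ne hk j
    · exact (fin_succ_ne hk j).symm
  have hedge : ∀ (x : Fin (k + 1) → W) j, s(x (tl σ j), x (hd σ j)) = s(x j, x (j + 1)) := by
    intro x j; unfold hd tl
    split_ifs
    · exact Sym2.eq_swap
    · rfl
  have hsub : T ⊆ P.biUnion A ∪ P.biUnion B := by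
    intro x hx
    rw [Finset.mem_union, Finset.mem_biUnion, Finset.mem_biUnion]
    by_contra hcon
    rw [not_or] at hcon
    apply hno
    apply rc_fin x hk
    · intro a b hab
      by_contra hne
      exact hcon.1 ⟨(a, b), Finset.mem_filter.2 ⟨Finset.mem_univ _, hne⟩, Finset.mem_filter.2 ⟨hx, hab⟩⟩
    · intro j
      have := hS.adj _ _ (hT x hx j)
      unfold hd tl at this
      split_ifs at this
      · exact this.symm
      · exact this
    · intro a b hab
      by_contra hne
      refine hcon.2 ⟨(a, b), Finset.mem_filter.2 ⟨Finset.mem_univ _, hne⟩, Finset.mem_filter.2 ⟨hx, ?_⟩⟩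
      simp only [hedge]; exact hab
  have hA : ∀ p ∈ P, (A p).card ≤ Fintype.card W ^ k := by
    rintro ⟨a, b⟩ hp
    have hne : a ≠ b := (Finset.mem_filter.1 hp).2
    have := card_det (A (a, b)) a (by
      intro x hx y hy hxy
      have h1 := (Finset.mem_filter.1 hx).2
      have h2 := (Finset.mem_filter.1 hy).2
      simp only at h1 h2
      funext i
      by_cases hi : i = a
      · rw [hi, h1, h2]; exact hxy b hne.symm
      · exact hxy i hi)
    simpa using this
  have hdet : ∀ j j', j ≠ j' → hd σ j ≠ hd σ j' → hd σ j ≠ tl σ j' → ∀ x ∈ B (j, j'), ∀ y ∈ B (j, j'),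
      (∀ i, i ≠ hd σ j → x i = y i) → x = y := by
    intro j j' hne h1 h2 x hx y hy hxy
    obtain ⟨hx1, hx2⟩ := Finset.mem_filter.1 hx
    obtain ⟨hy1, hy2⟩ := Finset.mem_filter.1 hy
    simp only at hx2 hy2
    have e1 := hxy _ (Ne.symm h1)
    have e2 := hxy _ (Ne.symm h2)
    have e3 := hxy _ (Ne.symm (hht j))
    have hx3 := hT x hx1 j
    have hy3 := hT y hy1 j
    rw [e1, e2, ← hy2, e3] at hx2
    rw [e3] at hx3
    have := hS.inj _ _ _ hx3 hy3 hx2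
    funext i
    by_cases hi : i = hd σ j
    · rw [hi]; exact this
    · exact hxy i hi
  have hBc : ∀ p ∈ P, (B p).card ≤ Fintype.card W ^ k := by
    rintro ⟨a, b⟩ hp
    have hne : a ≠ b := (Finset.mem_filter.1 hp).2
    by_cases h1 : hd σ a = hd σ b
    · have : B (a, b) = ∅ := by
        rw [Finset.eq_empty_iff_forall_notMem]
        intro x hx
        obtain ⟨hx1, hx2⟩ := Finset.mem_filter.1 hx
        exact hT2 x hx1 a b hne h1 hx2
      rw [this]; simp
    · by_cases h2 : hd σ a = tl σ b
      · have h3 : hd σ b ≠ tl σ a := by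
          intro h3
          unfold hd tl at h2 h3
          split_ifs at h2 h3
          · exact hne (by rw [h2] at h3 ⊢; exact absurd h3 (fin_two_ne hk b))
          · exact hne h2
          · exact hne (by simpa using h2)
          · rw [← h2] at h3
            exact fin_two_ne hk a h3.symm
        have hsw : B (a, b) = B (b, a) := by
          ext x; simp only [hB, Finset.mem_filter, eq_comm]
        rw [hsw]
        have := card_det (B (b, a)) _ (hdet b a hne.symm (Ne.symm h1) h3)
        simpa using this
      · have := card_det (B (a, b)) _ (hdet a b hne h1 h2)
        simpa using this
  have h0 := Finset.card_le_card hsub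
  have h1 := Finset.card_union_le (P.biUnion A) (P.biUnion B)
  have h2 : (P.biUnion A).card ≤ P.card * Fintype.card W ^ k := Finset.card_biUnion_le_card_mul _ _ _ hA
  have h3 : (P.biUnion B).card ≤ P.card * Fintype.card W ^ k := Finset.card_biUnion_le_card_mul _ _ _ hBc
  have h4 : P.card * Fintype.card W ^ k ≤ (k + 1) ^ 2 * Fintype.card W ^ k := Nat.mul_le_mul_right _ hPc
  calc T.card ≤ (k + 1) ^ 2 * Fintype.card W ^ k + (k + 1) ^ 2 * Fintype.card W ^ k := by omega
    _ = _ := by ring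

/-- lower bound for the number of tuples minus the bad ones -/
lemma count_lower {S : W → Finset W} (hS : IsSel G c S) {k : ℕ} (hk : 2 ≤ k)
    (hno : ¬ HasRainbowCycle G c (k + 1)) (σ : Fin (k + 1) → Bool) (X : Finset (Fin (k + 1) → W))
    (M : Finset (W × W))
    (hM : ∀ x ∈ X, ∀ j, x (hd σ j) ∈ S (x (tl σ j)) ∨ (x (tl σ j), x (hd σ j)) ∈ M)
    (hT2 : ∀ x ∈ X, ∀ j j', j ≠ j' → hd σ j = hd σ j' →
      c s(x (tl σ j), x (hd σ j)) ≠ c s(x (tl σ j'), x (hd σ j'))) :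
    X.card ≤ (k + 1) * (M.card * Fintype.card W ^ (k - 1)) + 2 * (k + 1) ^ 2 * Fintype.card W ^ k := by
  set T := X.filter fun x => ∀ j, x (hd σ j) ∈ S (x (tl σ j)) with hTdef
  have hht : ∀ j, hd σ j ≠ tl σ j := by
    intro j; unfold hd tl
    split_ifs
    · exact fin_succ_ne hk j
    · exact (fin_succ_ne hk j).symm
  have h1 := count hS hk hno σ T (fun x hx => (Finset.mem_filter.1 hx).2)
    (fun x hx => hT2 x (Finset.mem_filter.1 hx).1)
  have hsub : X ⊆ (univ : Finset (Fin (k + 1))).biUnion (fun j =>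
      univ.filter fun x : Fin (k + 1) → W => (x (tl σ j), x (hd σ j)) ∈ M) ∪ T := by
    intro x hx
    by_cases h : ∀ j, x (hd σ j) ∈ S (x (tl σ j))
    · exact Finset.mem_union_right _ (Finset.mem_filter.2 ⟨hx, h⟩)
    · push Not at h
      obtain ⟨j, hj⟩ := h
      apply Finset.mem_union_left
      rw [Finset.mem_biUnion]
      exact ⟨j, Finset.mem_univ _, Finset.mem_filter.2 ⟨Finset.mem_univ _, (hM x hx j).resolve_left hj⟩⟩
  have h2 := Finset.card_le_card hsub
  have h3 := Finset.card_union_le ((univ : Finset (Fin (k + 1))).biUnion (fun j =>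
      univ.filter fun x : Fin (k + 1) → W => (x (tl σ j), x (hd σ j)) ∈ M)) T
  have h4 : ((univ : Finset (Fin (k + 1))).biUnion (fun j =>
      univ.filter fun x : Fin (k + 1) → W => (x (tl σ j), x (hd σ j)) ∈ M)).card ≤
      (univ : Finset (Fin (k + 1))).card * (M.card * Fintype.card W ^ (k - 1)) := by
    apply Finset.card_biUnion_le_card_mul
    intro j _
    have := card_pair M (tl σ j) (hd σ j) (hht j).symm
    simpa using this
  rw [Finset.card_univ, Fintype.card_fin] at h4
  omega
end Rb

set_option linter.unusedSectionVars false
namespace Rb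

open Matrix in
lemma frob_trace {α β : Type} [Fintype α] [Fintype β] (M : Matrix α β ℂ) :
    ((∑ i, ∑ j, ‖M i j‖ ^ 2 : ℝ) : ℂ) = (M * Mᴴ).trace := by
  push_cast
  simp only [Matrix.trace, Matrix.diag, Matrix.mul_apply, Matrix.conjTranspose_apply]
  refine Finset.sum_congr rfl fun i _ => Finset.sum_congr rfl fun j _ => ?_
  rw [← Complex.mul_conj']
  rfl

open Matrix in
lemma frob_conj {α β : Type} [Fintype α] [Fintype β] [DecidableEq α] [DecidableEq β]
    (U : Matrix α β ℂ) (h1 : Uᴴ * U = 1) (M : Matrix β β ℂ) :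
    (∑ i, ∑ j, ‖(U * M * Uᴴ) i j‖ ^ 2 : ℝ) = ∑ i, ∑ j, ‖M i j‖ ^ 2 := by
  have h : ((∑ i, ∑ j, ‖(U * M * Uᴴ) i j‖ ^ 2 : ℝ) : ℂ) = ((∑ i, ∑ j, ‖M i j‖ ^ 2 : ℝ) : ℂ) := by
    rw [frob_trace, frob_trace]
    simp only [Matrix.conjTranspose_mul, Matrix.conjTranspose_conjTranspose]
    calc (U * M * Uᴴ * (U * (Mᴴ * Uᴴ))).trace = (U * (M * ((Uᴴ * U) * (Mᴴ * Uᴴ)))).trace := by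
          simp only [Matrix.mul_assoc]
      _ = (U * (M * Mᴴ * Uᴴ)).trace := by rw [h1, Matrix.one_mul, Matrix.mul_assoc]
      _ = (M * Mᴴ * (Uᴴ * U)).trace := by rw [Matrix.trace_mul_comm, Matrix.mul_assoc]
      _ = _ := by rw [h1, Matrix.mul_one]
  exact_mod_cast h

open Matrix in
lemma blocks_pow {n : ℕ} (z : Matrix Unit Unit ℂ) (b : Matrix Unit (Fin n) ℂ) (D : Matrix (Fin n) (Fin n) ℂ) (k : ℕ) :
    ∃ b', (fromBlocks z b 0 D) ^ k = fromBlocks (z ^ k) b' 0 (D ^ k) := by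
  induction k with
  | zero => exact ⟨0, by simp [← fromBlocks_one]⟩
  | succ k ih =>
    obtain ⟨b', hb⟩ := ih
    exact ⟨_, by rw [pow_succ, hb, fromBlocks_multiply]; simp [pow_succ]; rfl⟩

lemma unit_pow (z : Matrix Unit Unit ℂ) (k : ℕ) : (z ^ k) () () = z () () ^ k := by
  induction k with
  | zero => simp
  | succ k ih => rw [pow_succ, Matrix.mul_apply]; simp [ih, pow_succ]

open Matrix in
lemma schur_step {ι : Type} [Fintype ι] [DecidableEq ι] {n : ℕ} (hn : Fintype.card ι = n + 1)
    (B : Matrix ι ι ℂ) : ∃ (U : Matrix ι (Unit ⊕ Fin n) ℂ) (z : Matrix Unit Unit ℂ) (b : Matrix Unit (Fin n) ℂ)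
      (D : Matrix (Fin n) (Fin n) ℂ), Uᴴ * U = 1 ∧ U * Uᴴ = 1 ∧ B = U * fromBlocks z b 0 D * Uᴴ := by
  have : Nonempty ι := Fintype.card_pos_iff.1 (by omega)
  obtain ⟨v, z, hv0, hv⟩ : ∃ (v : ι → ℂ) (z : ℂ), v ≠ 0 ∧ B *ᵥ v = z • v := by
    obtain ⟨z, hz⟩ := Module.End.exists_eigenvalue (Matrix.toLin' B)
    obtain ⟨v, hv⟩ := hz.exists_hasEigenvector
    exact ⟨v, z, hv.2, by simpa using hv.apply_eq_smul⟩
  set v1 : EuclideanSpace ℂ ι := WithLp.toLp 2 v with hv1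
  have hv10 : v1 ≠ 0 := by
    intro h; apply hv0
    have := congrArg WithLp.ofLp h
    simpa [hv1] using this
  set v2 : EuclideanSpace ℂ ι := ((‖v1‖⁻¹ : ℝ) : ℂ) • v1 with hv2
  have hnorm : ‖v2‖ = 1 := by
    rw [hv2, norm_smul]
    simp [norm_ne_zero_iff.2 hv10]
  have horth : Orthonormal ℂ (({Sum.inl ()} : Set (Unit ⊕ Fin n)).domRestrict (fun _ => v2)) := by
    constructor
    · intro i; exact hnorm
    · rintro ⟨i, hi⟩ ⟨j, hj⟩ hij
      exact absurd (Subtype.ext ((Set.mem_singleton_iff.1 hi).trans (Set.mem_singleton_iff.1 hj).symm)) hij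
  obtain ⟨b, hb⟩ := horth.exists_orthonormalBasis_extension_of_card_eq (by simp [hn, add_comm])
  have hb1 : b (Sum.inl ()) = v2 := hb _ rfl
  set U : Matrix ι (Unit ⊕ Fin n) ℂ := Matrix.of fun i j => b j i with hU
  have h1 : Uᴴ * U = 1 := by
    ext i j
    have := (orthonormal_iff_ite.1 b.orthonormal) i j
    rw [Matrix.mul_apply, Matrix.one_apply, ← this, PiLp.inner_apply]
    refine Finset.sum_congr rfl fun x _ => ?_
    simp [hU, Matrix.conjTranspose_apply, mul_comm]
  have h2 : U * Uᴴ = 1 := by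
    rw [Matrix.mul_eq_one_comm_of_card_eq]
    · exact h1
    · simp [hn, add_comm]
  have hcol : ∀ x, (B * U) x (Sum.inl ()) = z * U x (Sum.inl ()) := by
    intro x
    have e := congrFun hv x
    simp only [Matrix.mulVec, dotProduct, Pi.smul_apply, smul_eq_mul] at e
    simp only [Matrix.mul_apply, hU, Matrix.of_apply, hb1, hv2, hv1, PiLp.smul_apply, smul_eq_mul]
    rw [show ∀ q : ℂ, z * (q * v x) = q * (z * v x) from fun q => by ring, ← e, Finset.mul_sum]
    exact Finset.sum_congr rfl fun y _ => by ring
  set C := Uᴴ * B * U with hC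
  have hC1 : ∀ i, C i (Sum.inl ()) = z * (1 : Matrix (Unit ⊕ Fin n) (Unit ⊕ Fin n) ℂ) i (Sum.inl ()) := by
    intro i
    rw [hC, Matrix.mul_assoc, Matrix.mul_apply, ← h1, Matrix.mul_apply, Finset.mul_sum]
    refine Finset.sum_congr rfl fun x _ => ?_
    rw [hcol]; ring
  refine ⟨U, C.toBlocks₁₁, C.toBlocks₁₂, C.toBlocks₂₂, h1, h2, ?_⟩
  have h21 : C.toBlocks₂₁ = 0 := by
    ext i j
    have := hC1 (Sum.inr i)
    simpa [Matrix.toBlocks₂₁] using this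
  rw [← h21, Matrix.fromBlocks_toBlocks, hC]
  calc B = (U * Uᴴ) * B * (U * Uᴴ) := by rw [h2]; simp
    _ = _ := by simp only [Matrix.mul_assoc]

open Matrix in
lemma schur : ∀ (n : ℕ) (ι : Type) [Fintype ι] [DecidableEq ι], Fintype.card ι = n → ∀ B : Matrix ι ι ℂ,
    ∃ μ : Fin n → ℂ, (∀ z : ℂ, det (z • (1 : Matrix ι ι ℂ) - B) = ∏ i, (z - μ i)) ∧
      (∀ k, trace (B ^ k) = ∑ i, μ i ^ k) ∧
      ∀ k, ∑ i, ‖μ i‖ ^ (2 * k) ≤ ∑ i, ∑ j, ‖(B ^ k) i j‖ ^ 2 := by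
  intro n
  induction n with
  | zero =>
    intro ι _ _ h B
    have : IsEmpty ι := Fintype.card_eq_zero_iff.1 h
    exact ⟨Fin.elim0, by simp, by simp [Matrix.trace], by simp⟩
  | succ n ih =>
    intro ι _ _ h B
    obtain ⟨U, z, b, D, h1, h2, hB⟩ := schur_step h B
    obtain ⟨μ, m1, m2, m3⟩ := ih (Fin n) (by simp) D
    have hpow : ∀ k, B ^ k = U * (fromBlocks z b 0 D) ^ k * Uᴴ := by
      intro k
      induction k with
      | zero => simp [h2]
      | succ k ihk =>
        rw [pow_succ, ihk, hB, pow_succ]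
        calc U * fromBlocks z b 0 D ^ k * Uᴴ * (U * fromBlocks z b 0 D * Uᴴ)
            = U * fromBlocks z b 0 D ^ k * (Uᴴ * U) * fromBlocks z b 0 D * Uᴴ := by simp only [Matrix.mul_assoc]
          _ = _ := by rw [h1]; simp only [Matrix.mul_assoc, Matrix.one_mul]
    refine ⟨Fin.cons (z () ()) μ, ?_, ?_, ?_⟩
    · intro w
      have e : w • (1 : Matrix ι ι ℂ) - B = U * (w • 1 - fromBlocks z b 0 D) * Uᴴ := by
        rw [Matrix.mul_sub, Matrix.sub_mul, ← hB]
        congr 1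
        simp [h2]
      rw [e, Matrix.det_conj_of_mul_eq_one h2 h1, Fin.prod_univ_succ]
      have e2 : w • (1 : Matrix (Unit ⊕ Fin n) (Unit ⊕ Fin n) ℂ) - fromBlocks z b 0 D
          = fromBlocks (w • 1 - z) (-b) 0 (w • 1 - D) := by
        rw [← fromBlocks_one, fromBlocks_smul, sub_eq_add_neg, fromBlocks_neg, fromBlocks_add]
        simp [sub_eq_add_neg]
      rw [e2, det_fromBlocks_zero₂₁, m1]
      simp
    · intro k
      obtain ⟨b', hb'⟩ := blocks_pow z b D k
      rw [hpow, Matrix.trace_mul_comm, ← Matrix.mul_assoc, h1, Matrix.one_mul, hb', Fin.sum_univ_succ,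
        show trace (fromBlocks (z ^ k) b' 0 (D ^ k)) = (z ^ k) () () + trace (D ^ k) by simp [Matrix.trace], m2]
      simp [unit_pow]
    · intro k
      obtain ⟨b', hb'⟩ := blocks_pow z b D k
      rw [hpow, frob_conj U h1, hb', Fin.sum_univ_succ]
      simp only [Fintype.sum_sum_type, fromBlocks_apply₁₁, fromBlocks_apply₁₂, fromBlocks_apply₂₁, fromBlocks_apply₂₂,
        Fin.cons_zero, Fin.cons_succ, Finset.univ_unique, Finset.sum_singleton, PUnit.default_eq_unit]
      have e1 : ‖(z ^ k) () ()‖ ^ 2 = ‖z () ()‖ ^ (2 * k) := by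
        rw [unit_pow, norm_pow, ← pow_mul, mul_comm]
      have e2 := m3 k
      have e3 : 0 ≤ ∑ x, ‖b' () x‖ ^ 2 := by positivity
      have e4 : 0 ≤ ∑ x : Fin n, ‖(0 : Matrix (Fin n) Unit ℂ) x ()‖ ^ 2 := by positivity
      rw [Finset.sum_add_distrib, e1]
      linarith
end Rb

set_option linter.unusedSectionVars false
namespace Rb

lemma sum_sq_half {ι : Type} (R : Finset ι) (y : ι → ℝ) (h : ∑ i ∈ R, y i = 0) :
    ∑ i ∈ R, y i ^ 2 ≤ (∑ i ∈ R, |y i|) ^ 2 / 2 := by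
  classical
  set g := ∑ i ∈ R, |y i| with hg
  have h1 : ∀ i ∈ R, |y i| ≤ g / 2 := by
    intro i hi
    have e1 := Finset.add_sum_erase R y hi
    have e2 := Finset.add_sum_erase R (fun i => |y i|) hi
    have e3 := Finset.abs_sum_le_sum_abs y (R.erase i)
    have e4 : ∑ x ∈ R.erase i, y x = - y i := by linarith
    rw [e4, abs_neg] at e3
    linarith
  calc ∑ i ∈ R, y i ^ 2 ≤ ∑ i ∈ R, g / 2 * |y i| := by
        apply Finset.sum_le_sum
        intro i hi
        rw [← sq_abs]
        nlinarith [h1 i hi, abs_nonneg (y i)]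
    _ = g ^ 2 / 2 := by rw [← Finset.mul_sum]; ring

lemma sum_abs_sq {ι : Type} (R : Finset ι) (w : ι → ℂ) :
    (∑ i ∈ R, |(w i).re|) ^ 2 + (∑ i ∈ R, |(w i).im|) ^ 2 ≤ (∑ i ∈ R, ‖w i‖) ^ 2 := by
  set Z : ι → ℂ := fun i => ⟨|(w i).re|, |(w i).im|⟩ with hZ
  have h1 : ∀ i, ‖Z i‖ = ‖w i‖ := by
    intro i
    rw [Complex.norm_eq_sqrt_sq_add_sq, Complex.norm_eq_sqrt_sq_add_sq]
    simp [hZ]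
  have h2 : ‖∑ i ∈ R, Z i‖ ≤ ∑ i ∈ R, ‖w i‖ := by
    simp only [← h1]; exact norm_sum_le _ _
  have h3 : ‖∑ i ∈ R, Z i‖ ^ 2 = (∑ i ∈ R, |(w i).re|) ^ 2 + (∑ i ∈ R, |(w i).im|) ^ 2 := by
    rw [Complex.sq_norm, Complex.normSq_apply, Complex.re_sum, Complex.im_sum]
    simp only [hZ]; ring
  rw [← h3]
  exact pow_le_pow_left₀ (norm_nonneg _) h2 2

/-- the purely real core -/
lemma num_core {ε a b t p P : ℝ} (hε : 0 < ε) (hε1 : ε ≤ 1 / 10) (ha : 0 ≤ a) (ha1 : a ≤ ε ^ 2 / 100)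
    (hb : 0 ≤ b) (hb1 : b ≤ ε ^ 2 / 100) (hp : 0 ≤ p) (hP : 0 ≤ P) (ht : -b ≤ t) (ht1 : t ≤ 1 - P)
    (h1 : p ^ 2 + P ^ 2 / 2 - b ≤ t ^ 2) (h2 : 1 - a ≤ p + P) : 1 - ε ≤ t := by
  have hεε : ε ^ 2 ≤ 1 / 100 := by nlinarith
  have ha2 : a ≤ 1 / 10000 := by linarith
  have hb2 : b ≤ 1 / 10000 := by linarith
  have hcs : (p + P) ^ 2 ≤ 3 * (p ^ 2 + P ^ 2 / 2) := by nlinarith [sq_nonneg (p - P / 2)]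
  have hsq : (1 - a) ^ 2 ≤ (p + P) ^ 2 := by apply pow_le_pow_left₀ <;> linarith
  have ht0 : 0 ≤ t := by
    by_contra h
    push Not at h
    have q : t ^ 2 ≤ b ^ 2 := by nlinarith
    have q1 : b ^ 2 ≤ b := by nlinarith
    have q2 : (9 / 10) ^ 2 ≤ (1 - a) ^ 2 := by apply pow_le_pow_left₀ <;> linarith
    linarith
  have ht2 : t ^ 2 ≤ (1 - P) ^ 2 := pow_le_pow_left₀ ht0 ht1 2
  have hPa : P ≤ 1 - a := by
    by_contra h
    push Not at h
    have q : t ^ 2 ≤ a ^ 2 := by apply pow_le_pow_left₀ ht0; linarith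
    have q1 : a ^ 2 ≤ a := by nlinarith
    have q2 : (9 / 10) ^ 2 ≤ P ^ 2 := by apply pow_le_pow_left₀ <;> linarith
    have q3 : 0 ≤ p ^ 2 := sq_nonneg _
    linarith
  have hpp : (1 - a - P) ^ 2 ≤ p ^ 2 := by apply pow_le_pow_left₀ <;> linarith
  have hP2 : P ^ 2 ≤ 2 * (b + 2 * a) := by
    have q1 : (1 - a - P) ^ 2 = (1 - P) ^ 2 - 2 * a + 2 * (a * P) + a ^ 2 := by ring
    have q2 := mul_nonneg ha hP
    have q3 := sq_nonneg a
    linarith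
  have hP3 : P ≤ ε / 4 := by
    by_contra h
    push Not at h
    have q1 : (ε / 4) ^ 2 ≤ P ^ 2 := by apply pow_le_pow_left₀ <;> linarith
    have q2 : (ε / 4) ^ 2 = ε ^ 2 / 16 := by ring
    have q3 : 0 < ε ^ 2 := by positivity
    linarith
  have hε3 : ε ^ 2 ≤ ε / 10 := by rw [sq]; linarith [mul_le_mul_of_nonneg_left hε1 hε.le]
  have haε : a ≤ ε / 100 := by linarith
  have e1 : (1 - ε / 2) ^ 2 ≤ (1 - a - P) ^ 2 := by apply pow_le_pow_left₀ <;> linarith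
  by_contra h
  push Not at h
  have : t ^ 2 ≤ (1 - ε) ^ 2 := by apply pow_le_pow_left₀ ht0; linarith
  have q1 : (1 - ε) ^ 2 = 1 - 2 * ε + ε ^ 2 := by ring
  have q2 : (1 - ε / 2) ^ 2 = 1 - ε + ε ^ 2 / 4 := by ring
  have q3 : 0 ≤ P ^ 2 := sq_nonneg _
  linarith

lemma num {ι : Type} [Fintype ι] [DecidableEq ι] (w : ι → ℂ) {ε a b : ℝ} (hε : 0 < ε) (hε1 : ε ≤ 1 / 10)
    (ha : 0 ≤ a) (ha1 : a ≤ ε ^ 2 / 100) (hb : 0 ≤ b) (hb1 : b ≤ ε ^ 2 / 100)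
    (h1 : ∑ i, w i = ((-1 + a : ℝ) : ℂ)) (h2 : ∑ i, w i ^ 2 = ((-1 + b : ℝ) : ℂ))
    (h3 : ∑ i, ‖w i‖ ≤ 2) (hconj : ∀ i, (w i).im ≠ 0 → ∃ j, j ≠ i ∧ w j = star (w i)) :
    ∃ i, (w i).im ≠ 0 ∧ 1 - ε ≤ ‖w i‖ := by
  have hεε : ε ^ 2 ≤ 1 / 100 := by nlinarith
  have hne : Nonempty ι := by
    by_contra h
    rw [not_nonempty_iff] at h
    simp only [Finset.univ_eq_empty, Finset.sum_empty] at h1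
    have : (0 : ℝ) = -1 + a := by exact_mod_cast h1
    linarith
  obtain ⟨i, -, hi⟩ := Finset.exists_max_image (univ : Finset ι) (fun i => ‖w i‖) Finset.univ_nonempty
  set r := ‖w i‖ with hr
  have hre : ∑ i, (w i).re = -1 + a := by
    have := congrArg Complex.re h1
    rwa [Complex.re_sum, Complex.ofReal_re] at this
  have him : ∑ i, (w i).im = 0 := by
    have := congrArg Complex.im h1
    rwa [Complex.im_sum, Complex.ofReal_im] at this
  have hsq : ∑ i, ((w i).re ^ 2 - (w i).im ^ 2) = -1 + b := by
    have := congrArg Complex.re h2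
    rw [Complex.re_sum, Complex.ofReal_re] at this
    rw [← this]
    refine Finset.sum_congr rfl fun i _ => ?_
    rw [sq (w i), Complex.mul_re]; ring
  have hn : ∀ i, ‖w i‖ ^ 2 = (w i).re ^ 2 + (w i).im ^ 2 := by
    intro i
    rw [Complex.sq_norm, Complex.normSq_apply]; ring
  have hN : ∑ i, ‖w i‖ ^ 2 = 2 * ∑ i, (w i).re ^ 2 + 1 - b := by
    simp only [hn, Finset.sum_add_distrib]
    rw [Finset.sum_sub_distrib] at hsq
    linarith
  have hN2 : ∑ i, ‖w i‖ ^ 2 ≤ 2 * r := by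
    calc ∑ i, ‖w i‖ ^ 2 ≤ ∑ i, r * ‖w i‖ := by
          apply Finset.sum_le_sum
          intro j _
          rw [sq]
          exact mul_le_mul_of_nonneg_right (hi j (Finset.mem_univ _)) (norm_nonneg _)
      _ = r * ∑ i, ‖w i‖ := by rw [Finset.mul_sum]
      _ ≤ r * 2 := mul_le_mul_of_nonneg_left h3 (norm_nonneg _)
      _ = 2 * r := by ring
  have hx0 : (w i).re ^ 2 ≤ ∑ i, (w i).re ^ 2 :=
    Finset.single_le_sum (f := fun i => (w i).re ^ 2) (fun j _ => sq_nonneg _) (Finset.mem_univ i)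
  have hri : r ^ 2 = (w i).re ^ 2 + (w i).im ^ 2 := hn i
  have hnr : (w i).im ≠ 0 := by
    intro h
    rw [h] at hri
    nlinarith [sq_nonneg (r - 1 / 2)]
  refine ⟨i, hnr, ?_⟩
  obtain ⟨j, hji, hj⟩ := hconj i hnr
  have hjr : (w j).re = (w i).re := by rw [hj]; rfl
  have hji' : (w j).im = -(w i).im := by rw [hj]; rfl
  have hjn : ‖w j‖ = r := by rw [hj]; simp [hr]
  have split : ∀ f : ι → ℝ, ∑ x, f x = f i + f j + ∑ x ∈ (univ.erase i).erase j, f x := by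
    intro f
    rw [← Finset.add_sum_erase univ f (Finset.mem_univ i),
      ← Finset.add_sum_erase (univ.erase i) f (Finset.mem_erase.2 ⟨hji, Finset.mem_univ j⟩)]
    ring
  set R := (univ.erase i).erase j
  have s1 := split (fun x => (w x).re)
  have s2 := split (fun x => (w x).im)
  have s3 := split (fun x => ‖w x‖)
  have s4 := split (fun x => (w x).re ^ 2 - (w x).im ^ 2)
  simp only [hjr, hji', hjn] at s1 s2 s3 s4
  rw [hre] at s1
  rw [him] at s2
  rw [hsq] at s4
  have g1 := sum_sq_half R (fun x => (w x).im) (by linarith)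
  have g2 := sum_abs_sq R w
  have g3 : |∑ x ∈ R, (w x).re| ≤ ∑ x ∈ R, |(w x).re| := Finset.abs_sum_le_sum_abs _ _
  rw [Finset.sum_sub_distrib] at s4
  have g4 : 0 ≤ ∑ x ∈ R, (w x).re ^ 2 := Finset.sum_nonneg fun x _ => sq_nonneg _
  have hP0 : 0 ≤ ∑ x ∈ R, |(w x).re| := Finset.sum_nonneg fun x _ => abs_nonneg _
  have hH0 : 0 ≤ ∑ x ∈ R, ‖w x‖ := Finset.sum_nonneg fun x _ => norm_nonneg _
  have hPH : ∑ x ∈ R, |(w x).re| ≤ ∑ x ∈ R, ‖w x‖ :=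
    Finset.sum_le_sum fun x _ => Complex.abs_re_le_norm _
  set P := ∑ x ∈ R, |(w x).re|
  set H := ∑ x ∈ R, ‖w x‖
  set g := ∑ x ∈ R, |(w x).im|
  have hH : H ≤ 2 - 2 * r := by
    have : ∑ x, ‖w x‖ = r + r + H := s3
    linarith
  have hH2 : H ^ 2 ≤ (2 - 2 * r) ^ 2 := pow_le_pow_left₀ hH0 hH 2
  have := num_core (t := 2 * r - 1) (p := 2 * |(w i).re|) (P := P) hε hε1 ha ha1 hb hb1 (by positivity) hP0
    (by nlinarith [sq_nonneg (w i).re]) (by linarith)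
    (by
      have : (2 * |(w i).re|) ^ 2 = 4 * (w i).re ^ 2 := by rw [mul_pow, sq_abs]; norm_num
      rw [this]
      nlinarith)
    (by
      have := neg_abs_le (w i).re
      have := neg_abs_le (∑ x ∈ R, (w x).re)
      linarith)
  linarith
end Rb

set_option linter.unusedSectionVars false
namespace Rb
variable {W : Type} [Fintype W] [DecidableEq W]

/-- A nonnegative matrix with entries at most 1 and constant row sums -/
structure RowReg (A : Matrix W W ℝ) (d : ℝ) : Prop where
  nonneg : ∀ u v, 0 ≤ A u v
  le_one : ∀ u v, A u v ≤ 1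
  row : ∀ u, ∑ v, A u v = d

variable {A : Matrix W W ℝ} {d : ℝ}

lemma RowReg.pow_nonneg (h : RowReg A d) (k : ℕ) : ∀ u v, 0 ≤ (A ^ k) u v := by
  induction k with
  | zero => intro u v; rw [pow_zero, Matrix.one_apply]; split_ifs <;> norm_num
  | succ k ih =>
    intro u v
    rw [pow_succ, Matrix.mul_apply]
    exact Finset.sum_nonneg fun w _ => mul_nonneg (ih _ _) (h.nonneg _ _)

lemma RowReg.pow_row (h : RowReg A d) (k : ℕ) : ∀ u, ∑ v, (A ^ k) u v = d ^ k := by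
  induction k with
  | zero => intro u; simp [Matrix.one_apply]
  | succ k ih =>
    intro u
    simp only [pow_succ, Matrix.mul_apply]
    rw [Finset.sum_comm]
    simp only [← Finset.mul_sum, h.row, ← Finset.sum_mul, ih]

lemma RowReg.pow_le (h : RowReg A d) (k : ℕ) : ∀ u v, (A ^ (k + 1)) u v ≤ d ^ k := by
  intro u v
  rw [pow_succ, Matrix.mul_apply, ← h.pow_row k u]
  exact Finset.sum_le_sum fun w _ => mul_le_of_le_one_right (h.pow_nonneg k _ _) (h.le_one _ _)

/-- column-centered matrix -/
noncomputable def cen (A : Matrix W W ℝ) : Matrix W W ℝ :=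
  Matrix.of fun u v => A u v - (∑ x, A x v) / Fintype.card W

lemma RowReg.cen_row (h : RowReg A d) (hn : 0 < Fintype.card W) (u : W) : ∑ v, cen A u v = 0 := by
  have hn' : (Fintype.card W : ℝ) ≠ 0 := by positivity
  simp only [cen, Matrix.of_apply, Finset.sum_sub_distrib, h.row, ← Finset.sum_div]
  rw [Finset.sum_comm]
  simp only [h.row, Finset.sum_const, Finset.card_univ, nsmul_eq_mul]
  field_simp; ring

lemma RowReg.cen_pow (h : RowReg A d) (hn : 0 < Fintype.card W) (k : ℕ) :
    (cen A) ^ (k + 1) = cen (A ^ (k + 1)) := by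
  induction k with
  | zero => simp
  | succ k ih =>
    rw [pow_succ', ih]
    ext u v
    rw [Matrix.mul_apply]
    have e1 : ∀ w, cen (A ^ (k + 1)) w v = (A ^ (k + 1)) w v - (∑ x, (A ^ (k + 1)) x v) / Fintype.card W :=
      fun w => rfl
    simp only [e1, mul_sub, Finset.sum_sub_distrib, ← Finset.sum_mul, h.cen_row hn]
    have e2 : ∀ w, cen A u w = A u w - (∑ x, A x w) / Fintype.card W := fun w => rfl
    simp only [e2, sub_mul, Finset.sum_sub_distrib]
    rw [zero_mul, sub_zero]
    change _ = (A ^ (k + 1 + 1)) u v - (∑ x, (A ^ (k + 1 + 1)) x v) / Fintype.card W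
    have e3 : ∀ x, (A ^ (k + 1 + 1)) x v = ∑ w, A x w * (A ^ (k + 1)) w v := by
      intro x; rw [pow_succ' A (k + 1), Matrix.mul_apply]
    simp only [e3]
    congr 1
    rw [Finset.sum_comm, Finset.sum_div]
    refine Finset.sum_congr rfl fun w _ => ?_
    rw [← Finset.sum_mul]; ring

lemma RowReg.cen_trace (h : RowReg A d) (hn : 0 < Fintype.card W) (k : ℕ) :
    ((cen A) ^ (k + 1)).trace = (A ^ (k + 1)).trace - d ^ (k + 1) := by
  have hn' : (Fintype.card W : ℝ) ≠ 0 := by positivity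
  rw [h.cen_pow hn]
  simp only [Matrix.trace, Matrix.diag, cen, Matrix.of_apply, Finset.sum_sub_distrib]
  rw [← Finset.sum_div, Finset.sum_comm]
  simp only [h.pow_row, Finset.sum_const, Finset.card_univ, nsmul_eq_mul]
  field_simp

lemma RowReg.cen_frob (h : RowReg A d) (hn : 0 < Fintype.card W) (k : ℕ) :
    ∑ u, ∑ v, ((cen A) ^ (k + 1)) u v ^ 2 ≤ ∑ u, ∑ v, (A ^ (k + 1)) u v ^ 2 - d ^ (2 * (k + 1)) := by
  have hn' : (Fintype.card W : ℝ) ≠ 0 := by positivity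
  rw [h.cen_pow hn]
  set M := A ^ (k + 1) with hM
  have e : ∀ v, ∑ u, cen M u v ^ 2 = ∑ u, M u v ^ 2 - (∑ x, M x v) ^ 2 / Fintype.card W := by
    intro v
    simp only [cen, Matrix.of_apply]
    set s := ∑ x, M x v with hs
    simp only [sub_sq, Finset.sum_add_distrib, Finset.sum_sub_distrib, ← Finset.sum_mul, ← Finset.mul_sum, ← hs,
      Finset.sum_const, Finset.card_univ, nsmul_eq_mul]
    field_simp; ring
  rw [Finset.sum_comm]
  simp only [e, Finset.sum_sub_distrib]
  rw [Finset.sum_comm]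
  have tot : ∑ v, ∑ x, M x v = Fintype.card W * d ^ (k + 1) := by
    rw [Finset.sum_comm]
    simp only [hM, h.pow_row, Finset.sum_const, Finset.card_univ, nsmul_eq_mul]
  have cs : (∑ v, ∑ x, M x v) ^ 2 ≤ Fintype.card W * ∑ v, (∑ x, M x v) ^ 2 := by
    have := sq_sum_le_card_mul_sum_sq (s := (univ : Finset W)) (f := fun v => ∑ x, M x v)
    simpa using this
  rw [tot] at cs
  rw [← Finset.sum_div]
  have : d ^ (2 * (k + 1)) ≤ (∑ v, (∑ x, M x v) ^ 2) / Fintype.card W := by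
    have hnp : (0 : ℝ) < Fintype.card W := by positivity
    rw [le_div_iff₀ hnp]
    have e2 : (Fintype.card W * d ^ (k + 1)) ^ 2 = Fintype.card W * (d ^ (2 * (k + 1)) * Fintype.card W) := by ring
    rw [e2] at cs
    exact le_of_mul_le_mul_left cs hnp
  linarith

lemma RowReg.frob_le (h : RowReg A d) (k : ℕ) :
    ∑ u, ∑ v, (A ^ (k + 1)) u v ^ 2 ≤ Fintype.card W * d ^ (2 * k + 1) := by
  calc ∑ u, ∑ v, (A ^ (k + 1)) u v ^ 2 ≤ ∑ u : W, ∑ v, d ^ k * (A ^ (k + 1)) u v := by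
        refine Finset.sum_le_sum fun u _ => Finset.sum_le_sum fun v _ => ?_
        rw [sq]; exact mul_le_mul_of_nonneg_right (h.pow_le k u v) (h.pow_nonneg _ _ _)
    _ = _ := by
        simp only [← Finset.mul_sum, h.pow_row, Finset.sum_const, Finset.card_univ, nsmul_eq_mul]
        ring

/-- the half-length trace -/
lemma RowReg.half (h : RowReg A d) (hd : 0 ≤ d) (m : ℕ) :
    ((A ^ (m + 2)).trace) ^ 4 ≤ (Fintype.card W : ℝ) ^ 4 * (d ^ (2 * m) * (A ^ (2 * (m + 2))).trace) := by
  set Q := A ^ (m + 1) with hQ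
  set K : W → W → ℝ := fun x y => Q x y * A y x with hK
  have hQ0 : ∀ x y, 0 ≤ Q x y := h.pow_nonneg _
  have hQ1 : ∀ x y, Q x y ≤ d ^ m := h.pow_le m
  have hK0 : ∀ x y, 0 ≤ K x y := fun x y => mul_nonneg (hQ0 _ _) (h.nonneg _ _)
  have t1 : (A ^ (m + 2)).trace = ∑ y, ∑ x, K x y := by
    rw [pow_succ A (m + 1), ← hQ, Matrix.trace]
    simp only [Matrix.diag, Matrix.mul_apply]
    rw [Finset.sum_comm]
  set n : ℝ := (Fintype.card W : ℝ) with hn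
  have hn0 : 0 ≤ n := by positivity
  have c1 : (∑ y, ∑ x, K x y) ^ 2 ≤ n * ∑ y, (∑ x, K x y) ^ 2 := by
    have := sq_sum_le_card_mul_sum_sq (s := (univ : Finset W)) (f := fun y => ∑ x, K x y)
    simpa using this
  have e1 : ∑ y, (∑ x, K x y) ^ 2 = ∑ p : W × W, ∑ y, K p.1 y * K p.2 y := by
    rw [Finset.sum_comm]
    refine Finset.sum_congr rfl fun y _ => ?_
    rw [sq, Finset.sum_mul_sum, ← Finset.univ_product_univ, Finset.sum_product]
  have c2 : (∑ p : W × W, ∑ y, K p.1 y * K p.2 y) ^ 2 ≤ n ^ 2 * ∑ p : W × W, (∑ y, K p.1 y * K p.2 y) ^ 2 := by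
    have := sq_sum_le_card_mul_sum_sq (s := (univ : Finset (W × W))) (f := fun p => ∑ y, K p.1 y * K p.2 y)
    rw [Finset.card_univ, Fintype.card_prod] at this
    push_cast at this
    rw [sq n]; exact this
  have c3 : ∑ p : W × W, (∑ y, K p.1 y * K p.2 y) ^ 2 ≤ d ^ (2 * m) * (A ^ (2 * (m + 2))).trace := by
    have t2 : (A ^ (2 * (m + 2))).trace = ∑ x, ∑ x', ∑ y, ∑ y', (Q x y * A y x') * (Q x' y' * A y' x) := by
      have : A ^ (2 * (m + 2)) = (Q * A) * (Q * A) := by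
        rw [hQ, ← pow_succ, ← pow_add]; congr 1; ring
      rw [this, Matrix.trace]
      simp only [Matrix.diag, Matrix.mul_apply (M := Q * A)]
      refine Finset.sum_congr rfl fun x _ => Finset.sum_congr rfl fun x' _ => ?_
      rw [Matrix.mul_apply, Matrix.mul_apply, Finset.sum_mul_sum]
    rw [t2, ← Finset.univ_product_univ, Finset.sum_product, Finset.mul_sum]
    refine Finset.sum_le_sum fun x _ => ?_
    rw [Finset.mul_sum]
    refine Finset.sum_le_sum fun x' _ => ?_
    rw [sq, Finset.sum_mul_sum, Finset.mul_sum]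
    refine Finset.sum_le_sum fun y _ => ?_
    rw [Finset.mul_sum]
    refine Finset.sum_le_sum fun y' _ => ?_
    simp only [hK]
    have b1 : Q x y * A y x * (Q x' y * A y x') * (Q x y' * A y' x * (Q x' y' * A y' x'))
        = (Q x y * A y x') * (Q x' y' * A y' x) * ((Q x' y * A y x) * (Q x y' * A y' x')) := by ring
    rw [b1, mul_comm (d ^ (2 * m))]
    apply mul_le_mul_of_nonneg_left
    · rw [two_mul, pow_add]
      apply mul_le_mul
      · exact (mul_le_of_le_one_right (hQ0 _ _) (h.le_one _ _)).trans (hQ1 _ _)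
      · exact (mul_le_of_le_one_right (hQ0 _ _) (h.le_one _ _)).trans (hQ1 _ _)
      · exact mul_nonneg (hQ0 _ _) (h.nonneg _ _)
      · positivity
    · exact mul_nonneg (mul_nonneg (hQ0 _ _) (h.nonneg _ _)) (mul_nonneg (hQ0 _ _) (h.nonneg _ _))
  rw [t1]
  calc (∑ y, ∑ x, K x y) ^ 4 = ((∑ y, ∑ x, K x y) ^ 2) ^ 2 := by ring
    _ ≤ (n * ∑ y, (∑ x, K x y) ^ 2) ^ 2 := pow_le_pow_left₀ (sq_nonneg _) c1 2
    _ = n ^ 2 * (∑ p : W × W, ∑ y, K p.1 y * K p.2 y) ^ 2 := by rw [e1]; ring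
    _ ≤ n ^ 2 * (n ^ 2 * (d ^ (2 * m) * (A ^ (2 * (m + 2))).trace)) := by
        apply mul_le_mul_of_nonneg_left _ (sq_nonneg _)
        exact c2.trans (mul_le_mul_of_nonneg_left c3 (sq_nonneg _))
    _ = _ := by ring
end Rb

set_option linter.unusedSectionVars false
namespace Rb
variable {W : Type} [Fintype W] [DecidableEq W] {A : Matrix W W ℝ} {d : ℝ}

lemma map_pow_real (B : Matrix W W ℝ) (k : ℕ) :
    (B.map (fun x : ℝ => (x : ℂ))) ^ k = (B ^ k).map (fun x : ℝ => (x : ℂ)) := by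
  have := map_pow (Complex.ofRealHom.mapMatrix (m := W)) B k
  exact this.symm

lemma det_star_real (B : Matrix W W ℝ) (z : ℂ) :
    (star z • (1 : Matrix W W ℂ) - B.map (fun x : ℝ => (x : ℂ))).det
      = star ((z • (1 : Matrix W W ℂ) - B.map (fun x : ℝ => (x : ℂ))).det) := by
  have := RingHom.map_det (starRingEnd ℂ) (z • (1 : Matrix W W ℂ) - B.map (fun x : ℝ => (x : ℂ)))
  change _ = (starRingEnd ℂ) _
  rw [this]
  congr 1
  ext i j
  simp only [Matrix.sub_apply, Matrix.smul_apply, Matrix.map_apply, RingHom.mapMatrix_apply, map_sub, smul_eq_mul,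
    map_mul, Complex.conj_ofReal, Matrix.one_apply]
  split_ifs <;> simp

lemma amgm_pow (x : ℝ) (m : ℕ) : x ^ (m + 2) ≤ (x ^ (2 * (0 + 1)) + x ^ (2 * (m + 1))) / 2 := by
  have q := sq_nonneg (x - x ^ (m + 1))
  have q1 : (x - x ^ (m + 1)) ^ 2 = x ^ (2 * (0 + 1)) + x ^ (2 * (m + 1)) - 2 * x ^ (m + 2) := by ring
  rw [q1] at q
  generalize x ^ (2 * (0 + 1)) = p at *
  generalize x ^ (2 * (m + 1)) = p' at *
  linarith

lemma RowReg.spectral (h : RowReg A d) (hd : 0 < d) (hn : 0 < Fintype.card W) (hn3 : (Fintype.card W : ℝ) ≤ 3 * d)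
    (m : ℕ) {ε : ℝ} (hε : 0 < ε) (hε1 : ε ≤ 1 / 10)
    (ht : (A ^ (2 * (m + 2))).trace ≤ (ε ^ 2 / 100) ^ 4 / 81 * d ^ (2 * (m + 2))) :
    (3 - 8 * ε) * d ^ 4 ≤ ∑ u, ∑ v, (A ^ 2) u v ^ 2 := by
  have tr0 : ∀ k, 0 ≤ (A ^ k).trace := fun k => Finset.sum_nonneg fun u _ => h.pow_nonneg k u u
  set B := cen A with hB
  obtain ⟨μ, m1, m2, m3⟩ := schur (Fintype.card W) W rfl (B.map (fun x : ℝ => (x : ℂ)))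
  have hdc : (d : ℂ) ≠ 0 := by exact_mod_cast hd.ne'
  set e : ℝ := ε ^ 2 / 100 with he
  have he0 : 0 < e := by positivity
  have he1 : e ≤ 1 := by nlinarith
  -- trace facts
  have T : ∀ k, ∑ i, μ i ^ (k + 1) = (((A ^ (k + 1)).trace - d ^ (k + 1) : ℝ) : ℂ) := by
    intro k
    rw [← m2, map_pow_real, ← h.cen_trace hn]
    simp only [Matrix.trace, Matrix.diag, Matrix.map_apply]
    exact (Complex.ofReal_sum _ _).symm
  have F0 : ∀ k, ∑ i, ‖μ i‖ ^ (2 * k) ≤ ∑ u, ∑ v, (B ^ k) u v ^ 2 := by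
    intro k
    refine (m3 k).trans (le_of_eq ?_)
    refine Finset.sum_congr rfl fun u _ => Finset.sum_congr rfl fun v _ => ?_
    rw [map_pow_real, Matrix.map_apply, Complex.norm_real, Real.norm_eq_abs, sq_abs]
  have F : ∀ k, ∑ i, ‖μ i‖ ^ (2 * (k + 1)) ≤ 2 * d ^ (2 * (k + 1)) := by
    intro k
    have e1 := F0 (k + 1)
    have e2 := h.cen_frob hn k
    have e3 := h.frob_le k
    have e4 : (Fintype.card W : ℝ) * d ^ (2 * k + 1) ≤ 3 * d * d ^ (2 * k + 1) :=
      mul_le_mul_of_nonneg_right hn3 (by positivity)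
    have e5 : 3 * d * d ^ (2 * k + 1) = 3 * d ^ (2 * (k + 1)) := by ring
    linarith
  -- normalized
  set ν : Fin (Fintype.card W) → ℂ := fun i => μ i / d with hν
  have Fν : ∀ k, ∑ i, ‖ν i‖ ^ (2 * (k + 1)) ≤ 2 := by
    intro k
    have : ∀ i, ‖ν i‖ ^ (2 * (k + 1)) = ‖μ i‖ ^ (2 * (k + 1)) / d ^ (2 * (k + 1)) := by
      intro i
      rw [hν, norm_div, Complex.norm_real, Real.norm_eq_abs, abs_of_pos hd, div_pow]
    simp only [this, ← Finset.sum_div]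
    rw [div_le_iff₀ (by positivity)]
    exact F k
  have Tν : ∀ k, ∑ i, ν i ^ (k + 1) = ((-1 + (A ^ (k + 1)).trace / d ^ (k + 1) : ℝ) : ℂ) := by
    intro k
    simp only [hν, div_pow, ← Finset.sum_div, T k]
    push_cast
    field_simp
    ring
  set w : Fin (Fintype.card W) → ℂ := fun i => ν i ^ (m + 2) with hw
  set a := (A ^ (m + 2)).trace / d ^ (m + 2) with ha
  set b := (A ^ (2 * (m + 2))).trace / d ^ (2 * (m + 2)) with hb
  have ha0 : 0 ≤ a := div_nonneg (tr0 _) (by positivity)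
  have hb0 : 0 ≤ b := div_nonneg (tr0 _) (by positivity)
  have hb1 : b ≤ e ^ 4 / 81 := by
    rw [hb, div_le_iff₀ (by positivity)]; exact ht
  have ha4 : a ^ 4 ≤ 81 * b := by
    rw [ha, hb, div_pow, div_le_iff₀ (by positivity)]
    refine (h.half hd.le m).trans ?_
    have e1 : (Fintype.card W : ℝ) ^ 4 ≤ (3 * d) ^ 4 := pow_le_pow_left₀ (by positivity) hn3 4
    have e2 : 81 * ((A ^ (2 * (m + 2))).trace / d ^ (2 * (m + 2))) * (d ^ (m + 2)) ^ 4
        = (3 * d) ^ 4 * (d ^ (2 * m) * (A ^ (2 * (m + 2))).trace) := by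
      field_simp; ring
    rw [e2]
    exact mul_le_mul_of_nonneg_right e1 (mul_nonneg (by positivity) (tr0 _))
  have ha1 : a ≤ e := by
    have : a ^ 4 ≤ e ^ 4 := by linarith
    exact le_of_pow_le_pow_left₀ (by norm_num) he0.le this
  have hb2 : b ≤ e := by
    have : e ^ 4 ≤ e := by
      calc e ^ 4 ≤ e ^ 1 := pow_le_pow_of_le_one he0.le he1 (by norm_num)
        _ = e := pow_one e
    linarith
  have h3 : ∑ i, ‖w i‖ ≤ 2 := by
    have e1 := Fν 0
    have e2 := Fν m
    have : ∀ i, ‖w i‖ ≤ (‖ν i‖ ^ (2 * (0 + 1)) + ‖ν i‖ ^ (2 * (m + 1))) / 2 := by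
      intro i
      have q2 : ‖w i‖ = ‖ν i‖ ^ (m + 2) := norm_pow _ _
      rw [q2]; exact amgm_pow _ _
    calc ∑ i, ‖w i‖ ≤ ∑ i, (‖ν i‖ ^ (2 * (0 + 1)) + ‖ν i‖ ^ (2 * (m + 1))) / 2 := Finset.sum_le_sum fun i _ => this i
      _ ≤ 2 := by
        rw [← Finset.sum_div, Finset.sum_add_distrib]; linarith
  have hconj : ∀ i, (w i).im ≠ 0 → ∃ j, j ≠ i ∧ ν j = star (ν i) := by
    intro i hi
    have d1 := det_star_real B (μ i)
    have hz : ∏ x, (μ i - μ x) = 0 := Finset.prod_eq_zero (Finset.mem_univ i) (sub_self (μ i))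
    rw [m1, m1, hz, star_zero, Finset.prod_eq_zero_iff] at d1
    obtain ⟨j, -, hj⟩ := d1
    have hj' : ν j = star (ν i) := by
      simp only [hν, star_div₀]
      rw [← sub_eq_zero.1 hj]
      congr 1
      exact (Complex.conj_ofReal d).symm
    refine ⟨j, ?_, hj'⟩
    rintro rfl
    apply hi
    have : star (w j) = w j := by simp only [hw, star_pow, ← hj']
    exact Complex.conj_eq_iff_im.1 this
  obtain ⟨i, hi, hr⟩ := num w (a := a) (b := b) hε hε1 ha0 ha1 hb0 hb2 (Tν (m + 1)) (by
      have := Tν (2 * (m + 1) + 1)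
      simp only [hw, ← pow_mul]
      rw [show (m + 2) * 2 = 2 * (m + 1) + 1 + 1 by ring, this, hb,
        show 2 * (m + 1) + 1 + 1 = 2 * (m + 2) by ring]) h3 (by
      intro i hi
      obtain ⟨j, h1, h2⟩ := hconj i hi
      exact ⟨j, h1, by simp only [hw, h2, star_pow]⟩)
  obtain ⟨j, hji, hj⟩ := hconj i hi
  have hνi : 1 - ε ≤ ‖ν i‖ := by
    by_contra hcon
    push Not at hcon
    simp only [hw, norm_pow] at hr
    have : ‖ν i‖ ^ (m + 2) ≤ ‖ν i‖ ^ 1 := pow_le_pow_of_le_one (norm_nonneg _) (by linarith) (by omega)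
    rw [pow_one] at this
    linarith
  have hνj : ‖ν j‖ = ‖ν i‖ := by rw [hj, norm_star]
  have hμi : (1 - ε) ^ 4 * d ^ 4 ≤ ‖μ i‖ ^ 4 := by
    rw [← mul_pow]
    have : ‖ν i‖ = ‖μ i‖ / d := by rw [hν, norm_div, Complex.norm_real, Real.norm_eq_abs, abs_of_pos hd]
    rw [this, le_div_iff₀ hd] at hνi
    exact pow_le_pow_left₀ (mul_nonneg (by linarith) hd.le) hνi 4
  have hμj : ‖μ j‖ = ‖μ i‖ := by
    simp only [hν, norm_div] at hνj
    have hdn : ‖(d : ℂ)‖ ≠ 0 := norm_ne_zero_iff.2 hdc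
    exact (div_left_inj' hdn).1 hνj
  have s1 : ‖μ i‖ ^ 4 + ‖μ j‖ ^ 4 ≤ ∑ i, ‖μ i‖ ^ (2 * 2) := by
    have := Finset.sum_le_univ_sum_of_nonneg (s := {i, j}) (f := fun i => ‖μ i‖ ^ (2 * 2)) (fun i => by positivity)
    rwa [Finset.sum_pair hji.symm] at this
  have s2 := F0 2
  have s3 := h.cen_frob hn 1
  norm_num at s3
  rw [hμj] at s1
  have s4 : 1 - 4 * ε ≤ (1 - ε) ^ 4 := by
    have := one_add_mul_le_pow (a := -ε) (by linarith) 4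
    push_cast at this
    rw [show (1 : ℝ) + -ε = 1 - ε by ring] at this
    linarith
  have s5 : (1 - 4 * ε) * d ^ 4 ≤ (1 - ε) ^ 4 * d ^ 4 := mul_le_mul_of_nonneg_right s4 (by positivity)
  linarith
end Rb

set_option linter.unusedSectionVars false
namespace Rb
variable {W : Type} [Fintype W] [DecidableEq W]
  {G : SimpleGraph W} {c : Sym2 W → ℕ}

/-- adjacency matrix of the selection digraph -/
noncomputable def amat (S : W → Finset W) : Matrix W W ℝ := Matrix.of fun v u => if u ∈ S v then 1 else 0

lemma amat_rowReg {S : W → Finset W} {d : ℕ} (h : ∀ v, (S v).card = d) : RowReg (amat S) d where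
  nonneg u v := by simp only [amat, Matrix.of_apply]; split_ifs <;> norm_num
  le_one u v := by simp only [amat, Matrix.of_apply]; split_ifs <;> norm_num
  row u := by simp [amat, ← h u]

/-- walks -/
def wk (S : W → Finset W) (k : ℕ) (u v : W) : Finset (Fin (k + 1) → W) :=
  univ.filter fun x => x 0 = u ∧ x (Fin.last k) = v ∧ ∀ i : Fin k, x i.succ ∈ S (x i.castSucc)

lemma amat_pow_le (S : W → Finset W) (k : ℕ) : ∀ u v, ((amat S) ^ k) u v ≤ (wk S k u v).card := by
  induction k with
  | zero =>
    intro u v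
    rw [pow_zero, Matrix.one_apply]
    split_ifs with h
    · subst h
      have : (fun _ => u) ∈ wk S 0 u u := by simp [wk]
      exact_mod_cast Finset.card_pos.2 ⟨_, this⟩
    · positivity
  | succ k ih =>
    intro u v
    rw [pow_succ', Matrix.mul_apply]
    have h1 : ∑ w, amat S u w * ((amat S) ^ k) w v ≤ ∑ w ∈ S u, ((wk S k w v).card : ℝ) := by
      simp only [amat, Matrix.of_apply, ite_mul, one_mul, zero_mul, ← Finset.sum_filter]
      rw [Finset.filter_mem_eq_inter, Finset.univ_inter]
      exact Finset.sum_le_sum fun w _ => ih w v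
    refine h1.trans ?_
    rw [← Nat.cast_sum, ← Finset.card_sigma]
    have : ((S u).sigma fun w => wk S k w v).card ≤ (wk S (k + 1) u v).card := by
      apply Finset.card_le_card_of_injOn (fun p => Fin.cons u p.2)
      · rintro ⟨w, x⟩ hp
        simp only [Finset.coe_sigma, Set.mem_sigma_iff, Finset.mem_coe, wk, Finset.mem_filter, Finset.mem_univ, true_and] at hp ⊢
        obtain ⟨hw, h0, h2, h3⟩ := hp
        refine ⟨by simp, ?_, ?_⟩
        · rw [← Fin.succ_last, Fin.cons_succ]; exact h2
        · intro i
          refine Fin.cases ?_ (fun i => ?_) i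
          · simp only [Fin.cons_succ, Fin.castSucc_zero, Fin.cons_zero]; rw [h0]; exact hw
          · simp only [Fin.cons_succ, ← Fin.succ_castSucc]; exact h3 i
      · rintro ⟨w, x⟩ hp ⟨w', x'⟩ hp' he
        simp only [Finset.coe_sigma, Set.mem_sigma_iff, Finset.mem_coe, wk, Finset.mem_filter, Finset.mem_univ, true_and] at hp hp'
        have e : x = x' := by
          have := congrArg Fin.tail he
          simpa using this
        subst e
        have : w = w' := by rw [← hp.2.1, hp'.2.1]
        subst this; rfl
    exact_mod_cast this

lemma trace_le {S : W → Finset W} (hS : IsSel G c S) {k : ℕ} (hk : 2 ≤ k)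
    (hno : ¬ HasRainbowCycle G c (k + 1)) :
    ((amat S) ^ (k + 1)).trace ≤ 2 * (k + 1) ^ 2 * (Fintype.card W : ℝ) ^ k := by
  set T : Finset (Fin (k + 1) → W) := univ.filter fun x =>
    x 0 ∈ S (x (Fin.last k)) ∧ ∀ i : Fin k, x i.succ ∈ S (x i.castSucc) with hT
  have h1 : ((amat S) ^ (k + 1)).trace ≤ T.card := by
    rw [pow_succ, Matrix.trace]
    simp only [Matrix.diag, Matrix.mul_apply]
    have e1 : ∑ u, ∑ v, ((amat S) ^ k) u v * amat S v u ≤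
        ∑ u, ∑ v, ((T.filter fun x => (x 0, x (Fin.last k)) = (u, v)).card : ℝ) := by
      refine Finset.sum_le_sum fun u _ => Finset.sum_le_sum fun v _ => ?_
      simp only [amat, Matrix.of_apply, mul_ite, mul_one, mul_zero]
      split_ifs with huv
      · refine (amat_pow_le S k u v).trans ?_
        have : wk S k u v ⊆ T.filter fun x => (x 0, x (Fin.last k)) = (u, v) := by
          intro x hx
          simp only [wk, Finset.mem_filter, Finset.mem_univ, true_and] at hx
          simp only [hT, Finset.mem_filter, Finset.mem_univ, true_and]
          refine ⟨⟨by rw [hx.1, hx.2.1]; exact huv, hx.2.2⟩, by rw [hx.1, hx.2.1]⟩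
        exact_mod_cast Finset.card_le_card this
      · positivity
    refine e1.trans (le_of_eq ?_)
    have := Finset.card_eq_sum_card_fiberwise (s := T) (t := (univ : Finset (W × W)))
      (f := fun x => (x 0, x (Fin.last k))) (fun x _ => by simp)
    rw [this, ← Finset.univ_product_univ, Finset.sum_product]
    push_cast; rfl
  refine h1.trans ?_
  have := count hS hk hno (fun _ => false) T (by
    intro x hx j
    simp only [hT, Finset.mem_filter, Finset.mem_univ, true_and] at hx
    simp only [hd, tl, Bool.false_eq_true, if_false]
    refine Fin.lastCases ?_ (fun i => ?_) j
    · rw [Fin.last_add_one]; exact hx.1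
    · rw [Fin.coeSucc_eq_succ]; exact hx.2 i) (by
    intro x _ j j' hne he
    simp only [hd, Bool.false_eq_true, if_false] at he
    exact absurd (add_right_cancel he) hne)
  exact_mod_cast this
end Rb

set_option linter.unusedSectionVars false
namespace Rb
variable {W : Type} [Fintype W] [DecidableEq W]
  {G : SimpleGraph W} {c : Sym2 W → ℕ}

/-- missing pairs -/
def miss (S : W → Finset W) (P Q : Finset W) : Finset (W × W) := (P ×ˢ Q).filter fun p => p.2 ∉ S p.1

lemma mem_miss {S : W → Finset W} {P Q : Finset W} {a b : W} :
    (a, b) ∈ miss S P Q ↔ a ∈ P ∧ b ∈ Q ∧ b ∉ S a := by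
  simp [miss, and_assoc]

lemma miss_mono {S : W → Finset W} {P Q P' Q' : Finset W} (h : P ⊆ P') (h' : Q ⊆ Q') :
    miss S P Q ⊆ miss S P' Q' := by
  rintro ⟨a, b⟩ hab
  rw [mem_miss] at *
  exact ⟨h hab.1, h' hab.2.1, hab.2.2⟩

lemma sum_sel (S : W → Finset W) (u : W) (g : W → ℝ) : ∑ x ∈ S u, g x = ∑ x, amat S u x * g x := by
  simp only [amat, Matrix.of_apply, ite_mul, one_mul, zero_mul, ← Finset.sum_filter]
  rw [Finset.filter_mem_eq_inter, Finset.univ_inter]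

lemma card_miss_sel (S : W → Finset W) (u x : W) :
    ((miss S (S u) (S x)).card : ℝ) = ∑ y, amat S u y * ∑ w, amat S x w * (1 - amat S y w) := by
  rw [miss, Finset.card_filter, Finset.sum_product]
  push_cast
  rw [sum_sel]
  refine Finset.sum_congr rfl fun y _ => ?_
  rw [sum_sel]
  congr 1
  refine Finset.sum_congr rfl fun w _ => ?_
  congr 1
  simp only [amat, Matrix.of_apply]
  split_ifs <;> simp

lemma sum_miss {S : W → Finset W} {d : ℕ} (h : ∀ v, (S v).card = d) :
    ∑ u, ∑ x ∈ S u, ((miss S (S u) (S x)).card : ℝ)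
      = Fintype.card W * (d : ℝ) ^ 3 - ∑ u, ∑ v, ((amat S) ^ 2) u v ^ 2 := by
  have hr := amat_rowReg h
  set A := amat S with hA
  have key : ∀ u, ∑ x ∈ S u, ((miss S (S u) (S x)).card : ℝ) = (d : ℝ) ^ 3 - ∑ w, (A ^ 2) u w ^ 2 := by
    intro u
    rw [sum_sel]
    simp only [card_miss_sel, ← hA]
    have e1 : ∀ x, ∑ y, A u y * ∑ w, A x w * (1 - A y w) = (d : ℝ) ^ 2 - ∑ w, A x w * (A ^ 2) u w := by
      intro x
      have : ∀ y, ∑ w, A x w * (1 - A y w) = d - ∑ w, A x w * A y w := by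
        intro y
        simp only [mul_sub, mul_one, Finset.sum_sub_distrib, hr.row]
      simp only [this, mul_sub, Finset.sum_sub_distrib, ← Finset.sum_mul, hr.row]
      congr 1
      · ring
      · simp only [Finset.mul_sum]
        rw [Finset.sum_comm]
        refine Finset.sum_congr rfl fun w _ => ?_
        rw [pow_two, Matrix.mul_apply, Finset.mul_sum]
        exact Finset.sum_congr rfl fun y _ => by ring
    simp only [e1]
    simp only [mul_sub, Finset.sum_sub_distrib, ← Finset.sum_mul, hr.row]
    congr 1
    · ring
    · simp only [Finset.mul_sum]
      rw [Finset.sum_comm]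
      refine Finset.sum_congr rfl fun w _ => ?_
      rw [pow_two ((A ^ 2) u w)]
      conv_rhs => rw [pow_two A, Matrix.mul_apply, Finset.sum_mul]
      refine Finset.sum_congr rfl fun y _ => ?_
      rw [pow_two A, Matrix.mul_apply]; ring
  simp only [key, Finset.sum_sub_distrib, Finset.sum_const, Finset.card_univ, nsmul_eq_mul]

/-- A good infinite path. -/
lemma good_path {S : W → Finset W} {d : ℕ} (hd : 0 < d) (h : ∀ v, (S v).card = d) (hne : Nonempty W)
    (hn3 : Fintype.card W ≤ 3 * d) {η δ : ℝ} (hη : 0 < η) (hδ : 32 * δ ≤ η)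
    (hf : (3 - δ) * (d : ℝ) ^ 4 ≤ ∑ u, ∑ v, ((amat S) ^ 2) u v ^ 2) :
    ∃ p : ℕ → W, ∀ k, p (k + 1) ∈ S (p k) ∧
      ((miss S (S (p k)) (S (p (k + 1)))).card : ℝ) ≤ η * (d : ℝ) ^ 2 := by
  have hdR : (0 : ℝ) < d := by exact_mod_cast hd
  have htot := sum_miss h
  have hn3R : (Fintype.card W : ℝ) ≤ 3 * d := by exact_mod_cast hn3
  have htot2 : ∑ u, ∑ x ∈ S u, ((miss S (S u) (S x)).card : ℝ) ≤ δ * (d : ℝ) ^ 4 := by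
    have : (Fintype.card W : ℝ) * (d : ℝ) ^ 3 ≤ 3 * d * (d : ℝ) ^ 3 := mul_le_mul_of_nonneg_right hn3R (by positivity)
    rw [htot]
    have e : 3 * (d : ℝ) * (d : ℝ) ^ 3 = 3 * (d : ℝ) ^ 4 := by ring
    linarith
  set bad : W → Finset W := fun u => (S u).filter fun x => η * (d : ℝ) ^ 2 < ((miss S (S u) (S x)).card : ℝ) with hbad
  set Z : Finset W := univ.filter fun u => d < 4 * (bad u).card with hZ
  have hZc : 4 * Z.card < d := by
    have e1 : ∀ u, ((bad u).card : ℝ) * (η * (d : ℝ) ^ 2) ≤ ∑ x ∈ S u, ((miss S (S u) (S x)).card : ℝ) := by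
      intro u
      calc ((bad u).card : ℝ) * (η * (d : ℝ) ^ 2) = ∑ x ∈ bad u, η * (d : ℝ) ^ 2 := by simp
        _ ≤ ∑ x ∈ bad u, ((miss S (S u) (S x)).card : ℝ) :=
            Finset.sum_le_sum fun x hx => (Finset.mem_filter.1 hx).2.le
        _ ≤ _ := Finset.sum_le_sum_of_subset_of_nonneg (Finset.filter_subset _ _) (fun _ _ _ => by positivity)
    have e2 : (Z.card : ℝ) * (d / 4 * (η * (d : ℝ) ^ 2)) ≤ δ * (d : ℝ) ^ 4 := by
      calc (Z.card : ℝ) * (d / 4 * (η * (d : ℝ) ^ 2)) = ∑ u ∈ Z, d / 4 * (η * (d : ℝ) ^ 2) := by simp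
        _ ≤ ∑ u ∈ Z, ((bad u).card : ℝ) * (η * (d : ℝ) ^ 2) := by
            refine Finset.sum_le_sum fun u hu => ?_
            apply mul_le_mul_of_nonneg_right _ (by positivity)
            have : d < 4 * (bad u).card := (Finset.mem_filter.1 hu).2
            have : (d : ℝ) < 4 * (bad u).card := by exact_mod_cast this
            linarith
        _ ≤ ∑ u ∈ Z, ∑ x ∈ S u, ((miss S (S u) (S x)).card : ℝ) := Finset.sum_le_sum fun u _ => e1 u
        _ ≤ ∑ u, ∑ x ∈ S u, ((miss S (S u) (S x)).card : ℝ) :=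
            Finset.sum_le_sum_of_subset_of_nonneg (Finset.subset_univ _)
              (fun _ _ _ => Finset.sum_nonneg fun _ _ => by positivity)
        _ ≤ _ := htot2
    have e3 : (Z.card : ℝ) * η * (d : ℝ) ^ 3 ≤ (4 * δ * d) * (d : ℝ) ^ 3 := by
      have : (Z.card : ℝ) * (d / 4 * (η * (d : ℝ) ^ 2)) = (Z.card : ℝ) * η * (d : ℝ) ^ 3 / 4 := by ring
      rw [this] at e2
      have : (4 * δ * d) * (d : ℝ) ^ 3 = 4 * (δ * (d : ℝ) ^ 4) := by ring
      rw [this]; linarith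
    have e4 := le_of_mul_le_mul_right e3 (by positivity)
    have e5 : 4 * δ * d ≤ η / 8 * d := mul_le_mul_of_nonneg_right (by linarith) hdR.le
    have e6 : (Z.card : ℝ) ≤ d / 8 := by
      have : (Z.card : ℝ) * η ≤ d / 8 * η := by linarith
      exact le_of_mul_le_mul_right this hη
    have : (4 * Z.card : ℝ) < d := by linarith
    exact_mod_cast this
  have step : ∀ u : {u // u ∉ Z}, ∃ x : {u // u ∉ Z}, x.1 ∈ S u.1 ∧
      ((miss S (S u.1) (S x.1)).card : ℝ) ≤ η * (d : ℝ) ^ 2 := by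
    rintro ⟨u, hu⟩
    have hu' : 4 * (bad u).card ≤ d := by
      by_contra hcon
      exact hu (Finset.mem_filter.2 ⟨Finset.mem_univ _, not_le.1 hcon⟩)
    have hex : ∃ x ∈ S u, x ∉ bad u ∪ Z := by
      by_contra hcon
      push Not at hcon
      have h1 := Finset.card_le_card (show S u ⊆ bad u ∪ Z from fun x hx => hcon x hx)
      have h2 := Finset.card_union_le (bad u) Z
      rw [h u] at h1
      omega
    obtain ⟨x, hx, hx2⟩ := hex
    rw [Finset.mem_union, not_or] at hx2
    refine ⟨⟨x, hx2.2⟩, hx, ?_⟩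
    by_contra hcon
    exact hx2.1 (Finset.mem_filter.2 ⟨hx, not_le.1 hcon⟩)
  choose nx hnx using step
  have hstart : ∃ u, u ∉ Z := by
    obtain ⟨v⟩ := hne
    by_contra hcon
    push Not at hcon
    have := Finset.card_le_card (show S v ⊆ Z from fun x _ => hcon x)
    rw [h v] at this
    omega
  obtain ⟨u0, hu0⟩ := hstart
  refine ⟨fun k => (nx^[k] ⟨u0, hu0⟩).1, fun k => ?_⟩
  simp only [Function.iterate_succ_apply']
  exact hnx _
end Rb

set_option linter.unusedSectionVars false
namespace Rb

/-- real-number form of `count_lower` : error terms in terms of `d` -/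
lemma err_bound {n d k : ℕ} (hk : 2 ≤ k) (hn : n ≤ 3 * d) {M : ℕ} {η : ℝ} (hM : (M : ℝ) ≤ η * (d : ℝ) ^ 2) :
    (((k + 1) * (M * n ^ (k - 1)) + 2 * (k + 1) ^ 2 * n ^ k : ℕ) : ℝ)
      ≤ (k + 1) * 3 ^ k * η * (d : ℝ) ^ (k + 1) + 2 * (k + 1) ^ 2 * 3 ^ k * (d : ℝ) ^ k := by
  obtain ⟨j, rfl⟩ : ∃ j, k = j + 1 := ⟨k - 1, by omega⟩
  have hnR : (n : ℝ) ≤ 3 * d := by exact_mod_cast hn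
  have h1 : ∀ i : ℕ, (n : ℝ) ^ i ≤ 3 ^ i * (d : ℝ) ^ i := by
    intro i; rw [← mul_pow]; exact pow_le_pow_left₀ (by positivity) hnR i
  have hη : 0 ≤ η * (d : ℝ) ^ 2 := le_trans (by positivity) hM
  push_cast
  have e1 : (M : ℝ) * n ^ j ≤ (η * (d : ℝ) ^ 2) * (3 ^ j * (d : ℝ) ^ j) :=
    mul_le_mul hM (h1 j) (by positivity) hη
  have e2 : (η * (d : ℝ) ^ 2) * (3 ^ j * (d : ℝ) ^ j) ≤ (η * (d : ℝ) ^ 2) * (3 ^ (j + 1) * (d : ℝ) ^ j) := by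
    apply mul_le_mul_of_nonneg_left _ hη
    apply mul_le_mul_of_nonneg_right _ (by positivity)
    exact pow_le_pow_right₀ (by norm_num) (by omega)
  have e3 := h1 (j + 1)
  have f1 : ((j : ℝ) + 1 + 1) * (M * n ^ j) ≤ ((j : ℝ) + 1 + 1) * ((η * (d : ℝ) ^ 2) * (3 ^ (j + 1) * (d : ℝ) ^ j)) :=
    mul_le_mul_of_nonneg_left (e1.trans e2) (by positivity)
  have f2 : 2 * ((j : ℝ) + 1 + 1) ^ 2 * n ^ (j + 1) ≤ 2 * ((j : ℝ) + 1 + 1) ^ 2 * (3 ^ (j + 1) * (d : ℝ) ^ (j + 1)) :=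
    mul_le_mul_of_nonneg_left e3 (by positivity)
  refine (add_le_add f1 f2).trans (le_of_eq ?_)
  ring

lemma closed_tuple (k : ℕ) (hk : 2 ≤ k) {θ : ℝ} (hθ : 0 < θ) : ∃ η > (0 : ℝ), ∃ N : ℕ,
    ∀ (W : Type) [Fintype W] [DecidableEq W] (G : SimpleGraph W) (c : Sym2 W → ℕ) (S : W → Finset W) (d : ℕ),
      IsSel G c S → N ≤ d → Fintype.card W ≤ 3 * d → ∀ (Y : Fin (k + 1) → Finset W) (M : Finset (W × W)),
      (∀ j, θ * d ≤ ((Y j).card : ℝ)) → ((M.card : ℝ) ≤ η * (d : ℝ) ^ 2) →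
      (∀ j, ∀ a ∈ Y j, ∀ b ∈ Y (j + 1), b ∈ S a ∨ (a, b) ∈ M) → HasRainbowCycle G c (k + 1) := by
  set C1 : ℝ := (k + 1) * 3 ^ k with hC1
  set C2 : ℝ := 2 * (k + 1) ^ 2 * 3 ^ k with hC2
  have hC1p : 0 < C1 := by positivity
  have hC2p : 0 < C2 := by positivity
  obtain ⟨N, hN⟩ := exists_nat_gt (2 * C2 / θ ^ (k + 1))
  have hθp : 0 < θ ^ (k + 1) := by positivity
  refine ⟨θ ^ (k + 1) / (2 * C1), by positivity, N + 1, ?_⟩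
  intro W _ _ G c S d hS hdN hn Y M hY hM hYM
  by_contra hno
  have hd0 : (0 : ℝ) < d := by exact_mod_cast (by omega : 0 < d)
  have hX := count_lower hS hk hno (fun _ => false) (Fintype.piFinset Y) M (by
    intro x hx j
    rw [Fintype.mem_piFinset] at hx
    simp only [hd, tl, Bool.false_eq_true, if_false]
    exact hYM j _ (hx j) _ (hx (j + 1))) (by
    intro x _ j j' hne he
    simp only [hd, Bool.false_eq_true, if_false] at he
    exact absurd (add_right_cancel he) hne)
  have h1 : (θ * d) ^ (k + 1) ≤ ((Fintype.piFinset Y).card : ℝ) := by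
    rw [Fintype.card_piFinset]
    push_cast
    calc (θ * d) ^ (k + 1) = ∏ j : Fin (k + 1), θ * (d : ℝ) := by simp
      _ ≤ _ := Finset.prod_le_prod (fun _ _ => by positivity) (fun j _ => hY j)
  have h2 : ((Fintype.piFinset Y).card : ℝ) ≤ _ := (Nat.cast_le.2 hX).trans (err_bound hk hn hM)
  rw [← hC1, ← hC2] at h2
  have h3 : C1 * (θ ^ (k + 1) / (2 * C1)) * (d : ℝ) ^ (k + 1) = θ ^ (k + 1) * (d : ℝ) ^ (k + 1) / 2 := by
    field_simp
  rw [h3] at h2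
  rw [mul_pow] at h1
  have h4 : C2 * (d : ℝ) ^ k < θ ^ (k + 1) * (d : ℝ) ^ (k + 1) / 2 := by
    have e : θ ^ (k + 1) * (d : ℝ) ^ (k + 1) / 2 = (θ ^ (k + 1) * d / 2) * (d : ℝ) ^ k := by ring
    rw [e]
    apply mul_lt_mul_of_pos_right _ (by positivity)
    rw [div_lt_iff₀ hθp] at hN
    have : (N : ℝ) ≤ d := by exact_mod_cast (by omega : N ≤ d)
    nlinarith
  linarith
end Rb

set_option linter.unusedSectionVars false
namespace Rb

lemma three_parts {W : Type} [Fintype W] [DecidableEq W] {d : ℕ} {t : ℝ} (hn : Fintype.card W ≤ 3 * d)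
    {P1 P2 P3 P4 : Finset W} (h1 : P1.card = d) (h2 : P2.card = d) (h3 : P3.card = d) (h4 : P4.card = d)
    (o12 : ((P1 ∩ P2).card : ℝ) ≤ t) (o13 : ((P1 ∩ P3).card : ℝ) ≤ t) (o23 : ((P2 ∩ P3).card : ℝ) ≤ t)
    (o24 : ((P2 ∩ P4).card : ℝ) ≤ t) (o34 : ((P3 ∩ P4).card : ℝ) ≤ t) :
    (d : ℝ) - 2 * t ≤ ((P1 \ (P2 ∪ P3)).card : ℝ) ∧ (d : ℝ) - t ≤ ((P2 \ P3).card : ℝ) ∧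
    (((P1 \ (P2 ∪ P3)) \ P4).card : ℝ) ≤ 5 * t := by
  have nR : (Fintype.card W : ℝ) ≤ 3 * d := by exact_mod_cast hn
  have a1 : (P1 \ (P2 ∪ P3)).card + (P1 ∩ P2).card + (P1 ∩ P3).card ≥ d := by
    have e1 := Finset.card_sdiff_add_card_inter P1 (P2 ∪ P3)
    have e2 : (P1 ∩ (P2 ∪ P3)).card ≤ (P1 ∩ P2).card + (P1 ∩ P3).card := by
      rw [Finset.inter_union_distrib_left]; exact Finset.card_union_le _ _
    omega
  have a4 : (P4 \ (P2 ∪ P3)).card + (P2 ∩ P4).card + (P3 ∩ P4).card ≥ d := by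
    have e1 := Finset.card_sdiff_add_card_inter P4 (P2 ∪ P3)
    have e2 : (P4 ∩ (P2 ∪ P3)).card ≤ (P4 ∩ P2).card + (P4 ∩ P3).card := by
      rw [Finset.inter_union_distrib_left]; exact Finset.card_union_le _ _
    rw [Finset.inter_comm P4 P2, Finset.inter_comm P4 P3] at e2
    omega
  have a2 : (P2 \ P3).card + (P2 ∩ P3).card = d := by
    have e1 := Finset.card_sdiff_add_card_inter P2 P3
    omega
  have a23 : (P2 ∪ P3).card + (P2 ∩ P3).card = d + d := by
    have := Finset.card_union_add_card_inter P2 P3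
    omega
  set X := P1 \ (P2 ∪ P3)
  set Z := P4 \ (P2 ∪ P3)
  have b1 : (X ∪ Z).card + (P2 ∪ P3).card ≤ Fintype.card W := by
    have hdj : Disjoint (X ∪ Z) (P2 ∪ P3) := by
      rw [Finset.disjoint_union_left]
      exact ⟨Finset.sdiff_disjoint, Finset.sdiff_disjoint⟩
    rw [← Finset.card_union_of_disjoint hdj]
    exact Finset.card_le_univ _
  have b2 := Finset.card_union_add_card_inter X Z
  have b3 : (X \ P4).card + (X ∩ Z).card ≤ X.card := by
    have e1 := Finset.card_sdiff_add_card_inter X P4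
    have : (X ∩ Z).card ≤ (X ∩ P4).card :=
      Finset.card_le_card (Finset.inter_subset_inter_left Finset.sdiff_subset)
    omega
  have b4 : X.card ≤ d := by
    rw [← h1]; exact Finset.card_le_card Finset.sdiff_subset
  have a1R : ((P1 \ (P2 ∪ P3)).card : ℝ) + (P1 ∩ P2).card + (P1 ∩ P3).card ≥ d := by exact_mod_cast a1
  have a2R : ((P2 \ P3).card : ℝ) + (P2 ∩ P3).card = d := by exact_mod_cast a2
  have a4R : (Z.card : ℝ) + (P2 ∩ P4).card + (P3 ∩ P4).card ≥ d := by exact_mod_cast a4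
  have a23R : ((P2 ∪ P3).card : ℝ) + (P2 ∩ P3).card = d + d := by exact_mod_cast a23
  have b1R : ((X ∪ Z).card : ℝ) + (P2 ∪ P3).card ≤ Fintype.card W := by exact_mod_cast b1
  have b2R : ((X ∪ Z).card : ℝ) + (X ∩ Z).card = X.card + Z.card := by exact_mod_cast b2
  have b3R : ((X \ P4).card : ℝ) + (X ∩ Z).card ≤ X.card := by exact_mod_cast b3
  have b4R : (X.card : ℝ) ≤ d := by exact_mod_cast b4
  refine ⟨by linarith, by linarith, by linarith⟩

lemma parity_succ (m : ℕ) (j : Fin (2 * m + 3 + 1)) : (j + 1).val % 2 = (j.val + 1) % 2 := by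
  refine Fin.lastCases ?_ (fun i => ?_) j
  · rw [Fin.last_add_one]; simp; omega
  · rw [Fin.coeSucc_eq_succ]; simp

lemma rough (m : ℕ) {ζ : ℝ} (hζ : 0 < ζ) (hζ1 : ζ ≤ 1) : ∃ N : ℕ,
    ∀ (W : Type) [Fintype W] [DecidableEq W] (G : SimpleGraph W) (c : Sym2 W → ℕ) (S : W → Finset W) (d : ℕ),
      IsSel G c S → (∀ v, (S v).card = d) → N ≤ d → Fintype.card W ≤ 3 * d → Nonempty W →
      ¬ HasRainbowCycle G c (2 * m + 3 + 1) →
      ∃ Q : ZMod 3 → Finset W, (∀ i j u, u ∈ Q i → u ∈ Q j → i = j) ∧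
        (∀ i, (1 - ζ) * d ≤ ((Q i).card : ℝ)) ∧ (∀ i, (Q i).card ≤ d) ∧
        ∀ i, ((miss S (Q i) (Q (i + 1))).card : ℝ) ≤ ζ * (d : ℝ) ^ 2 := by
  set θ : ℝ := ζ / 6 with hθ
  have hθ0 : 0 < θ := by positivity
  obtain ⟨η0, hη0, N0, hct⟩ := closed_tuple (2 * m + 3) (by omega) hθ0
  set η : ℝ := min (η0 / 2) (ζ / 6) with hη
  have hηp : 0 < η := lt_min (by positivity) (by positivity)
  have hη1 : η ≤ η0 / 2 := min_le_left _ _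
  have hη2 : η ≤ ζ / 6 := min_le_right _ _
  set ε : ℝ := min (η / 256) (1 / 10) with hε
  have hεp : 0 < ε := lt_min (by positivity) (by norm_num)
  have hε1 : ε ≤ η / 256 := min_le_left _ _
  have hε2 : ε ≤ 1 / 10 := min_le_right _ _
  set e0 : ℝ := (ε ^ 2 / 100) ^ 4 / 81 with he0
  have he0p : 0 < e0 := by positivity
  set C2 : ℝ := 2 * ((2 * m + 3 : ℕ) + 1) ^ 2 * 3 ^ (2 * m + 3) with hC2
  obtain ⟨N1, hN1⟩ := exists_nat_gt (C2 / e0)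
  refine ⟨N0 + N1 + 1, ?_⟩
  intro W _ _ G c S d hS hcard hdN hn hne hno
  have hd0 : 0 < d := by omega
  have hdR : (0 : ℝ) < d := by exact_mod_cast hd0
  have hnR : (Fintype.card W : ℝ) ≤ 3 * d := by exact_mod_cast hn
  have htr : ((amat S) ^ (2 * (m + 2))).trace ≤ e0 * (d : ℝ) ^ (2 * (m + 2)) := by
    have h1 := trace_le hS (k := 2 * m + 3) (by omega) hno
    rw [show 2 * (m + 2) = 2 * m + 3 + 1 by ring]
    refine h1.trans ?_
    have h2 : (Fintype.card W : ℝ) ^ (2 * m + 3) ≤ 3 ^ (2 * m + 3) * (d : ℝ) ^ (2 * m + 3) := by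
      rw [← mul_pow]; exact pow_le_pow_left₀ (by positivity) hnR _
    have h3 : C2 ≤ e0 * d := by
      rw [div_lt_iff₀ he0p] at hN1
      have : (N1 : ℝ) ≤ d := by exact_mod_cast (by omega : N1 ≤ d)
      nlinarith
    calc 2 * (((2 * m + 3 : ℕ) : ℝ) + 1) ^ 2 * (Fintype.card W : ℝ) ^ (2 * m + 3)
        ≤ 2 * (((2 * m + 3 : ℕ) : ℝ) + 1) ^ 2 * (3 ^ (2 * m + 3) * (d : ℝ) ^ (2 * m + 3)) :=
          mul_le_mul_of_nonneg_left h2 (by positivity)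
      _ = C2 * (d : ℝ) ^ (2 * m + 3) := by rw [hC2]; ring
      _ ≤ (e0 * d) * (d : ℝ) ^ (2 * m + 3) := mul_le_mul_of_nonneg_right h3 (by positivity)
      _ = _ := by ring
  have hf := (amat_rowReg hcard).spectral hdR (Fintype.card_pos_iff.2 hne) hnR m hεp hε2 htr
  obtain ⟨p, hp⟩ := good_path hd0 hcard hne hn (δ := 8 * ε) hηp (by linarith) hf
  have ov1 : ∀ k, ((S (p k) ∩ S (p (k + 1))).card : ℝ) ≤ θ * d := by
    intro k
    by_contra hcon
    push Not at hcon
    apply hno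
    refine hct W G c S d hS (by omega) hn (fun _ => S (p k) ∩ S (p (k + 1))) (miss S (S (p k)) (S (p (k + 1))))
      (fun _ => hcon.le) ((hp k).2.trans (mul_le_mul_of_nonneg_right (by linarith) (by positivity))) ?_
    intro j a ha b hb
    by_cases h : b ∈ S a
    · exact Or.inl h
    · exact Or.inr (mem_miss.2 ⟨(Finset.mem_inter.1 ha).1, (Finset.mem_inter.1 hb).2, h⟩)
  have ov2 : ∀ k, ((S (p k) ∩ S (p (k + 2))).card : ℝ) ≤ θ * d := by
    intro k
    by_contra hcon
    push Not at hcon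
    apply hno
    refine hct W G c S d hS (by omega) hn
      (fun j => if j.val % 2 = 0 then S (p k) ∩ S (p (k + 2)) else S (p (k + 1)))
      (miss S (S (p k)) (S (p (k + 1))) ∪ miss S (S (p (k + 1))) (S (p (k + 2)))) ?_ ?_ ?_
    · intro j
      split_ifs
      · exact hcon.le
      · rw [hcard]; nlinarith
    · have e1 : ((miss S (S (p k)) (S (p (k + 1))) ∪ miss S (S (p (k + 1))) (S (p (k + 2)))).card : ℝ) ≤
        (miss S (S (p k)) (S (p (k + 1)))).card + (miss S (S (p (k + 1))) (S (p (k + 2)))).card := by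
        exact_mod_cast Finset.card_union_le _ _
      have e2 := (hp k).2
      have e3 := (hp (k + 1)).2
      have e4 : η * (d : ℝ) ^ 2 ≤ η0 / 2 * (d : ℝ) ^ 2 := mul_le_mul_of_nonneg_right hη1 (by positivity)
      have e5 : ((miss S (S (p (k + 1))) (S (p (k + 2)))).card : ℝ) ≤ η * (d : ℝ) ^ 2 := e3
      linarith
    · intro j a ha b hb
      rw [parity_succ] at hb
      by_cases h : b ∈ S a
      · exact Or.inl h
      right
      rw [Finset.mem_union]
      by_cases hj : j.val % 2 = 0
      · rw [if_pos hj] at ha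
        rw [if_neg (by omega)] at hb
        exact Or.inl (mem_miss.2 ⟨(Finset.mem_inter.1 ha).1, hb, h⟩)
      · rw [if_neg hj] at ha
        rw [if_pos (by omega)] at hb
        exact Or.inr (mem_miss.2 ⟨ha, (Finset.mem_inter.1 hb).2, h⟩)
  set P1 := S (p 0) with hP1
  set P2 := S (p 1) with hP2
  set P3 := S (p 2) with hP3
  set P4 := S (p 3) with hP4
  have c1 : P1.card = d := hcard _
  have c2 : P2.card = d := hcard _
  have c3 : P3.card = d := hcard _
  have c4 : P4.card = d := hcard _
  obtain ⟨r1, r2, r3⟩ := three_parts hn c1 c2 c3 c4 (ov1 0) (ov2 0) (ov1 1) (ov2 1) (ov1 2)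
  have m12 : ((miss S P1 P2).card : ℝ) ≤ η * (d : ℝ) ^ 2 := (hp 0).2
  have m23 : ((miss S P2 P3).card : ℝ) ≤ η * (d : ℝ) ^ 2 := (hp 1).2
  have m34 : ((miss S P3 P4).card : ℝ) ≤ η * (d : ℝ) ^ 2 := (hp 2).2
  set X := P1 \ (P2 ∪ P3) with hX
  have m31 : ((miss S P3 X).card : ℝ) ≤ η * (d : ℝ) ^ 2 + d * (5 * (θ * d)) := by
    have hsub : miss S P3 X ⊆ miss S P3 P4 ∪ P3 ×ˢ (X \ P4) := by
      rintro ⟨a, b⟩ hab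
      rw [mem_miss] at hab
      rw [Finset.mem_union, mem_miss, Finset.mem_product, Finset.mem_sdiff]
      by_cases hb : b ∈ P4
      · exact Or.inl ⟨hab.1, hb, hab.2.2⟩
      · exact Or.inr ⟨hab.1, hab.2.1, hb⟩
    have e1 : (miss S P3 X).card ≤ (miss S P3 P4).card + d * (X \ P4).card := by
      refine (Finset.card_le_card hsub).trans ((Finset.card_union_le _ _).trans ?_)
      rw [Finset.card_product, c3]
    have e1R : ((miss S P3 X).card : ℝ) ≤ (miss S P3 P4).card + d * (X \ P4).card := by exact_mod_cast e1
    have e2 : (d : ℝ) * (X \ P4).card ≤ d * (5 * (θ * d)) := mul_le_mul_of_nonneg_left r3 hdR.le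
    linarith
  have hηd : η * (d : ℝ) ^ 2 ≤ ζ / 6 * (d : ℝ) ^ 2 := mul_le_mul_of_nonneg_right hη2 (by positivity)
  have hζd : 0 < ζ * (d : ℝ) ^ 2 := by positivity
  have hζd1 : 0 < ζ * (d : ℝ) := by positivity
  have z3 : ∀ i : ZMod 3, i = 0 ∨ i = 1 ∨ i = 2 := by decide
  refine ⟨fun i => if i = 0 then X else if i = 1 then P2 \ P3 else P3, ?_, ?_, ?_, ?_⟩
  · intro i j u hi hj
    have k1 : (1 : ZMod 3) ≠ 0 := by decide
    have k2 : (2 : ZMod 3) ≠ 0 := by decide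
    have k3 : (2 : ZMod 3) ≠ 1 := by decide
    rcases z3 i with rfl | rfl | rfl <;> rcases z3 j with rfl | rfl | rfl <;>
      simp only [k1, k2, k3, if_true, if_false, hX, Finset.mem_sdiff, Finset.mem_union] at hi hj <;> tauto
  · intro i
    simp only [hθ] at *
    split_ifs
    · linarith
    · linarith
    · rw [c3]; linarith
  · intro i
    beta_reduce
    split_ifs
    · rw [← c1]; exact Finset.card_le_card Finset.sdiff_subset
    · rw [← c2]; exact Finset.card_le_card Finset.sdiff_subset
    · rw [c3]
  · intro i
    rcases z3 i with rfl | rfl | rfl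
    · show ((miss S X (P2 \ P3)).card : ℝ) ≤ _
      have : ((miss S X (P2 \ P3)).card : ℝ) ≤ (miss S P1 P2).card := by
        exact_mod_cast Finset.card_le_card (miss_mono Finset.sdiff_subset Finset.sdiff_subset)
      linarith
    · show ((miss S (P2 \ P3) P3).card : ℝ) ≤ _
      have : ((miss S (P2 \ P3) P3).card : ℝ) ≤ (miss S P2 P3).card := by
        exact_mod_cast Finset.card_le_card (miss_mono Finset.sdiff_subset (Finset.Subset.refl _))
      linarith
    · show ((miss S P3 X).card : ℝ) ≤ _
      have : (d : ℝ) * (5 * (θ * d)) = 5 / 6 * (ζ * (d : ℝ) ^ 2) := by rw [hθ]; ring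
      linarith
end Rb

set_option linter.unusedSectionVars false
namespace Rb

lemma miss_union {W : Type} [Fintype W] [DecidableEq W] {S : W → Finset W} {Q : ZMod 3 → Finset W} {ζ : ℝ} {d : ℕ}
    (hm : ∀ i, ((miss S (Q i) (Q (i + 1))).card : ℝ) ≤ ζ * (d : ℝ) ^ 2) :
    (((univ : Finset (ZMod 3)).biUnion fun i => miss S (Q i) (Q (i + 1))).card : ℝ) ≤ 3 * ζ * (d : ℝ) ^ 2 := by
  have h1 : (((univ : Finset (ZMod 3)).biUnion fun i => miss S (Q i) (Q (i + 1))).card : ℝ)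
      ≤ ∑ i : ZMod 3, ((miss S (Q i) (Q (i + 1))).card : ℝ) := by
    exact_mod_cast Finset.card_biUnion_le
  refine h1.trans ((Finset.sum_le_sum fun i _ => hm i).trans (le_of_eq ?_))
  rw [Finset.sum_const, Finset.card_univ, ZMod.card]
  simp; ring

lemma tuple_count {W : Type} [Fintype W] [DecidableEq W] {k : ℕ} (hk : 3 ≤ k)
    (TD : Finset (W × W × W)) (Y : Fin (k + 1) → Finset W) {r : ℝ} (hr : 0 ≤ r) (hY : ∀ j, r ≤ ((Y j).card : ℝ))
    (hTD : ∀ t ∈ TD, t.1 ∈ Y (Fin.last k) ∧ t.2.1 ∈ Y 1 ∧ t.2.2 ∈ Y 0) :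
    (TD.card : ℝ) * r ^ (k - 2) ≤
      (((Fintype.piFinset Y).filter fun x => (x (Fin.last k), x 1, x 0) ∈ TD).card : ℝ) := by
  have n1 : (1 : Fin (k + 1)) ≠ 0 := by
    intro h; have := congrArg Fin.val h
    rw [Fin.val_one'] at this; rw [Nat.mod_eq_of_lt (by omega)] at this; simp at this
  have n2 : Fin.last k ≠ 0 := by
    intro h; have := congrArg Fin.val h; simp at this; omega
  have n3 : Fin.last k ≠ 1 := by
    intro h; have := congrArg Fin.val h
    rw [Fin.val_one', Nat.mod_eq_of_lt (by omega)] at this; simp at this; omega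
  set T : Finset (Fin (k + 1)) := univ \ {Fin.last k, 1, 0} with hT
  have hTc : T.card = k - 2 := by
    rw [hT, Finset.card_sdiff_of_subset (Finset.subset_univ _), Finset.card_univ, Fintype.card_fin,
      Finset.card_insert_of_notMem, Finset.card_insert_of_notMem, Finset.card_singleton]
    · omega
    · simpa using n1
    · simp [n2, n3]
  have hinj : (TD ×ˢ Fintype.piFinset (fun j : T => Y j.1)).card ≤
      ((Fintype.piFinset Y).filter fun x => (x (Fin.last k), x 1, x 0) ∈ TD).card := by
    apply Finset.card_le_card_of_injOn
      (fun p j => if h : j ∈ T then p.2 ⟨j, h⟩ else if j = 0 then p.1.2.2 else if j = 1 then p.1.2.1 else p.1.1)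
    · rintro ⟨t, f⟩ hp
      rw [Finset.mem_coe, Finset.mem_product, Fintype.mem_piFinset] at hp
      rw [Finset.mem_coe, Finset.mem_filter, Fintype.mem_piFinset]
      obtain ⟨h1, h2, h3⟩ := hTD t hp.1
      constructor
      · intro j
        by_cases hj : j ∈ T
        · simp only [hj, dif_pos]; exact hp.2 ⟨j, hj⟩
        · simp only [hj, dif_neg, not_false_eq_true]
          split_ifs with a b
          · rw [a]; exact h3
          · rw [b]; exact h2
          · have : j = Fin.last k := by
              simp only [hT, Finset.mem_sdiff, Finset.mem_univ, true_and, not_not, Finset.mem_insert,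
                Finset.mem_singleton] at hj
              tauto
            rw [this]; exact h1
      · have t1 : Fin.last k ∉ T := by simp [hT]
        have t2 : 1 ∉ T := by simp [hT]
        have t3 : 0 ∉ T := by simp [hT]
        simp only [t1, t2, t3, dif_neg, not_false_eq_true, n1, n2, n3, if_true, if_false]
        exact hp.1
    · rintro ⟨t, f⟩ hp ⟨t', f'⟩ hp' he
      have t1 : Fin.last k ∉ T := by simp [hT]
      have t2 : 1 ∉ T := by simp [hT]
      have t3 : 0 ∉ T := by simp [hT]
      have e1 := congrFun he (Fin.last k)
      have e2 := congrFun he 1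
      have e3 := congrFun he 0
      simp only [t1, t2, t3, dif_neg, not_false_eq_true, n1, n2, n3, if_true, if_false] at e1 e2 e3
      have e4 : f = f' := by
        funext j
        have := congrFun he j.1
        simpa only [j.2, dif_pos] using this
      rw [e4, Prod.ext (x := t) (y := t') e1 (Prod.ext e2 e3)]
  have h2 : ((TD ×ˢ Fintype.piFinset (fun j : T => Y j.1)).card : ℝ) ≤ _ := Nat.cast_le.2 hinj
  refine le_trans ?_ h2
  rw [Finset.card_product, Fintype.card_piFinset]
  push_cast
  apply mul_le_mul_of_nonneg_left _ (by positivity)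
  calc r ^ (k - 2) = ∏ j : T, r := by simp [hTc]
    _ ≤ _ := Finset.prod_le_prod (fun _ _ => hr) (fun j _ => hY j)

/-- few triples with two differently coloured in-edges -/
lemma td_bound (k : ℕ) (hk : 3 ≤ k) {τ : ℝ} (hτ : 0 < τ) : ∃ ζ > (0 : ℝ), ∃ N : ℕ,
    ∀ (W : Type) [Fintype W] [DecidableEq W] (G : SimpleGraph W) (c : Sym2 W → ℕ) (S : W → Finset W) (d : ℕ),
      IsSel G c S → N ≤ d → Fintype.card W ≤ 3 * d → ¬ HasRainbowCycle G c (k + 1) →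
      ∀ Q : ZMod 3 → Finset W, (∀ i, (1 / 2 : ℝ) * d ≤ (Q i).card) →
      (∀ i, ((miss S (Q i) (Q (i + 1))).card : ℝ) ≤ ζ * (d : ℝ) ^ 2) →
      ∀ (σ : Fin (k + 1) → Bool) (cls : Fin (k + 1) → ZMod 3), (∀ j, cls (hd σ j) = cls (tl σ j) + 1) →
      hd σ 0 = 0 → tl σ 0 = 1 → hd σ (Fin.last k) = 0 → tl σ (Fin.last k) = Fin.last k →
      (∀ j j', j ≠ j' → hd σ j = hd σ j' → (j = 0 ∧ j' = Fin.last k) ∨ (j = Fin.last k ∧ j' = 0)) →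
      ∀ TD : Finset (W × W × W), (∀ t ∈ TD, t.1 ∈ Q (cls (Fin.last k)) ∧ t.2.1 ∈ Q (cls 1) ∧ t.2.2 ∈ Q (cls 0) ∧
        c s(t.1, t.2.2) ≠ c s(t.2.1, t.2.2)) → (TD.card : ℝ) ≤ τ * (d : ℝ) ^ 3 := by
  set C1 : ℝ := (k + 1) * 3 ^ k with hC1
  set C2 : ℝ := 2 * (k + 1) ^ 2 * 3 ^ k with hC2
  have hC1p : 0 < C1 := by positivity
  have hC2p : 0 < C2 := by positivity
  set ρ : ℝ := (1 / 2) ^ (k - 2) with hρ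
  have hρp : 0 < ρ := by positivity
  obtain ⟨N, hN⟩ := exists_nat_gt (2 * C2 / (τ * ρ))
  refine ⟨τ * ρ / (6 * C1), by positivity, N + 1, ?_⟩
  intro W _ _ G c S d hS hdN hn hno Q hQ hm σ cls hcls h00 h01 hl0 hll hhd TD hTD
  have hd0 : (0 : ℝ) < d := by exact_mod_cast (by omega : 0 < d)
  have hM := miss_union hm
  set M := (univ : Finset (ZMod 3)).biUnion fun i => miss S (Q i) (Q (i + 1)) with hMdef
  have hlow := tuple_count hk TD (fun j => Q (cls j)) (r := 1 / 2 * d) (by positivity) (fun j => hQ _)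
    (fun t ht => ⟨(hTD t ht).1, (hTD t ht).2.1, (hTD t ht).2.2.1⟩)
  set X := (Fintype.piFinset fun j => Q (cls j)).filter fun x => (x (Fin.last k), x 1, x 0) ∈ TD with hX
  have hup := count_lower hS (by omega) hno σ X M (by
    intro x hx j
    rw [hX, Finset.mem_filter, Fintype.mem_piFinset] at hx
    by_cases hc : x (hd σ j) ∈ S (x (tl σ j))
    · exact Or.inl hc
    · right
      rw [hMdef, Finset.mem_biUnion]
      refine ⟨cls (tl σ j), Finset.mem_univ _, ?_⟩
      rw [mem_miss]
      refine ⟨hx.1 _, ?_, hc⟩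
      rw [← hcls j]; exact hx.1 _) (by
    intro x hx j j' hne he
    rw [hX, Finset.mem_filter] at hx
    have := (hTD _ hx.2).2.2.2
    rcases hhd j j' hne he with ⟨rfl, rfl⟩ | ⟨rfl, rfl⟩
    · rw [h00, h01, hl0, hll]; exact fun h => this h.symm
    · rw [h00, h01, hl0, hll]; exact this)
  have h2 : (X.card : ℝ) ≤ _ := (Nat.cast_le.2 hup).trans (err_bound (by omega) hn hM)
  rw [← hC1, ← hC2] at h2
  have h3 : C1 * (3 * (τ * ρ / (6 * C1))) * (d : ℝ) ^ (k + 1) = τ * ρ / 2 * (d : ℝ) ^ (k + 1) := by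
    field_simp; norm_num
  rw [h3] at h2
  have h4 : C2 * (d : ℝ) ^ k ≤ τ * ρ / 2 * (d : ℝ) ^ (k + 1) := by
    have e : τ * ρ / 2 * (d : ℝ) ^ (k + 1) = (τ * ρ / 2 * d) * (d : ℝ) ^ k := by ring
    rw [e]
    apply mul_le_mul_of_nonneg_right _ (by positivity)
    rw [div_lt_iff₀ (by positivity)] at hN
    have : (N : ℝ) ≤ d := by exact_mod_cast (by omega : N ≤ d)
    have : (N : ℝ) * (τ * ρ) ≤ d * (τ * ρ) := mul_le_mul_of_nonneg_right this (by positivity)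
    linarith
  have h5 : (TD.card : ℝ) * (1 / 2 * d) ^ (k - 2) ≤ τ * ρ * (d : ℝ) ^ (k + 1) := by
    have : τ * ρ * (d : ℝ) ^ (k + 1) = τ * ρ / 2 * (d : ℝ) ^ (k + 1) + τ * ρ / 2 * (d : ℝ) ^ (k + 1) := by ring
    linarith
  have h6 : τ * ρ * (d : ℝ) ^ (k + 1) = (τ * (d : ℝ) ^ 3) * (1 / 2 * d) ^ (k - 2) := by
    rw [mul_pow, ← hρ]
    have : (d : ℝ) ^ (k + 1) = d ^ 3 * d ^ (k - 2) := by rw [← pow_add]; congr 1; omega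
    rw [this]; ring
  rw [h6] at h5
  exact le_of_mul_le_mul_right h5 (by positivity)

lemma case_div (k : ℕ) (hk : 2 ≤ k) (h3 : ((k + 1 : ℕ) : ZMod 3) = 0) : ∃ ζ > (0 : ℝ), ∃ N : ℕ,
    ∀ (W : Type) [Fintype W] [DecidableEq W] (G : SimpleGraph W) (c : Sym2 W → ℕ) (S : W → Finset W) (d : ℕ),
      IsSel G c S → N ≤ d → Fintype.card W ≤ 3 * d →
      ∀ Q : ZMod 3 → Finset W, (∀ i, (1 / 2 : ℝ) * d ≤ (Q i).card) →
      (∀ i, ((miss S (Q i) (Q (i + 1))).card : ℝ) ≤ ζ * (d : ℝ) ^ 2) → HasRainbowCycle G c (k + 1) := by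
  obtain ⟨η, hη, N, h⟩ := closed_tuple k hk (θ := 1 / 2) (by norm_num)
  refine ⟨η / 3, by positivity, N, ?_⟩
  intro W _ _ G c S d hS hdN hn Q hQ hm
  have hM := miss_union hm
  refine h W G c S d hS hdN hn (fun j => Q ((j.val : ℕ) : ZMod 3)) _ (fun j => hQ _) (hM.trans (le_of_eq (by ring))) ?_
  intro j a ha b hb
  have e : (((j + 1 : Fin (k + 1)).val : ℕ) : ZMod 3) = ((j.val : ℕ) : ZMod 3) + 1 := by
    rw [Fin.val_add_one]
    split_ifs with hj
    · rw [hj, Fin.val_last]; push_cast at h3 ⊢; exact h3.symm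
    · push_cast; rfl
  by_cases hc : b ∈ S a
  · exact Or.inl hc
  · right
    rw [Finset.mem_biUnion]
    refine ⟨((j.val : ℕ) : ZMod 3), Finset.mem_univ _, ?_⟩
    rw [mem_miss]
    exact ⟨ha, e ▸ hb, hc⟩
end Rb

set_option linter.unusedSectionVars false
namespace Rb

lemma fin_val_succ {k : ℕ} (j : Fin (k + 1)) : (j.val < k ∧ (j + 1).val = j.val + 1) ∨ (j.val = k ∧ (j + 1).val = 0) := by
  rw [Fin.val_add_one]
  have := j.2
  split_ifs with hj
  · right; exact ⟨by rw [hj, Fin.val_last], rfl⟩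
  · left
    refine ⟨?_, rfl⟩
    have : j.val ≠ k := fun h => hj (Fin.ext (by rw [Fin.val_last]; exact h))
    omega

lemma tdiff (k : ℕ) (hk : 3 ≤ k) (h3 : ((k + 1 : ℕ) : ZMod 3) ≠ 0) {τ : ℝ} (hτ : 0 < τ) : ∃ ζ > (0 : ℝ), ∃ N : ℕ,
    ∀ (W : Type) [Fintype W] [DecidableEq W] (G : SimpleGraph W) (c : Sym2 W → ℕ) (S : W → Finset W) (d : ℕ),
      IsSel G c S → N ≤ d → Fintype.card W ≤ 3 * d → ¬ HasRainbowCycle G c (k + 1) →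
      ∀ Q : ZMod 3 → Finset W, (∀ i, (1 / 2 : ℝ) * d ≤ (Q i).card) →
      (∀ i, ((miss S (Q i) (Q (i + 1))).card : ℝ) ≤ ζ * (d : ℝ) ^ 2) →
      ∀ (s : ZMod 3), ∀ TD : Finset (W × W × W), (∀ t ∈ TD, t.1 ∈ Q s ∧ t.2.1 ∈ Q s ∧ t.2.2 ∈ Q (s + 1) ∧
        c s(t.1, t.2.2) ≠ c s(t.2.1, t.2.2)) → (TD.card : ℝ) ≤ τ * (d : ℝ) ^ 3 := by
  obtain ⟨ζ, hζ, N, h⟩ := td_bound k hk hτ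
  refine ⟨ζ, hζ, N, ?_⟩
  intro W _ _ G c S d hS hdN hn hno Q hQ hm s TD hTD
  have z3 : ∀ i : ZMod 3, i ≠ 0 → i = 1 ∨ i = 2 := by decide
  have v1 : (1 : Fin (k + 1)).val = 1 := by rw [Fin.val_one', Nat.mod_eq_of_lt (by omega)]
  have z30 : (3 : ZMod 3) = 0 := by decide
  have hkz : ((k : ℕ) : ZMod 3) + 1 = ((k + 1 : ℕ) : ZMod 3) := by push_cast; rfl
  rcases z3 _ h3 with h1 | h2
  · -- two flips
    rw [h1] at hkz
    have hk0 : ((k : ℕ) : ZMod 3) = 0 := by linear_combination hkz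
    refine h W G c S d hS hdN hn hno Q hQ hm (fun j => decide (j.val < 2))
      (fun j => if j.val = 0 then s + 1 else if j.val = 1 then s else s + (j.val : ℕ)) ?_ ?_ ?_ ?_ ?_ ?_ TD ?_
    · intro j
      simp only [hd, tl, decide_eq_true_eq]
      rcases fin_val_succ j with ⟨hlt, hv⟩ | ⟨heq, hv⟩
      · by_cases a : j.val < 2
        · simp only [a, if_true, hv]
          rcases (by omega : j.val = 0 ∨ j.val = 1) with e | e
          · rw [e]; norm_num
          · rw [e]; norm_num; linear_combination -z30
        · simp only [a, if_false, hv]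
          rw [if_neg (by omega), if_neg (by omega), if_neg (by omega), if_neg (by omega)]
          push_cast; ring
      · have a : ¬ j.val < 2 := by omega
        simp only [a, if_false, hv]
        rw [if_pos trivial, if_neg (by omega), if_neg (by omega), heq, hk0]
        ring
    · simp [hd]
    · simp [tl]
    · simp [hd]; omega
    · simp [tl]; omega
    · intro j j' hne he
      simp only [hd, decide_eq_true_eq] at he
      have he2 := congrArg Fin.val he
      have hne2 : j.val ≠ j'.val := fun hh => hne (Fin.ext hh)
      simp only [Fin.ext_iff, Fin.val_last, Fin.val_zero]
      rcases fin_val_succ j with ⟨hlt, hv⟩ | ⟨heq, hv⟩ <;> rcases fin_val_succ j' with ⟨hlt', hv'⟩ | ⟨heq', hv'⟩ <;>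
        (split_ifs at he2 <;> omega)
    · intro t ht
      have := hTD t ht
      simp only [Fin.val_last, v1]
      rw [if_neg (by omega), if_neg (by omega), hk0]
      simpa using this
  · -- one flip
    rw [h2] at hkz
    have hk0 : ((k : ℕ) : ZMod 3) = 1 := by linear_combination hkz
    refine h W G c S d hS hdN hn hno Q hQ hm (fun j => decide (j.val < 1))
      (fun j => if j.val = 0 then s + 1 else s + (j.val : ℕ) + 2) ?_ ?_ ?_ ?_ ?_ ?_ TD ?_
    · intro j
      simp only [hd, tl, decide_eq_true_eq]
      rcases fin_val_succ j with ⟨hlt, hv⟩ | ⟨heq, hv⟩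
      · by_cases a : j.val < 1
        · simp only [a, if_true, hv]
          have e : j.val = 0 := by omega
          rw [e]; norm_num; linear_combination -z30
        · simp only [a, if_false, hv]
          rw [if_neg (by omega), if_neg (by omega)]
          push_cast; ring
      · have a : ¬ j.val < 1 := by omega
        simp only [a, if_false, hv]
        rw [if_pos trivial, if_neg (by omega), heq, hk0]
        linear_combination -z30
    · simp [hd]
    · simp [tl]
    · simp [hd]
    · simp [tl]
    · intro j j' hne he
      simp only [hd, decide_eq_true_eq] at he
      have he2 := congrArg Fin.val he
      have hne2 : j.val ≠ j'.val := fun hh => hne (Fin.ext hh)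
      simp only [Fin.ext_iff, Fin.val_last, Fin.val_zero]
      rcases fin_val_succ j with ⟨hlt, hv⟩ | ⟨heq, hv⟩ <;> rcases fin_val_succ j' with ⟨hlt', hv'⟩ | ⟨heq', hv'⟩ <;>
        (split_ifs at he2 <;> omega)
    · intro t ht
      have := hTD t ht
      simp only [Fin.val_last, v1]
      rw [if_neg (by omega), hk0]
      have e : s + 1 + 2 = s := by linear_combination z30
      simpa [e] using this
end Rb

set_option linter.unusedSectionVars false
namespace Rb
variable {W : Type} [Fintype W] [DecidableEq W] {G : SimpleGraph W} {c : Sym2 W → ℕ}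

lemma mc_arith {d p g ms D IN T : ℕ} (hd0 : 0 < d) (hP : (3 / 4 : ℝ) * d ≤ p) (hP' : p ≤ d)
    (e1 : g ≤ ms + D) (e2 : IN + ms = p) (e3 : D ≤ IN) (e4 : IN * D ≤ T) :
    (g : ℝ) ≤ 5 * ms + 2 / d * T := by
  have hdR : (0 : ℝ) < d := by exact_mod_cast hd0
  have hP'R : (p : ℝ) ≤ d := by exact_mod_cast hP'
  have e1R : (g : ℝ) ≤ ms + D := by exact_mod_cast e1
  have e2R : (IN : ℝ) + ms = p := by exact_mod_cast e2
  have e3R : (D : ℝ) ≤ IN := by exact_mod_cast e3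
  have e4R : (IN : ℝ) * D ≤ T := by exact_mod_cast e4
  have p1 : (0 : ℝ) ≤ ms := by positivity
  have p2 : (0 : ℝ) ≤ D := by positivity
  have p3 : (0 : ℝ) ≤ 2 / d * T := by positivity
  by_cases hbig : (d : ℝ) ≤ 4 * ms
  · linarith
  · have hN : (d : ℝ) / 2 ≤ IN := by linarith
    have : (d : ℝ) / 2 * D ≤ T := (mul_le_mul_of_nonneg_right hN p2).trans e4R
    have : (D : ℝ) ≤ 2 / d * T := by
      rw [div_mul_eq_mul_div, le_div_iff₀ hdR]; linarith
    linarith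

lemma main_color {S : W → Finset W} {P R : Finset W} {ζ τ : ℝ} {d : ℕ} (hd0 : 0 < d)
    (hP : (3 / 4 : ℝ) * d ≤ P.card) (hP' : P.card ≤ d)
    (hm : ((miss S P R).card : ℝ) ≤ ζ * (d : ℝ) ^ 2)
    (hTD : ∀ TD : Finset (W × W × W), (∀ t ∈ TD, t.1 ∈ P ∧ t.2.1 ∈ P ∧ t.2.2 ∈ R ∧
        c s(t.1, t.2.2) ≠ c s(t.2.1, t.2.2)) → (TD.card : ℝ) ≤ τ * (d : ℝ) ^ 3) :
    ∃ m : W → ℕ, ∑ y ∈ R, ((P.filter fun u => ¬ (y ∈ S u ∧ c s(u, y) = m y)).card : ℝ)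
      ≤ (5 * ζ + 2 * τ) * (d : ℝ) ^ 2 := by
  have hdR : (0 : ℝ) < d := by exact_mod_cast hd0
  have hP'R : (P.card : ℝ) ≤ d := by exact_mod_cast hP'
  set IN : W → Finset W := fun y => P.filter fun u => y ∈ S u with hIN
  set D : W → ℕ → Finset W := fun y a => (IN y).filter fun u => c s(u, y) ≠ a with hD
  set TDy : W → ℕ := fun y => ∑ u ∈ IN y, (D y (c s(u, y))).card with hTDy
  have hex : ∀ y, ∃ a, (IN y).card * (D y a).card ≤ TDy y := by
    intro y
    by_cases hne : (IN y).Nonempty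
    · obtain ⟨u, hu, hmin⟩ := Finset.exists_min_image (IN y) (fun u => (D y (c s(u, y))).card) hne
      refine ⟨c s(u, y), ?_⟩
      calc (IN y).card * (D y (c s(u, y))).card = ∑ _v ∈ IN y, (D y (c s(u, y))).card := by simp
        _ ≤ _ := Finset.sum_le_sum hmin
    · rw [Finset.not_nonempty_iff_eq_empty] at hne
      exact ⟨0, by simp [hne]⟩
  choose m hmm using hex
  refine ⟨m, ?_⟩
  set ms : W → Finset W := fun y => P.filter fun u => ¬ y ∈ S u with hms
  have hsum1 : ∑ y ∈ R, ((ms y).card : ℝ) = ((miss S P R).card : ℝ) := by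
    rw [miss, Finset.card_filter, Finset.sum_product_right]
    push_cast
    refine Finset.sum_congr rfl fun y _ => ?_
    rw [hms, Finset.card_filter]; push_cast; rfl
  have hsum2 : ∑ y ∈ R, (TDy y : ℝ) ≤ τ * (d : ℝ) ^ 3 := by
    set F := (R.sigma fun y => (IN y).sigma fun u => D y (c s(u, y))) with hF
    set f : (Sigma fun _ : W => Sigma fun _ : W => W) → W × W × W := fun x => (x.2.2, x.2.1, x.1) with hf
    have hinj : Function.Injective f := by
      rintro ⟨a, b, e⟩ ⟨a', b', e'⟩ h
      simp only [hf, Prod.mk.injEq] at h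
      obtain ⟨rfl, rfl, rfl⟩ := h
      rfl
    have h1 := hTD (F.image f) (by
      intro t ht
      rw [Finset.mem_image] at ht
      obtain ⟨⟨y, u, u'⟩, hx, rfl⟩ := ht
      simp only [hF, Finset.mem_sigma, hD, hIN, Finset.mem_filter] at hx
      exact ⟨hx.2.2.1.1, hx.2.1.1, hx.1, hx.2.2.2⟩)
    rw [Finset.card_image_of_injective _ hinj, hF, Finset.card_sigma] at h1
    simp only [Finset.card_sigma] at h1
    push_cast at h1
    simpa [hTDy] using h1
  have hy : ∀ y ∈ R, ((P.filter fun u => ¬ (y ∈ S u ∧ c s(u, y) = m y)).card : ℝ)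
      ≤ 5 * (ms y).card + 2 / d * TDy y := by
    intro y _
    have e1 : (P.filter fun u => ¬ (y ∈ S u ∧ c s(u, y) = m y)).card ≤ (ms y).card + (D y (m y)).card := by
      refine (Finset.card_le_card ?_).trans (Finset.card_union_le _ _)
      intro u hu
      simp only [hms, hD, hIN, Finset.mem_union, Finset.mem_filter] at hu ⊢
      tauto
    have e2 : (IN y).card + (ms y).card = P.card := Finset.card_filter_add_card_filter_not _
    have e3 : (D y (m y)).card ≤ (IN y).card := Finset.card_filter_le _ _
    exact mc_arith hd0 hP hP' e1 e2 e3 (hmm y)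
  calc _ ≤ ∑ y ∈ R, (5 * ((ms y).card : ℝ) + 2 / d * TDy y) := Finset.sum_le_sum hy
    _ = 5 * ∑ y ∈ R, ((ms y).card : ℝ) + 2 / d * ∑ y ∈ R, (TDy y : ℝ) := by
      rw [Finset.sum_add_distrib, Finset.mul_sum, Finset.mul_sum]
    _ ≤ 5 * (ζ * (d : ℝ) ^ 2) + 2 / d * (τ * (d : ℝ) ^ 3) := by
      rw [hsum1]; gcongr
    _ = _ := by field_simp
end Rb

set_option linter.unusedSectionVars false
namespace Rb
variable {W : Type} [Fintype W] [DecidableEq W] {G : SimpleGraph W} {c : Sym2 W → ℕ}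

lemma markov {d : ℕ} (hd0 : 0 < d) (A : Finset W) (f : W → ℕ) {κ : ℝ} (h : ∑ x ∈ A, (f x : ℝ) ≤ κ * (d : ℝ) ^ 2) :
    ((A.filter fun x => d < 4000 * f x).card : ℝ) ≤ 4000 * κ * d := by
  have hdR : (0 : ℝ) < d := by exact_mod_cast hd0
  have h1 : ((A.filter fun x => d < 4000 * f x).card : ℝ) * d ≤ 4000 * κ * d * d := by
    calc ((A.filter fun x => d < 4000 * f x).card : ℝ) * d = ∑ _x ∈ A.filter (fun x => d < 4000 * f x), (d : ℝ) := by simp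
      _ ≤ ∑ x ∈ A.filter (fun x => d < 4000 * f x), 4000 * (f x : ℝ) := by
        refine Finset.sum_le_sum fun x hx => ?_
        have := (Finset.mem_filter.1 hx).2
        exact_mod_cast this.le
      _ ≤ ∑ x ∈ A, 4000 * (f x : ℝ) :=
        Finset.sum_le_sum_of_subset_of_nonneg (Finset.filter_subset _ _) (fun _ _ _ => by positivity)
      _ = 4000 * ∑ x ∈ A, (f x : ℝ) := by rw [Finset.mul_sum]
      _ ≤ _ := by nlinarith
  exact le_of_mul_le_mul_right h1 hdR

lemma clean {S : W → Finset W} {Q : ZMod 3 → Finset W} {d : ℕ} (hS : IsSel G c S) (hd0 : 0 < d)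
    (hdisj : ∀ i j u, u ∈ Q i → u ∈ Q j → i = j)
    (hlow : ∀ i, (1 - 1 / 100000 : ℝ) * d ≤ (Q i).card) (hup : ∀ i, (Q i).card ≤ d)
    (hn : Fintype.card W ≤ 3 * d) (mi : ZMod 3 → W → ℕ)
    (hmi : ∀ i, ∑ y ∈ Q (i + 1), (((Q i).filter fun u => ¬ (y ∈ S u ∧ c s(u, y) = mi i y)).card : ℝ)
      ≤ (1 / 10 ^ 9 : ℝ) * (d : ℝ) ^ 2) : ∃ V m, IsCore G c d V m := by
  have hdR : (0 : ℝ) < d := by exact_mod_cast hd0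
  obtain ⟨m, hm⟩ : ∃ m : W → ℕ, ∀ i, ∀ y ∈ Q (i + 1), m y = mi i y := by
    refine ⟨fun y => if y ∈ Q 0 then mi 2 y else if y ∈ Q 1 then mi 0 y else mi 1 y, ?_⟩
    have z3 : ∀ i : ZMod 3, i = 0 ∨ i = 1 ∨ i = 2 := by decide
    have q0 : (0 + 1 : ZMod 3) = 1 := by decide
    have q1 : (1 + 1 : ZMod 3) = 2 := by decide
    have q2 : (2 + 1 : ZMod 3) = 0 := by decide
    intro i y hy
    rcases z3 i with rfl | rfl | rfl
    · rw [q0] at hy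
      have : y ∉ Q 0 := fun h => absurd (hdisj _ _ _ h hy) (by decide)
      simp [this, hy]
    · rw [q1] at hy
      have h0 : y ∉ Q 0 := fun h => absurd (hdisj _ _ _ h hy) (by decide)
      have h1 : y ∉ Q 1 := fun h => absurd (hdisj _ _ _ h hy) (by decide)
      simp [h0, h1]
    · rw [q2] at hy
      simp [hy]
  set bad : W → W → Prop := fun u y => ¬ (y ∈ S u ∧ c s(u, y) = m y) with hbad
  have hdec : ∀ u, DecidablePred (bad u) := fun u y => by rw [hbad]; infer_instance
  have hdec2 : ∀ y, DecidablePred (fun u => bad u y) := fun y u => hdec u y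
  set go : ZMod 3 → W → ℕ := fun i u => ((Q (i + 1)).filter fun y => bad u y).card with hgo
  set gi : ZMod 3 → W → ℕ := fun i y => ((Q (i - 1)).filter fun u => bad u y).card with hgi
  have s1 : ∀ i, ∑ y ∈ Q (i + 1), (((Q i).filter fun u => bad u y).card : ℝ) ≤ (1 / 10 ^ 9 : ℝ) * (d : ℝ) ^ 2 := by
    intro i
    refine le_trans (le_of_eq (Finset.sum_congr rfl fun y hy => ?_)) (hmi i)
    congr 2
    ext u
    simp only [hbad, Finset.mem_filter, hm i y hy]
  have sgi : ∀ i, ∑ y ∈ Q i, (gi i y : ℝ) ≤ (1 / 10 ^ 9 : ℝ) * (d : ℝ) ^ 2 := by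
    intro i
    have := s1 (i - 1)
    rwa [sub_add_cancel] at this
  have sgo : ∀ i, ∑ u ∈ Q i, (go i u : ℝ) ≤ (1 / 10 ^ 9 : ℝ) * (d : ℝ) ^ 2 := by
    intro i
    refine le_trans (le_of_eq ?_) (s1 i)
    simp only [hgo]
    have := Finset.sum_card_bipartiteAbove_eq_sum_card_bipartiteBelow (s := Q i) (t := Q (i + 1)) bad
    simp only [Finset.bipartiteAbove, Finset.bipartiteBelow] at this
    exact_mod_cast this
  set V : ZMod 3 → Finset W := fun i => (Q i).filter fun u => 4000 * go i u ≤ d ∧ 4000 * gi i u ≤ d with hVdef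
  have hVQ : ∀ i, V i ⊆ Q i := fun i => Finset.filter_subset _ _
  have hVc : ∀ i, (1 - 1 / 50000 : ℝ) * d ≤ (V i).card := by
    intro i
    have h1 : (Q i).card ≤ (V i).card + (((Q i).filter fun x => d < 4000 * go i x).card +
        ((Q i).filter fun x => d < 4000 * gi i x).card) := by
      refine le_trans (Finset.card_le_card ?_) ((Finset.card_union_le _ _).trans
        (Nat.add_le_add_left (Finset.card_union_le _ _) _))
      intro x hx
      simp only [hVdef, Finset.mem_union, Finset.mem_filter]
      by_cases a : 4000 * go i x ≤ d
      · by_cases b : 4000 * gi i x ≤ d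
        · exact Or.inl ⟨hx, a, b⟩
        · exact Or.inr (Or.inr ⟨hx, by omega⟩)
      · exact Or.inr (Or.inl ⟨hx, by omega⟩)
    have h1R : ((Q i).card : ℝ) ≤ (V i).card + (((Q i).filter fun x => d < 4000 * go i x).card +
        ((Q i).filter fun x => d < 4000 * gi i x).card) := by
      rw [← Nat.cast_add, ← Nat.cast_add]; exact Nat.cast_le.2 h1
    have h2 := markov hd0 (Q i) (go i) (sgo i)
    have h3 := markov hd0 (Q i) (gi i) (sgi i)
    have h4 := hlow i
    norm_num at h2 h3 h4 ⊢
    linarith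
  have hVn : ∀ i, 49999 * d ≤ 50000 * (V i).card := by
    intro i
    have : (49999 * d : ℝ) ≤ 50000 * (V i).card := by have := hVc i; linarith
    rw [← Nat.cast_ofNat (n := 49999), ← Nat.cast_ofNat (n := 50000), ← Nat.cast_mul, ← Nat.cast_mul] at this
    exact Nat.cast_le.1 this
  have hsplit : ∀ (A B : Finset W) (p : W → Prop) [DecidablePred p], A ⊆ B →
      A.card ≤ (A.filter fun x => ¬ p x).card + (B.filter fun x => p x).card := by
    intro A B p _ hAB
    have h1 : (A.filter fun x => p x).card + (A.filter fun x => ¬ p x).card = A.card :=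
      Finset.card_filter_add_card_filter_not (s := A) p
    have h2 : (A.filter fun x => p x).card ≤ (B.filter fun x => p x).card :=
      Finset.card_le_card (Finset.filter_subset_filter p hAB)
    omega
  refine ⟨V, m, ?_, ?_, ?_, ?_, ?_, ?_⟩
  · intro i j u hi hj
    exact hdisj i j u (hVQ i hi) (hVQ j hj)
  · intro i u u' hu hu' he
    have a1 : 4000 * gi i u ≤ d := (Finset.mem_filter.1 hu).2.2
    have a2 : 4000 * gi i u' ≤ d := (Finset.mem_filter.1 hu').2.2
    have hex : ∃ x ∈ Q (i - 1), ¬ bad x u ∧ ¬ bad x u' := by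
      by_contra hcon
      have h1 : (Q (i - 1)).card ≤ gi i u + gi i u' := by
        refine le_trans (Finset.card_le_card ?_) (Finset.card_union_le _ _)
        intro x hx
        simp only [Finset.mem_union, Finset.mem_filter]
        by_cases hb : bad x u
        · exact Or.inl ⟨hx, hb⟩
        · exact Or.inr ⟨hx, by_contra fun hb' => hcon ⟨x, hx, hb, hb'⟩⟩
      have h2 := hVn (i - 1)
      have h3 := Finset.card_le_card (hVQ (i - 1))
      omega
    obtain ⟨x, _, h1, h2⟩ := hex
    simp only [hbad, not_not] at h1 h2
    exact hS.inj x u u' h1.1 h2.1 (by rw [h1.2, h2.2, he])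
  · intro i
    have h3 := Finset.card_le_card (hVQ i)
    have := hup i
    omega
  · intro i v hv
    have a1 : 4000 * go i v ≤ d := (Finset.mem_filter.1 hv).2.1
    have h1 := hsplit (V (i + 1)) (Q (i + 1)) (bad v) (hVQ _)
    have h2 : ((V (i + 1)).filter fun x => ¬ bad v x).card ≤ (OO G c V m (i + 1) v).card := by
      refine Finset.card_le_card ?_
      intro x hx
      rw [Finset.mem_filter] at hx
      rw [mem_OO]
      have := hx.2
      simp only [hbad, not_not] at this
      exact ⟨hx.1, hS.adj _ _ this.1, this.2⟩
    have h3 := hVn (i + 1)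
    have h4 : ((Q (i + 1)).filter fun x => bad v x).card = go i v := rfl
    omega
  · intro i v hv
    have a1 : 4000 * gi i v ≤ d := (Finset.mem_filter.1 hv).2.2
    have h1 := hsplit (V (i - 1)) (Q (i - 1)) (fun u => bad u v) (hVQ _)
    have h2 : ((V (i - 1)).filter fun x => ¬ bad x v).card ≤ (II G c V m (i - 1) v).card := by
      refine Finset.card_le_card ?_
      intro x hx
      rw [Finset.mem_filter] at hx
      rw [mem_II]
      have := hx.2
      simp only [hbad, not_not] at this
      exact ⟨hx.1, hS.adj _ _ this.1, this.2⟩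
    have h3 := hVn (i - 1)
    have h4 : ((Q (i - 1)).filter fun x => bad x v).card = gi i v := rfl
    omega
  · refine ⟨univ \ (univ : Finset (ZMod 3)).biUnion V, ?_, ?_⟩
    · have h1 : ((univ : Finset (ZMod 3)).biUnion V).card = ∑ i, (V i).card := by
        apply Finset.card_biUnion
        intro i _ j _ hij
        refine Finset.disjoint_left.2 ?_
        intro u hi hj
        exact hij (hdisj i j u (hVQ i hi) (hVQ j hj))
      have h2 : ∑ i, (V i).card = (V 0).card + (V 1).card + (V 2).card := by
        show ∑ i : Fin 3, (V i).card = _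
        rw [Fin.sum_univ_three]; rfl
      have h3 := Finset.card_sdiff_of_subset (Finset.subset_univ ((univ : Finset (ZMod 3)).biUnion V))
      rw [h1, h2, Finset.card_univ] at h3
      have a := hVn 0
      have b := hVn 1
      have e := hVn 2
      omega
    · intro w hw
      simp only [Finset.mem_sdiff, Finset.mem_univ, true_and, not_not, Finset.mem_biUnion] at hw
      exact hw
end Rb

set_option linter.unusedSectionVars false
namespace Rb

lemma exists_sel {W : Type} [Fintype W] [DecidableEq W] {G : SimpleGraph W} {c : Sym2 W → ℕ} {d : ℕ}
    (h : ∀ w, d ≤ colorDeg G c w) : ∃ S : W → Finset W, IsSel G c S ∧ ∀ v, (S v).card = d := by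
  have h1 : ∀ v, ∃ T : Finset W, T.card = d ∧ (∀ u ∈ T, G.Adj v u) ∧
      ∀ u ∈ T, ∀ u' ∈ T, c s(v, u) = c s(v, u') → u = u' := by
    intro v
    have hv := h v
    rw [colorDeg_eq] at hv
    obtain ⟨C, hC, hCd⟩ := Finset.exists_subset_card_eq hv
    have hg : ∀ α, ∃ u, α ∈ C → G.Adj v u ∧ c s(v, u) = α := by
      intro α
      by_cases hα : α ∈ C
      · obtain ⟨u, hu⟩ := mem_CS.1 (hC hα)
        exact ⟨u, fun _ => hu⟩
      · exact ⟨v, fun h => absurd h hα⟩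
    choose g hg using hg
    refine ⟨C.image g, ?_, ?_, ?_⟩
    · rw [Finset.card_image_of_injOn, hCd]
      intro a ha b hb hab
      rw [← (hg a ha).2, ← (hg b hb).2]
      rw [hab]
    · intro u hu
      obtain ⟨a, ha, rfl⟩ := Finset.mem_image.1 hu
      exact (hg a ha).1
    · intro u hu u' hu' he
      obtain ⟨a, ha, rfl⟩ := Finset.mem_image.1 hu
      obtain ⟨b, hb, rfl⟩ := Finset.mem_image.1 hu'
      rw [(hg a ha).2, (hg b hb).2] at he
      rw [he]
  choose S hS using h1
  exact ⟨S, ⟨fun v u hu => (hS v).2.1 u hu, fun v u u' hu hu' => (hS v).2.2 u hu u' hu'⟩, fun v => (hS v).1⟩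

lemma main (m : ℕ) : ∃ N : ℕ, ∀ (W : Type) [Fintype W] [DecidableEq W] (G : SimpleGraph W) (c : Sym2 W → ℕ) (d : ℕ),
    N ≤ d → Nonempty W → Fintype.card W + 5 ≤ 3 * d → (∀ w, d ≤ colorDeg G c w) →
    HasRainbowCycle G c (2 * m + 3 + 1) := by
  by_cases h3 : ((2 * m + 3 + 1 : ℕ) : ZMod 3) = 0
  · obtain ⟨ζ, hζ, N1, h1⟩ := case_div (2 * m + 3) (by omega) h3
    obtain ⟨N2, h2⟩ := rough m (ζ := min ζ (1 / 2)) (by positivity) ((min_le_right _ _).trans (by norm_num))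
    refine ⟨N1 + N2, ?_⟩
    intro W _ _ G c d hdN hne hn hdeg
    by_contra hno
    obtain ⟨S, hS, hSd⟩ := exists_sel hdeg
    obtain ⟨Q, hQ1, hQ2, hQ3, hQ4⟩ := h2 W G c S d hS hSd (by omega) (by omega) hne hno
    refine hno (h1 W G c S d hS (by omega) (by omega) Q (fun i => ?_) (fun i => ?_))
    · refine le_trans ?_ (hQ2 i)
      apply mul_le_mul_of_nonneg_right _ (by positivity)
      have := min_le_right ζ (1 / 2)
      linarith
    · refine (hQ4 i).trans ?_
      exact mul_le_mul_of_nonneg_right (min_le_left _ _) (by positivity)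
  · obtain ⟨ζ, hζ, N1, h1⟩ := tdiff (2 * m + 3) (by omega) h3 (τ := 1 / 10 ^ 10) (by norm_num)
    obtain ⟨N2, h2⟩ := rough m (ζ := min ζ (1 / 10 ^ 10)) (by positivity) ((min_le_right _ _).trans (by norm_num))
    refine ⟨N1 + N2 + 1000 * (10 * (2 * m + 3 + 1) + 10), ?_⟩
    intro W _ _ G c d hdN hne hn hdeg
    by_contra hno
    obtain ⟨S, hS, hSd⟩ := exists_sel hdeg
    obtain ⟨Q, hQ1, hQ2, hQ3, hQ4⟩ := h2 W G c S d hS hSd (by omega) (by omega) hne hno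
    have hmin := min_le_right ζ (1 / 10 ^ 10)
    have hsz : ∀ i, (1 - 1 / 100000 : ℝ) * d ≤ (Q i).card := by
      intro i
      refine le_trans ?_ (hQ2 i)
      apply mul_le_mul_of_nonneg_right _ (by positivity)
      have h5 : (1 / 10 ^ 10 : ℝ) ≤ 1 / 100000 := by norm_num
      linarith
    have hhalf : ∀ i, (1 / 2 : ℝ) * d ≤ (Q i).card := by
      intro i
      refine le_trans ?_ (hsz i)
      exact mul_le_mul_of_nonneg_right (by norm_num) (by positivity)
    have h34 : ∀ i, (3 / 4 : ℝ) * d ≤ (Q i).card := by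
      intro i
      refine le_trans ?_ (hsz i)
      exact mul_le_mul_of_nonneg_right (by norm_num) (by positivity)
    have ht := h1 W G c S d hS (by omega) (by omega) hno Q hhalf (fun i => (hQ4 i).trans
      (mul_le_mul_of_nonneg_right (min_le_left _ _) (by positivity)))
    have hmc : ∀ i, ∃ mm : W → ℕ, ∑ y ∈ Q (i + 1), (((Q i).filter fun u => ¬ (y ∈ S u ∧ c s(u, y) = mm y)).card : ℝ)
        ≤ (1 / 10 ^ 9 : ℝ) * (d : ℝ) ^ 2 := by
      intro i
      obtain ⟨mm, hmm⟩ := main_color (c := c) (S := S) (P := Q i) (R := Q (i + 1)) (ζ := 1 / 10 ^ 10)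
        (τ := 1 / 10 ^ 10) (d := d) (by omega) (h34 i) (hQ3 i)
        ((hQ4 i).trans (mul_le_mul_of_nonneg_right hmin (by positivity))) (ht i)
      refine ⟨mm, hmm.trans (mul_le_mul_of_nonneg_right (by norm_num) (by positivity))⟩
    choose mi hmi using hmc
    obtain ⟨V, mm, hcore⟩ := clean hS (by omega) hQ1 hsz hQ3 (by omega) mi hmi
    haveI := hne
    have hL : 1000 * (10 * (2 * m + 3 + 1) + 10) ≤ d := le_trans (Nat.le_add_left _ _) hdN
    have hl4 : 4 ≤ 2 * m + 3 + 1 := by omega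
    have hev : Even (2 * m + 3 + 1) := ⟨m + 2, by omega⟩
    exact hno (hcore.exact hL hl4 hev h3 hdeg hn)
end Rb

theorem stmt18 (ℓ : ℕ) (heven : Even ℓ) (hl : 4 ≤ ℓ) :
    ∃ N₀ : ℕ, ∀ (W : Type) (_ : Fintype W) (G : SimpleGraph W) (c : Sym2 W → ℕ),
      N₀ ≤ Fintype.card W →
      ((Fintype.card W : ℚ) + 5) / 3 ≤ (minColorDeg G c : ℚ) →
      HasRainbowCycle G c ℓ := by
  obtain ⟨r, hr⟩ := heven
  obtain ⟨m, rfl⟩ : ∃ m, ℓ = 2 * m + 3 + 1 := ⟨r - 2, by omega⟩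
  obtain ⟨N, h⟩ := Rb.main m
  refine ⟨3 * N + 1, ?_⟩
  intro W _ G c hN hdeg
  classical
  have h1 : Fintype.card W + 5 ≤ 3 * minColorDeg G c := by
    have : ((Fintype.card W : ℚ) + 5) ≤ 3 * (minColorDeg G c : ℚ) := by linarith
    exact_mod_cast this
  refine h W G c (minColorDeg G c) (by omega) (Fintype.card_pos_iff.1 (by omega)) h1 ?_
  intro w
  exact ciInf_le (OrderBot.bddBelow _) w
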